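/- arXiv:2408.00745 — 2 statements merged into one kernel-verified Lean document; each statement's English description precedes it below -/
import Mathlib

section
/- For every integer n ≥ 1, the q-Eulerian polynomial has the γ-expansion A_n(q,t) = Σ_{k=0}^{⌊(n−1)/2⌋} ξ_{n,k}(q) · t^{k} (1+t)^{n−1−2k}, where ξ_{n,k}(q) = Σ q^{inv(σ)}, the sum running over all permutations σ ∈ S_n whose descent set DES(σ) is a subset of {2,…,n−1} containing no two consecutive integers and has exactly k elements (i.e., σ has k descents, no double descents, and no first descent). -/
open Polynomial Finset

/-- `S` contains no two consecutive integers. -/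
def NoTwoConsec (S : Finset ℕ) : Prop := ∀ i ∈ S, i + 1 ∉ S

instance (S : Finset ℕ) : Decidable (NoTwoConsec S) :=
  inferInstanceAs (Decidable (∀ i ∈ S, i + 1 ∉ S))

/-- `σ(i)` in one-line notation, as a value in `{1, …, n}` for `i ∈ {1, …, n}`
(and `0` for out-of-range `i`). -/
def pval {n : ℕ} (σ : Equiv.Perm (Fin n)) (i : ℕ) : ℕ :=
  if h : 1 ≤ i ∧ i ≤ n then (σ ⟨i - 1, by omega⟩ : ℕ) + 1 else 0

/-- The descent set `DES(σ) = {i ∈ {1,…,n-1} : σ(i) > σ(i+1)}`. -/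
def pDES {n : ℕ} (σ : Equiv.Perm (Fin n)) : Finset ℕ :=
  (Finset.Icc 1 (n - 1)).filter fun i => pval σ (i + 1) < pval σ i

/-- The major index `maj(σ) = Σ_{i ∈ DES(σ)} i`. -/
def pmaj {n : ℕ} (σ : Equiv.Perm (Fin n)) : ℕ := ∑ i ∈ pDES σ, i

/-- The excedance number `exc(σ) = #{i : σ(i) > i}`. -/
def pexc {n : ℕ} (σ : Equiv.Perm (Fin n)) : ℕ :=
  ((Finset.Icc 1 n).filter fun i => i < pval σ i).card

/-- The inversion number `inv(σ) = #{(i,j) : 1 ≤ i < j ≤ n, σ(i) > σ(j)}`. -/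
def pinv {n : ℕ} (σ : Equiv.Perm (Fin n)) : ℕ :=
  (((Finset.Icc 1 n) ×ˢ (Finset.Icc 1 n)).filter
    fun p => p.1 < p.2 ∧ pval σ p.2 < pval σ p.1).card

/-- The Shareshian–Wachs `q`-Eulerian polynomial
`A_n(q,t) = Σ_{σ ∈ S_n} q^{maj(σ)-exc(σ)} t^{exc(σ)}`, as an element of
`ℤ[q][t]` (`q` is the inner variable, `t` the outer one). -/
noncomputable def Apoly (n : ℕ) : Polynomial (Polynomial ℤ) :=
  ∑ σ : Equiv.Perm (Fin n),
    Polynomial.C (Polynomial.X ^ (pmaj σ - pexc σ)) * Polynomial.X ^ pexc σ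

open scoped ENNReal

/-!
Write `E n = ∑ q^maj t^exc` and `T = t q`. Sorting a word over `ℕ` into a permutation, and
summing over the words with a given permutation as over `P`-partitions, turns `∑ E n zⁿ / (q; q)_n`
into the generating function of words by length, sum of letters and excedances. For a finite
alphabet that generating function is a MacMahon sum: a word is the concatenation of the blocks that
stand under the equal letters of its sorted rearrangement. Its matrix, up to a rank-one term, keeps
its shape when variables are eliminated one at a time, which evaluates the sum. With `x_i = z q^i`
and the alphabet growing to `ℕ` the result is `(1 - T) e(z) / (e(T z) - T e(z))`, where `e` is the
`q`-exponential. Comparing coefficients,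
`E (n + 1) = 1 + ∑ [n + 1 choose j + 1] T (1 + T + ⋯ + T^(j - 1)) E (n - j)`, the sum over `j ≤ n`.

The `γ`-sum satisfies the same recurrence with the same initial value. To remove the first value `p`
of a permutation, which costs `q^p`, one needs a family of weights closed under this operation; it
is obtained by admitting a descent at `1` and interpolating with a parameter `s`. Iterating, the
sums over first values are summed by the `q`-analogue of the hockey-stick identity.
-/

section Series

lemma tsum_pi_prod_eq_prod_tsum {r : ℕ} {β : Fin r → Type*} (f : ∀ b, β b → ℝ≥0∞) :
    ∑' k : ∀ b, β b, ∏ b, f b (k b) = ∏ b, ∑' k, f b k := by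
  induction r with
  | zero => simp
  | succ r ih =>
    simp_rw [← (Fin.consEquiv β).tsum_eq, ENNReal.tsum_prod', Fin.prod_univ_succ, ← ih,
      ← ENNReal.tsum_mul_right, ← ENNReal.tsum_mul_left]
    simp [Fin.consEquiv]

lemma tsum_choose_mul_pow (a : ℝ≥0∞) (k : ℕ) :
    ∑' n : ℕ, ((n + k).choose k : ℝ≥0∞) * a ^ n = (1 - a)⁻¹ ^ (k + 1) := by
  induction k with
  | zero => simp [ENNReal.tsum_geometric]
  | succ k ih =>
    have hockey (n : ℕ) : ((n + (k + 1)).choose (k + 1) : ℝ≥0∞) * a ^ n =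
        ∑ p ∈ antidiagonal n, ((p.1 + k).choose k : ℝ≥0∞) * a ^ p.1 * a ^ p.2 := by
      rw [Finset.Nat.sum_antidiagonal_eq_sum_range_succ_mk, ← add_assoc,
        ← Nat.sum_range_add_choose, Nat.cast_sum, Finset.sum_mul]
      refine Finset.sum_congr rfl fun i hi => ?_
      rw [mul_assoc, ← pow_add, Nat.add_sub_of_le (Finset.mem_range_succ_iff.1 hi)]
    rw [pow_succ, ← ih, ← ENNReal.tsum_geometric, ← ENNReal.tsum_mul_right]
    simp_rw [← ENNReal.tsum_mul_left, hockey, ← Finset.sum_coe_sort (antidiagonal _)]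
    rw [← ENNReal.tsum_prod (f := fun i j => ((i + k).choose k : ℝ≥0∞) * a ^ i * a ^ j),
      ← (Finset.HasAntidiagonal.sigmaAntidiagonalEquivProd (A := ℕ)).tsum_eq, ENNReal.tsum_sigma']
    simp [tsum_fintype]

end Series

section MacMahon

lemma coeff_linear_pow {S : Type*} [CommSemiring S] (a M : S) (n k : ℕ) :
    ((C a * X + C M) ^ n).coeff k = a ^ k * M ^ (n - k) * n.choose k := by
  have hterm (m : ℕ) : (C a * X) ^ m * C M ^ (n - m) * (n.choose m : S[X]) =
      C (a ^ m * M ^ (n - m) * n.choose m) * X ^ m := by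
    simp only [C_mul, C_pow, map_natCast]
    ring
  rw [add_pow, finsetSum_coeff]
  simp_rw [hterm, coeff_C_mul_X_pow]
  rw [Finset.sum_ite_eq, ite_eq_left_iff, Finset.mem_range, not_lt]
  intro hk
  rw [Nat.choose_eq_zero_of_lt hk, Nat.cast_zero, mul_zero]

lemma tsum_coeff_mul_linear_pow {S : Type*} [CommSemiring S] [Algebra ℝ≥0∞ S]
    (φ : S →ₗ[ℝ≥0∞] ℝ≥0∞) (a : ℝ≥0∞) (M : S) (F : S[X]) :
    ∑' d : ℕ, φ ((F * (C (algebraMap _ S a) * X + C M) ^ d).coeff d) =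
      (1 - a)⁻¹ * φ (F.eval ((1 - a)⁻¹ • M)) := by
  induction F using Polynomial.induction_on' with
  | add p q hp hq =>
    simp only [add_mul, coeff_add, map_add, eval_add, mul_add, ENNReal.tsum_add, hp, hq]
  | monomial k s =>
    rw [← C_mul_X_pow_eq_monomial, ← ENNReal.summable.sum_add_tsum_nat_add' (k := k),
      Finset.sum_eq_zero, zero_add]
    · have hcoeff (n : ℕ) :
          φ ((C s * X ^ k * (C (algebraMap _ S a) * X + C M) ^ (n + k)).coeff (n + k)) =
            ((n + k).choose k : ℝ≥0∞) * a ^ n * φ (s * M ^ k) := by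
        rw [mul_right_comm, coeff_mul_X_pow, coeff_C_mul, coeff_linear_pow, Nat.add_sub_cancel_left,
          Nat.choose_symm_add, ← smul_eq_mul (_ * _) (φ _), ← map_smul, Algebra.smul_def]
        congr 1
        simp only [map_mul, map_pow, map_natCast]
        ring
      simp_rw [hcoeff]
      rw [ENNReal.tsum_mul_right, tsum_choose_mul_pow, eval_C_mul, eval_X_pow, _root_.smul_pow,
        mul_smul_comm, map_smul, smul_eq_mul]
      ring
    · intro d hd
      rw [mul_right_comm, coeff_mul_X_pow', if_neg (Finset.mem_range.1 hd).not_ge, map_zero]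

/-- The MacMahon sum `∑_d [X^d] ∏_i (∑_j A_{ij} X_j)^{d_i}` of a square matrix `A`, which the
MacMahon master theorem identifies with `1 / det (1 - A)`. -/
noncomputable def macMahonSum {r : ℕ} (A : Fin r → Fin r → ℝ≥0∞) : ℝ≥0∞ :=
  ∑' d : Fin r → ℕ, MvPolynomial.coeff (Finsupp.equivFunOnFinite.symm d)
    (∏ i, (∑ j, MvPolynomial.C (A i j) * MvPolynomial.X j) ^ d i)

lemma macMahonSum_fin_zero (A : Fin 0 → Fin 0 → ℝ≥0∞) : macMahonSum A = 1 := by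
  have h : Finsupp.equivFunOnFinite.symm (default : Fin 0 → ℕ) = 0 := Subsingleton.elim _ _
  rw [macMahonSum, tsum_eq_single default fun b hb => absurd (Subsingleton.elim _ _) hb, h]
  simp

lemma coeff_cons_prod_linear_pow {r : ℕ} (A : Fin (r + 1) → Fin (r + 1) → ℝ≥0∞) (d₀ : ℕ)
    (d : Fin r → ℕ) :
    MvPolynomial.coeff (Finsupp.equivFunOnFinite.symm (Fin.cons d₀ d : Fin (r + 1) → ℕ))
        (∏ i, (∑ j, MvPolynomial.C (A i j) * MvPolynomial.X j) ^
          (Fin.cons d₀ d : Fin (r + 1) → ℕ) i) =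
      MvPolynomial.coeff (Finsupp.equivFunOnFinite.symm d)
        (((∏ i : Fin r, (C (MvPolynomial.C (A i.succ 0)) * X +
            C (∑ j : Fin r, MvPolynomial.C (A i.succ j.succ) * MvPolynomial.X j)) ^ d i) *
          (C (MvPolynomial.C (A 0 0)) * X +
            C (∑ j : Fin r, MvPolynomial.C (A 0 j.succ) * MvPolynomial.X j)) ^ d₀).coeff d₀) := by
  have hcons : Finsupp.equivFunOnFinite.symm (Fin.cons d₀ d : Fin (r + 1) → ℕ) =
      (Finsupp.equivFunOnFinite.symm d).cons d₀ := by
    ext i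
    refine Fin.cases ?_ (fun j => ?_) i <;> simp
  have hC (a : ℝ≥0∞) : MvPolynomial.finSuccEquiv ℝ≥0∞ r (MvPolynomial.C a) =
      C (MvPolynomial.C a) := by
    simp [MvPolynomial.finSuccEquiv_apply]
  rw [hcons, ← MvPolynomial.finSuccEquiv_coeff_coeff, map_prod, Fin.prod_univ_succ, mul_comm]
  simp [Fin.sum_univ_succ, MvPolynomial.finSuccEquiv_X_zero, MvPolynomial.finSuccEquiv_X_succ, hC]

/-- Summing over the exponent `d 0` substitutes for `X 0` the solution of
`X 0 = A 0 0 * X 0 + ∑ j, A 0 j.succ * X j.succ`. -/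
lemma macMahonSum_eq_mul_macMahonSum_schur {r : ℕ} (A : Fin (r + 1) → Fin (r + 1) → ℝ≥0∞) :
    macMahonSum A = (1 - A 0 0)⁻¹ * macMahonSum fun i j : Fin r =>
      A i.succ j.succ + A i.succ 0 * A 0 j.succ * (1 - A 0 0)⁻¹ := by
  unfold macMahonSum
  rw [← (Fin.consEquiv fun _ : Fin (r + 1) => ℕ).tsum_eq, ENNReal.tsum_prod', ENNReal.tsum_comm,
    ← ENNReal.tsum_mul_left]
  refine tsum_congr fun d => ?_
  refine (tsum_congr fun d₀ => coeff_cons_prod_linear_pow A d₀ d).trans ?_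
  refine (tsum_coeff_mul_linear_pow (MvPolynomial.lcoeff ℝ≥0∞ _) _ _ _).trans ?_
  simp only [MvPolynomial.lcoeff_apply, eval_prod, eval_pow, eval_add, eval_mul, eval_C, eval_X]
  congr! 4 with i
  simp only [map_add, map_mul, add_mul, Finset.sum_add_distrib, Finset.mul_sum,
    MvPolynomial.smul_eq_C_mul]
  rw [add_comm]
  congr! 2 with j
  ring

end MacMahon

section ClosedForm

/-- The series `S` with `∑_w x_w t ^ exc w = 1 / (1 - S)`, summed over all words `w` in the ordered
alphabet `Fin r`, the letter `b` having weight `x b`. -/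
noncomputable def excSum (t : ℝ) : ∀ {r : ℕ}, (Fin r → ℝ) → ℝ
  | 0, _ => 0
  | _ + 1, x => x 0 + (1 - x 0) / (1 - t * x 0) * excSum t fun i => x i.succ

lemma excSum_succ (t : ℝ) {r : ℕ} (x : Fin (r + 1) → ℝ) :
    excSum t x = x 0 + (1 - x 0) / (1 - t * x 0) * excSum t fun i => x i.succ := rfl

/-- The matrix whose MacMahon sum counts words by excedances, once the letters lying in their own
block have been summed out. -/
noncomputable def excMatrix {r : ℕ} (t : ℝ≥0∞) (x : Fin r → ℝ≥0∞) (i j : Fin r) : ℝ≥0∞ :=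
  if i < j then x j * (1 - x j)⁻¹ else if i = j then 0 else t * x j * (1 - t * x j)⁻¹

variable {t : ℝ} {r : ℕ}

lemma excSum_nonneg (ht0 : 0 ≤ t) (ht1 : t < 1) {x : Fin r → ℝ} (hx0 : ∀ i, 0 ≤ x i)
    (hx1 : ∀ i, x i < 1) : 0 ≤ excSum t x := by
  induction r with
  | zero => exact le_rfl
  | succ r ih =>
    have htx : t * x 0 < 1 := mul_lt_one_of_nonneg_of_lt_one_left ht0 ht1 (hx1 0).le
    exact add_nonneg (hx0 0) (mul_nonneg
      (div_nonneg (sub_nonneg.2 (hx1 0).le) (sub_nonneg.2 htx.le))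
      (ih (fun i => hx0 i.succ) fun i => hx1 i.succ))

lemma ofReal_mul_one_sub_inv {y : ℝ} (hy0 : 0 ≤ y) (hy1 : y < 1) :
    ENNReal.ofReal y * (1 - ENNReal.ofReal y)⁻¹ = ENNReal.ofReal (y / (1 - y)) := by
  rw [ENNReal.ofReal_div_of_pos (sub_pos.2 hy1), ENNReal.ofReal_sub _ hy0, ENNReal.ofReal_one,
    div_eq_mul_inv]

lemma excMatrix_succ_succ (t : ℝ≥0∞) (x : Fin (r + 1) → ℝ≥0∞) (i j : Fin r) :
    excMatrix t x i.succ j.succ = excMatrix t (fun b => x b.succ) i j := by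
  simp [excMatrix]

/-- The excedance matrix plus the rank-one matrix with entries `k * x j / (1 - x j)`, a shape that
is preserved by the elimination of the first variable. -/
noncomputable def perturbedExcMatrix (t k : ℝ) (x : Fin r → ℝ) (i j : Fin r) : ℝ≥0∞ :=
  excMatrix (ENNReal.ofReal t) (fun b => ENNReal.ofReal (x b)) i j +
    ENNReal.ofReal (k * (x j / (1 - x j)))

/-- The coefficient of the rank-one part after eliminating a first letter of weight `y`. -/
noncomputable def eliminatedCoeff (t k y : ℝ) : ℝ :=
  k + (t * y / (1 - t * y) + k * (y / (1 - y))) * (1 + k) / (1 - k * (y / (1 - y)))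

lemma eliminatedCoeff_nonneg {k y : ℝ} (ht : 0 ≤ t) (hk : 0 ≤ k) (hy : 0 ≤ y) (hy1 : 0 < 1 - y)
    (hty : 0 < 1 - t * y) (hpivot : 0 < 1 - k * (y / (1 - y))) : 0 ≤ eliminatedCoeff t k y := by
  unfold eliminatedCoeff
  positivity

lemma one_sub_mul_eq_mul_one_sub_eliminatedCoeff {k y : ℝ} (hy1 : 1 - y ≠ 0) (hty : 1 - t * y ≠ 0)
    (hpivot : 1 - k * (y / (1 - y)) ≠ 0) (S : ℝ) :
    1 - (1 + k) * (y + (1 - y) / (1 - t * y) * S) =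
      (1 - y) * ((1 - k * (y / (1 - y))) * (1 - (1 + eliminatedCoeff t k y) * S)) := by
  have hpivot' : 1 - k * (y / (1 - y)) = (1 - y - k * y) / (1 - y) := by field_simp
  rw [hpivot'] at hpivot
  have hky : 1 - y - k * y ≠ 0 := (div_ne_zero_iff.1 hpivot).1
  have hcoeff : 1 + eliminatedCoeff t k y =
      (1 + k) * (1 - y) / ((1 - t * y) * (1 - y - k * y)) := by
    rw [eliminatedCoeff, hpivot']
    field_simp
    ring
  rw [hcoeff, hpivot']
  field_simp
  ring

lemma perturbedExcMatrix_schur {k : ℝ} (ht : 0 ≤ t) (hk : 0 ≤ k) {x : Fin (r + 1) → ℝ}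
    (hx0 : ∀ i, 0 ≤ x i) (hx1 : ∀ i, x i < 1) (htx : t * x 0 < 1)
    (hpivot : 0 < 1 - k * (x 0 / (1 - x 0))) (i j : Fin r) :
    perturbedExcMatrix t k x i.succ j.succ + perturbedExcMatrix t k x i.succ 0 *
        perturbedExcMatrix t k x 0 j.succ * (1 - perturbedExcMatrix t k x 0 0)⁻¹ =
      perturbedExcMatrix t (eliminatedCoeff t k (x 0)) (fun b => x b.succ) i j := by
  have hx00 := hx0 0
  have hxj0 := hx0 j.succ
  have hx01 : 0 < 1 - x 0 := sub_pos.2 (hx1 0)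
  have hxj1 : 0 < 1 - x j.succ := sub_pos.2 (hx1 j.succ)
  have : 0 < 1 - t * x 0 := sub_pos.2 htx
  have hcol : perturbedExcMatrix t k x i.succ 0 =
      ENNReal.ofReal (t * x 0 / (1 - t * x 0) + k * (x 0 / (1 - x 0))) := by
    rw [ENNReal.ofReal_add (by positivity) (by positivity),
      ← ofReal_mul_one_sub_inv (mul_nonneg ht hx00) htx, ENNReal.ofReal_mul ht]
    simp [perturbedExcMatrix, excMatrix]
  have hrow : perturbedExcMatrix t k x 0 j.succ =
      ENNReal.ofReal ((1 + k) * (x j.succ / (1 - x j.succ))) := by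
    rw [add_mul, one_mul, ENNReal.ofReal_add (by positivity) (by positivity),
      ← ofReal_mul_one_sub_inv hxj0 (hx1 _)]
    simp [perturbedExcMatrix, excMatrix]
  have hcorner : (1 - perturbedExcMatrix t k x 0 0)⁻¹ =
      ENNReal.ofReal (1 - k * (x 0 / (1 - x 0)))⁻¹ := by
    rw [ENNReal.ofReal_inv_of_pos hpivot, ENNReal.ofReal_sub _ (by positivity)]
    simp [perturbedExcMatrix, excMatrix]
  rw [hcol, hrow, hcorner, ← ENNReal.ofReal_mul (by positivity),
    ← ENNReal.ofReal_mul (by positivity), perturbedExcMatrix, perturbedExcMatrix,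
    excMatrix_succ_succ, add_assoc, ← ENNReal.ofReal_add (by positivity) (by positivity),
    eliminatedCoeff]
  congr 2
  ring

lemma prod_mul_macMahonSum_perturbedExcMatrix (ht0 : 0 ≤ t) (ht1 : t < 1) {x : Fin r → ℝ}
    (hx0 : ∀ i, 0 ≤ x i) (hx1 : ∀ i, x i < 1) {k : ℝ} (hk : 0 ≤ k)
    (hS : (1 + k) * excSum t x < 1) :
    (∏ b, (1 - ENNReal.ofReal (x b))⁻¹) * macMahonSum (perturbedExcMatrix t k x) =
      ENNReal.ofReal (1 - (1 + k) * excSum t x)⁻¹ := by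
  induction r generalizing k with
  | zero => simp [macMahonSum_fin_zero, excSum]
  | succ r ih =>
    have hx00 := hx0 0
    have hx : 0 < 1 - x 0 := sub_pos.2 (hx1 0)
    have htx : t * x 0 < 1 := mul_lt_one_of_nonneg_of_lt_one_left ht0 ht1 (hx1 0).le
    have htx' : 0 < 1 - t * x 0 := sub_pos.2 htx
    have hS' := excSum_nonneg ht0 ht1 (fun i : Fin r => hx0 i.succ) fun i => hx1 i.succ
    rw [excSum_succ] at hS
    have hpivot : 0 < 1 - k * (x 0 / (1 - x 0)) := by
      have : 0 ≤ (1 + k) * ((1 - x 0) / (1 - t * x 0) * excSum t fun i : Fin r => x i.succ) := by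
        positivity
      rw [sub_pos, ← mul_div_assoc, div_lt_one hx]
      linarith
    have hfactor := one_sub_mul_eq_mul_one_sub_eliminatedCoeff hx.ne' htx'.ne' hpivot.ne'
      (excSum t fun i : Fin r => x i.succ)
    have hS'1 : 0 < 1 - (1 + eliminatedCoeff t k (x 0)) * excSum t fun i : Fin r => x i.succ :=
      pos_of_mul_pos_right (pos_of_mul_pos_right (hfactor ▸ sub_pos.2 hS) hx.le) hpivot.le
    have hcorner : 1 - perturbedExcMatrix t k x 0 0 =
        ENNReal.ofReal (1 - k * (x 0 / (1 - x 0))) := by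
      rw [ENNReal.ofReal_sub _ (by positivity)]
      simp [perturbedExcMatrix, excMatrix]
    rw [macMahonSum_eq_mul_macMahonSum_schur, Fin.prod_univ_succ, mul_mul_mul_comm]
    simp_rw [perturbedExcMatrix_schur ht0 hk hx0 hx1 htx hpivot]
    rw [ih (fun i => hx0 i.succ) (fun i => hx1 i.succ)
      (eliminatedCoeff_nonneg ht0 hk hx00 hx htx' hpivot) (sub_pos.1 hS'1), hcorner, excSum_succ,
      hfactor, ← ENNReal.ofReal_one, ← ENNReal.ofReal_sub _ hx00, ← ENNReal.ofReal_inv_of_pos hx,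
      ← ENNReal.ofReal_inv_of_pos hpivot, ← ENNReal.ofReal_mul (by positivity),
      ← ENNReal.ofReal_mul (by positivity), mul_inv, mul_inv, mul_assoc]

lemma prod_mul_macMahonSum_excMatrix (ht0 : 0 ≤ t) (ht1 : t < 1) {x : Fin r → ℝ}
    (hx0 : ∀ i, 0 ≤ x i) (hx1 : ∀ i, x i < 1) (hS : excSum t x < 1) :
    (∏ b, (1 - ENNReal.ofReal (x b))⁻¹) *
        macMahonSum (excMatrix (ENNReal.ofReal t) fun b => ENNReal.ofReal (x b)) =
      ENNReal.ofReal (1 - excSum t x)⁻¹ := by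
  have h : perturbedExcMatrix t 0 x =
      excMatrix (ENNReal.ofReal t) fun b => ENNReal.ofReal (x b) := by
    ext i j
    simp [perturbedExcMatrix]
  simpa [h] using prod_mul_macMahonSum_perturbedExcMatrix ht0 ht1 hx0 hx1 le_rfl (by simpa using hS)

end ClosedForm

section ListFamilies

variable {r : ℕ}

lemma tsum_tuples_eq_tsum_lists {β : Type} (G : (Fin r → List β) → ℝ≥0∞) :
    ∑' d : Fin r → ℕ, ∑' s : ∀ b, Fin (d b) → β, G (fun b => List.ofFn (s b)) =
      ∑' l : Fin r → List β, G l := by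
  let unzip : (Σ d : Fin r → ℕ, ∀ b, Fin (d b) → β) ≃ (Fin r → Σ n, Fin n → β) :=
    ⟨fun p b => ⟨p.1 b, p.2 b⟩, fun f => ⟨fun b => (f b).1, fun b => (f b).2⟩,
      fun _ => rfl, fun _ => rfl⟩
  let e := unzip.trans (Equiv.piCongrRight fun _ => List.equivSigmaTuple.symm)
  rw [← ENNReal.tsum_sigma fun (d : Fin r → ℕ) (s : ∀ b, Fin (d b) → β) =>
    G fun b => List.ofFn (s b), ← e.tsum_eq]
  rfl

lemma count_ofFn {α : Type*} [DecidableEq α] {n : ℕ} (s : Fin n → α) (c : α) :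
    (List.ofFn s).count c = #{k | s k = c} := by
  induction n with
  | zero => simp
  | succ n ih =>
    rw [List.ofFn_succ, List.count_cons, ih, Fin.card_filter_univ_succ, add_comm]
    simp only [beq_iff_eq]
    split_ifs <;> simp [add_comm]

/-- Each letter `c` occurs in the whole family as often as the `c`-th list has entries: reading the
lists one after the other gives a word whose sorted rearrangement has these lists' lengths as its
multiplicities. -/
def IsBalancedFamily (l : Fin r → List (Fin r)) : Prop := ∀ c, ∑ a, (l a).count c = (l c).length

instance (l : Fin r → List (Fin r)) : Decidable (IsBalancedFamily l) :=
  inferInstanceAs (Decidable (∀ c, ∑ a, (l a).count c = (l c).length))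

lemma mvPolynomial_prod_monomial {ι τ R : Type*} [CommSemiring R] (s : Finset ι) (e : ι → τ →₀ ℕ)
    (a : ι → R) : ∏ i ∈ s, MvPolynomial.monomial (e i) (a i) =
      MvPolynomial.monomial (∑ i ∈ s, e i) (∏ i ∈ s, a i) := by
  classical
  induction s using Finset.induction_on with
  | empty => simp
  | insert i s hi ih =>
    simp only [Finset.prod_insert hi, Finset.sum_insert hi, ih, MvPolynomial.monomial_mul]

lemma macMahonSum_eq_tsum_isBalancedFamily (A : Fin r → Fin r → ℝ≥0∞) :
    macMahonSum A = ∑' l : Fin r → List (Fin r),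
      if IsBalancedFamily l then ∏ a, ((l a).map (A a)).prod else 0 := by
  rw [macMahonSum, ← tsum_tuples_eq_tsum_lists]
  refine tsum_congr fun d => ?_
  have hexpand : ∏ i, (∑ j, MvPolynomial.C (A i j) * MvPolynomial.X j) ^ d i =
      ∑ s : ∀ b, Fin (d b) → Fin r, MvPolynomial.monomial
        (∑ a, ∑ k, Finsupp.single (s a k) 1) (∏ a, ∏ k, A a (s a k)) := by
    simp_rw [Fintype.sum_pow]
    rw [Finset.prod_univ_sum, Fintype.piFinset_univ]
    simp_rw [MvPolynomial.C_mul_X_eq_monomial, mvPolynomial_prod_monomial]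
  have hbalanced (s : ∀ b, Fin (d b) → Fin r) :
      ∑ a, ∑ k, Finsupp.single (s a k) 1 = Finsupp.equivFunOnFinite.symm d ↔
        IsBalancedFamily fun a => List.ofFn (s a) := by
    simp [Finsupp.ext_iff, IsBalancedFamily, Finsupp.finsetSum_apply, Finsupp.single_apply,
      count_ofFn]
  simp_rw [hexpand, tsum_fintype, MvPolynomial.coeff_sum, MvPolynomial.coeff_monomial, hbalanced,
    List.map_ofFn, List.prod_ofFn, Function.comp]

end ListFamilies

section Insertion

variable {α : Type*} [DecidableEq α]

/-- The weight of a word in which every letter `a ≠ b` has weight `y a`, and a letter `b` preceded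
by exactly `i` letters different from `b` has weight `c i`. -/
noncomputable def insertionWeight (b : α) (y : α → ℝ≥0∞) : (ℕ → ℝ≥0∞) → List α → ℝ≥0∞
  | _, [] => 1
  | c, a :: l => if a = b then c 0 * insertionWeight b y c l
      else y a * insertionWeight b y (fun i => c (i + 1)) l

lemma insertionWeight_replicate_append (b : α) (y : α → ℝ≥0∞) (c : ℕ → ℝ≥0∞) (m : ℕ) (l : List α) :
    insertionWeight b y c (List.replicate m b ++ l) = c 0 ^ m * insertionWeight b y c l := by
  induction m with
  | zero => simp
  | succ m ih => simp [List.replicate_succ, insertionWeight, ih, pow_succ', mul_assoc]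

lemma tsum_insertionWeight_filter_eq_nil (b : α) (y : α → ℝ≥0∞) (c : ℕ → ℝ≥0∞) :
    ∑' l : List α, (if l.filter (· ≠ b) = [] then insertionWeight b y c l else 0) =
      (1 - c 0)⁻¹ := by
  have hinj : Function.Injective fun m => List.replicate m b :=
    Function.LeftInverse.injective (g := List.length) fun m => by simp
  rw [← hinj.tsum_eq, ← ENNReal.tsum_geometric]
  · refine tsum_congr fun m => ?_
    simpa [insertionWeight] using insertionWeight_replicate_append b y c m []
  · intro l hl
    have hnil : l.filter (· ≠ b) = [] := (ite_ne_right_iff.1 hl).1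
    have hl : l = List.replicate l.length b :=
      List.eq_replicate_iff.2 ⟨rfl, by simpa [List.filter_eq_nil_iff] using hnil⟩
    exact ⟨l.length, hl.symm⟩

lemma tsum_insertionWeight_filter_eq_cons {a b : α} (hab : a ≠ b) (y : α → ℝ≥0∞) (c : ℕ → ℝ≥0∞)
    (u : List α) :
    ∑' l : List α, (if l.filter (· ≠ b) = a :: u then insertionWeight b y c l else 0) =
      (1 - c 0)⁻¹ * (y a * ∑' l : List α, if l.filter (· ≠ b) = u then
        insertionWeight b y (fun i => c (i + 1)) l else 0) := by
  have hinj : Function.Injective fun p : ℕ × List α => List.replicate p.1 b ++ a :: p.2 :=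
    Function.LeftInverse.injective
      (g := fun l => ((l.takeWhile (· = b)).length, (l.dropWhile (· = b)).tail)) fun p => by
        simp [hab]
  rw [← hinj.tsum_eq, ← ENNReal.tsum_geometric, ENNReal.tsum_prod', ← ENNReal.tsum_mul_right]
  · refine tsum_congr fun m => ?_
    rw [← ENNReal.tsum_mul_left, ← ENNReal.tsum_mul_left]
    refine tsum_congr fun l => ?_
    simp [insertionWeight_replicate_append, insertionWeight, hab]
  · intro l hl
    obtain ⟨l₁, l₂, rfl, h₁, -, -⟩ := List.filter_eq_cons_iff.1 (ite_ne_right_iff.1 hl).1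
    have hl₁ : l₁ = List.replicate l₁.length b :=
      List.eq_replicate_iff.2 ⟨rfl, by simpa using h₁⟩
    exact ⟨(l₁.length, l₂), congrArg (· ++ a :: l₂) hl₁.symm⟩

lemma tsum_insertionWeight_filter_eq {b : α} {u : List α} (hb : b ∉ u) (y : α → ℝ≥0∞)
    (c : ℕ → ℝ≥0∞) :
    ∑' l : List α, (if l.filter (· ≠ b) = u then insertionWeight b y c l else 0) =
      (∏ i ∈ range (u.length + 1), (1 - c i)⁻¹) * (u.map y).prod := by
  induction u generalizing c with
  | nil => rw [tsum_insertionWeight_filter_eq_nil]; simp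
  | cons a u ih =>
    rw [List.mem_cons, not_or] at hb
    rw [tsum_insertionWeight_filter_eq_cons (Ne.symm hb.1), ih hb.2, List.length_cons,
      Finset.prod_range_succ' _ (u.length + 1), List.map_cons, List.prod_cons]
    ring

lemma insertionWeight_ofFn (b : α) (y : α → ℝ≥0∞) (c : ℕ → ℝ≥0∞) {n : ℕ} (s : Fin n → α) :
    insertionWeight b y c (List.ofFn s) =
      ∏ i, if s i = b then c #{i' | i' < i ∧ s i' ≠ b} else y (s i) := by
  induction n generalizing c with
  | zero => simp [insertionWeight]
  | succ n ih =>
    have hcard (i : Fin n) : #{i' | i' < i.succ ∧ s i' ≠ b} =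
        #{i' : Fin n | i' < i ∧ s i'.succ ≠ b} + if s 0 = b then 0 else 1 := by
      rw [Fin.card_filter_univ_succ]
      split_ifs <;> simp_all
    rw [List.ofFn_succ, insertionWeight, Fin.prod_univ_succ, ih, ih]
    simp_rw [hcard]
    split_ifs <;> simp

end Insertion

section OwnLetters

variable {r : ℕ}

/-- The number of letters `b` in the lists indexed by smaller letters. -/
def countBefore (l : Fin r → List (Fin r)) (b : Fin r) : ℕ := ∑ a with a < b, (l a).count b

/-- The family obtained by deleting the letter `b` from the `b`-th list, for every `b`. -/
def removeOwn (l : Fin r → List (Fin r)) (b : Fin r) : List (Fin r) := (l b).filter (· ≠ b)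

lemma count_removeOwn (l : Fin r → List (Fin r)) (a c : Fin r) :
    (removeOwn l a).count c = if a = c then 0 else (l a).count c := by
  unfold removeOwn
  split_ifs with h
  · subst h
    exact List.count_eq_zero.2 fun hmem => by simpa using List.of_mem_filter hmem
  · exact List.count_filter (by simpa using Ne.symm h)

lemma countBefore_removeOwn (l : Fin r → List (Fin r)) (b : Fin r) :
    countBefore (removeOwn l) b = countBefore l b :=
  Finset.sum_congr rfl fun a ha => by
    rw [count_removeOwn, if_neg (Finset.mem_filter.1 ha).2.ne]

lemma length_removeOwn_add_count (l : Fin r → List (Fin r)) (b : Fin r) :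
    (removeOwn l b).length + (l b).count b = (l b).length := by
  rw [removeOwn, ← List.countP_eq_length_filter, add_comm]
  simpa [List.count] using (List.length_eq_countP_add_countP (· == b) (l := l b)).symm

lemma isBalancedFamily_removeOwn (l : Fin r → List (Fin r)) :
    IsBalancedFamily (removeOwn l) ↔ IsBalancedFamily l := by
  refine forall_congr' fun c => ?_
  have hcount : ∑ a, (removeOwn l a).count c + (l c).count c = ∑ a, (l a).count c := by
    rw [← Finset.sum_erase_add _ _ (Finset.mem_univ c),
      ← Finset.sum_erase_add _ (fun a => (l a).count c) (Finset.mem_univ c), count_removeOwn,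
      if_pos rfl, add_zero]
    congr 1
    exact Finset.sum_congr rfl fun a ha => by
      rw [count_removeOwn, if_neg (Finset.ne_of_mem_erase ha)]
  rw [← hcount, ← length_removeOwn_add_count l c, Nat.add_right_cancel_iff]

lemma IsBalancedFamily.length_eq {l : Fin r → List (Fin r)} (hl : IsBalancedFamily l)
    (hown : ∀ b, b ∉ l b) (b : Fin r) :
    (l b).length = countBefore l b + ∑ a with b < a, (l a).count b := by
  rw [← hl b, countBefore, Finset.sum_filter, Finset.sum_filter, ← Finset.sum_add_distrib]
  refine Finset.sum_congr rfl fun a _ => ?_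
  rcases lt_trichotomy a b with h | rfl | h
  · simp [h, h.asymm]
  · simp [List.count_eq_zero.2 (hown a)]
  · simp [h, h.asymm]

lemma prod_map_eq_prod_pow_count {M : Type*} [CommMonoid M] (l : List (Fin r)) (f : Fin r → M) :
    (l.map f).prod = ∏ c, f c ^ l.count c := by
  refine (Finset.prod_list_map_count l f).trans (Finset.prod_subset (Finset.subset_univ _) ?_)
  intro c _ hc
  rw [List.count_eq_zero.2 (mt List.mem_toFinset.2 hc), pow_zero]

/-- The weight of the `b`-th block of a sorted word, if `p` letters `b` precede it: a letter `a ≠ b`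
in the block is an excedance for `a < b`, and a letter `b` is one when more than `p` letters of the
block other than `b` precede it. -/
noncomputable def blockWeight (t : ℝ≥0∞) (x : Fin r → ℝ≥0∞) (b : Fin r) (p : ℕ) :
    List (Fin r) → ℝ≥0∞ :=
  insertionWeight b (fun a => x a * if a < b then t else 1) fun i => x b * if p < i then t else 1

lemma tsum_blockWeight_filter_eq (t : ℝ≥0∞) (x : Fin r → ℝ≥0∞) {b : Fin r} {u : List (Fin r)}
    (hb : b ∉ u) {p m : ℕ} (hlen : u.length = p + m) :
    ∑' l : List (Fin r), (if l.filter (· ≠ b) = u then blockWeight t x b p l else 0) =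
      (1 - x b)⁻¹ * ((1 - x b)⁻¹ ^ p * (1 - t * x b)⁻¹ ^ m *
        ∏ a, (x a * if a < b then t else 1) ^ u.count a) := by
  have hlow : ∏ i ∈ range (p + 1), (1 - x b * if p < i then t else 1)⁻¹ =
      (1 - x b)⁻¹ ^ (p + 1) := by
    refine (Finset.prod_eq_pow_card fun i hi => ?_).trans (by rw [Finset.card_range])
    rw [if_neg (Nat.lt_succ_iff.1 (Finset.mem_range.1 hi)).not_gt, mul_one]
  have hhigh : ∏ i ∈ range m, (1 - x b * if p < p + 1 + i then t else 1)⁻¹ =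
      (1 - t * x b)⁻¹ ^ m := by
    simp [show ∀ i, p < p + 1 + i by lia, mul_comm]
  unfold blockWeight
  rw [tsum_insertionWeight_filter_eq hb, hlen, add_right_comm, Finset.prod_range_add,
    hlow, hhigh, prod_map_eq_prod_pow_count, pow_succ']
  ring

lemma prod_excMatrix_eq {t : ℝ≥0∞} {x : Fin r → ℝ≥0∞} {l : Fin r → List (Fin r)}
    (hown : ∀ b, b ∉ l b) :
    ∏ a, ((l a).map (excMatrix t x a)).prod =
      ∏ b, (1 - x b)⁻¹ ^ countBefore l b * (1 - t * x b)⁻¹ ^ (∑ a with b < a, (l a).count b) *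
        ∏ a, (x a * if a < b then t else 1) ^ (l b).count a := by
  have hentry (a c : Fin r) : excMatrix t x a c ^ (l a).count c =
      (if a < c then (1 - x c)⁻¹ ^ (l a).count c else 1) *
        (if c < a then (1 - t * x c)⁻¹ ^ (l a).count c else 1) *
        (x c * if c < a then t else 1) ^ (l a).count c := by
    rcases lt_trichotomy a c with h | rfl | h
    · simp [excMatrix, h, h.asymm, mul_pow, mul_comm]
    · simp [List.count_eq_zero.2 (hown a)]
    · simp [excMatrix, h, h.asymm, h.ne', mul_pow, mul_comm]
  simp_rw [prod_map_eq_prod_pow_count, hentry, Finset.prod_mul_distrib, countBefore,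
    ← Finset.prod_pow_eq_pow_sum, Finset.prod_filter]
  rw [Finset.prod_comm (f := fun a c => if a < c then (1 - x c)⁻¹ ^ (l a).count c else 1),
    Finset.prod_comm (f := fun a c => if c < a then (1 - t * x c)⁻¹ ^ (l a).count c else 1)]

lemma prod_tsum_blockWeight_filter_eq (t : ℝ≥0∞) (x : Fin r → ℝ≥0∞) {u : Fin r → List (Fin r)}
    (hu : IsBalancedFamily u) :
    ∏ b, ∑' l : List (Fin r),
        (if l.filter (· ≠ b) = u b then blockWeight t x b (countBefore u b) l else 0) =
      (∏ b, (1 - x b)⁻¹) * ∏ a, ((u a).map (excMatrix t x a)).prod := by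
  by_cases hown : ∀ b, b ∉ u b
  · rw [prod_excMatrix_eq hown, ← Finset.prod_mul_distrib]
    exact Finset.prod_congr rfl fun b _ =>
      tsum_blockWeight_filter_eq t x (hown b) (hu.length_eq hown b)
  · push Not at hown
    obtain ⟨b, hb⟩ := hown
    have hdiag : ((u b).map (excMatrix t x b)).prod = 0 :=
      List.prod_eq_zero (List.mem_map.2 ⟨b, hb, by simp [excMatrix]⟩)
    have hempty (l : List (Fin r)) : l.filter (· ≠ b) ≠ u b := by
      rintro h
      simp [← h] at hb
    rw [Finset.prod_eq_zero (Finset.mem_univ b) (by simp only [if_neg (hempty _), tsum_zero]),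
      Finset.prod_eq_zero (f := fun a => ((u a).map _).prod) (Finset.mem_univ b) hdiag, mul_zero]

lemma tsum_prod_blockWeight_eq_mul_macMahonSum (t : ℝ≥0∞) (x : Fin r → ℝ≥0∞) :
    ∑' l : Fin r → List (Fin r),
        (if IsBalancedFamily l then ∏ b, blockWeight t x b (countBefore l b) (l b) else 0) =
      (∏ b, (1 - x b)⁻¹) * macMahonSum (excMatrix t x) := by
  have hfiber (l : Fin r → List (Fin r)) :
      (if IsBalancedFamily l then ∏ b, blockWeight t x b (countBefore l b) (l b) else 0) =
        ∑' u : Fin r → List (Fin r), if IsBalancedFamily u then ∏ b,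
          (if (l b).filter (· ≠ b) = u b then blockWeight t x b (countBefore u b) (l b) else 0)
          else 0 := by
    rw [tsum_eq_single (removeOwn l)]
    · simp only [isBalancedFamily_removeOwn, countBefore_removeOwn, removeOwn, if_true]
    · intro u hu
      obtain ⟨b, hb⟩ := Function.ne_iff.1 hu
      rw [Finset.prod_eq_zero (Finset.mem_univ b) (if_neg (Ne.symm hb)), ite_self]
  simp_rw [hfiber]
  rw [ENNReal.tsum_comm, macMahonSum_eq_tsum_isBalancedFamily, ← ENNReal.tsum_mul_left]
  refine tsum_congr fun u => ?_
  split_ifs with hu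
  · rw [← prod_tsum_blockWeight_filter_eq t x hu, ← tsum_pi_prod_eq_prod_tsum]
  · simp

end OwnLetters

section Words

lemma pexc_eq_card {n : ℕ} (σ : Equiv.Perm (Fin n)) : pexc σ = #{i | i < σ i} := by
  refine (Finset.card_nbij (fun i : Fin n => (i : ℕ) + 1) ?_ ?_ ?_).symm
  · intro i hi
    have hi' : (i : ℕ) < σ i := by simpa using hi
    simp [pval, hi', Nat.succ_le_iff]
  · intro i _ j _ h
    exact Fin.ext (Nat.succ_injective h)
  · intro k hk
    obtain ⟨hk₁, hk₂⟩ := Finset.mem_filter.1 (Finset.mem_coe.1 hk)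
    obtain ⟨h₁, h₂⟩ := Finset.mem_Icc.1 hk₁
    rw [pval, dif_pos ⟨h₁, h₂⟩] at hk₂
    refine ⟨⟨k - 1, by lia⟩, ?_, Nat.sub_add_cancel h₁⟩
    simp only [Finset.coe_filter, Finset.mem_univ, true_and, Set.mem_ofPred_eq, Fin.lt_def]
    lia

variable {n : ℕ} {β : Type*} [LinearOrder β]

lemma lt_sort_symm_iff (w : Fin n → β) (i j : Fin n) :
    i < (Tuple.sort w).symm j ↔
      w (Tuple.sort w i) < w j ∨ Tuple.sort w i < j ∧ w (Tuple.sort w i) = w j := by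
  have hmono : StrictMono ((Tuple.sort w).trans (Tuple.graphEquiv₁ w)) :=
    Tuple.eq_sort_iff'.1 rfl
  rw [← hmono.lt_iff_lt, Equiv.trans_apply, Equiv.trans_apply, Equiv.apply_symm_apply,
    ← Subtype.coe_lt_coe, Prod.Lex.lt_iff]
  exact or_congr Iff.rfl and_comm

lemma val_sort_symm (w : Fin n → β) (j : Fin n) :
    ((Tuple.sort w).symm j : ℕ) = #{k | w k < w j} + #{k | k < j ∧ w k = w j} := by
  rw [← Fin.card_Iio, ← Finset.card_union_of_disjoint, ← Finset.filter_or]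
  · refine Finset.card_equiv (Tuple.sort w) fun i => ?_
    simp [lt_sort_symm_iff]
  · exact Finset.disjoint_filter.2 fun k _ hk hk' => hk.ne hk'.2

lemma pexc_sort (w : Fin n → β) :
    pexc (Tuple.sort w) = #{j | (Tuple.sort w).symm j < j} := by
  rw [pexc_eq_card]
  exact Finset.card_equiv (Tuple.sort w) fun i => by simp

lemma comp_sort_eq_of_card_le_eq {w v : Fin n → β} (hv : Monotone v)
    (hcard : ∀ c, #{k | w k ≤ c} = #{k | v k ≤ c}) : w ∘ Tuple.sort w = v := by
  funext j
  refine eq_of_forall_ge_iff fun c => ?_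
  rw [← Tuple.lt_card_le_iff_apply_le_of_monotone hv,
    ← Tuple.lt_card_le_iff_apply_le_of_monotone (Tuple.monotone_sort w), ← hcard]
  have hreindex : #{k | (w ∘ Tuple.sort w) k ≤ c} = #{k | w k ≤ c} :=
    Finset.card_equiv (Tuple.sort w) fun i => by simp
  rw [hreindex]

lemma sort_symm_lt_iff {w v : Fin n → β} (hv : Monotone v) (hwv : w ∘ Tuple.sort w = v)
    (j : Fin n) :
    (Tuple.sort w).symm j < j ↔ w j < v j ∨ w j = v j ∧
      #{k | v k < v j ∧ w k = v j} < #{k | k < j ∧ v k = v j ∧ w k ≠ v j} := by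
  have hw : w j = v ((Tuple.sort w).symm j) := by simp [← hwv]
  rcases lt_trichotomy (w j) (v j) with h | h | h
  · simp only [h, true_or, iff_true]
    exact hv.reflect_lt (hw ▸ h)
  · have hlow : #{k | w k < v j} = #{k | v k < v j} := by
      rw [← hwv]
      exact (Finset.card_equiv (Tuple.sort w) fun i => by simp).symm
    have hsplit (k : Fin n) : k < j ↔ v k < v j ∨ k < j ∧ v k = v j :=
      ⟨fun hk => (hv hk.le).lt_or_eq.imp_right (⟨hk, ·⟩),
        fun hk => hk.elim hv.reflect_lt And.left⟩
    have hj : (j : ℕ) = #{k | v k < v j} + (#{k | k < j ∧ v k = v j ∧ w k = v j} +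
        #{k | k < j ∧ v k = v j ∧ w k ≠ v j}) := by
      have hIio : (j : ℕ) = #{k | k < j} := by rw [Finset.filter_gt_eq_Iio, Fin.card_Iio]
      rw [hIio]
      simp only [Finset.card_filter, ← Finset.sum_add_distrib]
      refine Finset.sum_congr rfl fun k _ => ?_
      grind
    have hle : #{k | k < j ∧ w k = v j} = #{k | v k < v j ∧ w k = v j} +
        #{k | k < j ∧ v k = v j ∧ w k = v j} := by
      simp only [Finset.card_filter, ← Finset.sum_add_distrib]
      refine Finset.sum_congr rfl fun k _ => ?_
      grind
    rw [Fin.lt_def, val_sort_symm, h, hlow, hle]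
    simp only [lt_irrefl, true_and, false_or]
    lia
  · simp only [h.asymm, h.ne', false_and, or_false, iff_false, not_lt]
    exact (hv.reflect_lt (hw ▸ h)).le

end Words

section Blocks

variable {r : ℕ} {d : Fin r → ℕ}

lemma finSigmaFinEquiv_lt_of_fst_lt {x y : Σ b, Fin (d b)} (h : x.1 < y.1) :
    finSigmaFinEquiv x < finSigmaFinEquiv y := by
  let D (k : ℕ) : ℕ := if hk : k < r then d ⟨k, hk⟩ else 0
  have hD (b : Fin r) : ∑ i : Fin b, d (Fin.castLE b.2.le i) = ∑ k ∈ range b, D k := by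
    rw [← Fin.sum_univ_eq_sum_range]
    exact Finset.sum_congr rfl fun i _ => by simp [D, i.2.trans b.2, Fin.castLE]
  have hx : D x.1 = d x.1 := by simp [D]
  rw [Fin.lt_def, finSigmaFinEquiv_apply, finSigmaFinEquiv_apply, hD, hD]
  calc ∑ k ∈ range x.1, D k + x.2 < ∑ k ∈ range x.1, D k + D x.1 := by
        rw [hx]; exact Nat.add_lt_add_left x.2.2 _
    _ = ∑ k ∈ range (x.1 + 1), D k := (Finset.sum_range_succ _ _).symm
    _ ≤ ∑ k ∈ range y.1, D k :=
        Finset.sum_le_sum_of_subset (Finset.range_subset_range.2 h)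
    _ ≤ _ := Nat.le_add_right _ _

lemma finSigmaFinEquiv_mk_lt_mk_iff {b : Fin r} {i i' : Fin (d b)} :
    (finSigmaFinEquiv ⟨b, i'⟩ : Fin (∑ a, d a)) < finSigmaFinEquiv ⟨b, i⟩ ↔ i' < i := by
  rw [Fin.lt_def, finSigmaFinEquiv_apply, finSigmaFinEquiv_apply]
  exact Nat.add_lt_add_iff_left

/-- The index of the block containing a given position, for consecutive blocks of lengths `d`. -/
def blockIndex (d : Fin r → ℕ) (k : Fin (∑ a, d a)) : Fin r := (finSigmaFinEquiv.symm k).1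

lemma monotone_blockIndex (d : Fin r → ℕ) : Monotone (blockIndex d) := by
  refine fun k k' hk => not_lt.1 fun h => hk.not_gt ?_
  simpa using finSigmaFinEquiv_lt_of_fst_lt h

/-- Concatenation of words of lengths `d` indexed by `Fin r`. -/
def concatEquiv (d : Fin r → ℕ) (β : Type*) :
    (∀ b, Fin (d b) → β) ≃ (Fin (∑ a, d a) → β) :=
  (Equiv.piCurry fun b (_ : Fin (d b)) => β).symm.trans
    (Equiv.arrowCongr finSigmaFinEquiv (Equiv.refl β))

lemma concatEquiv_finSigmaFinEquiv {β : Type*} (s : ∀ b, Fin (d b) → β) (x : Σ b, Fin (d b)) :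
    concatEquiv d β s (finSigmaFinEquiv x) = s x.1 x.2 :=
  congrArg (fun y : Σ b, Fin (d b) => s y.1 y.2) (finSigmaFinEquiv.symm_apply_apply x)

lemma card_filter_finSigmaFinEquiv (P : Fin (∑ a, d a) → Prop) [DecidablePred P] :
    #{k | P k} = ∑ b, #{i : Fin (d b) | P (finSigmaFinEquiv ⟨b, i⟩)} := by
  simp only [Finset.card_filter, ← finSigmaFinEquiv.sum_comp, Fintype.sum_sigma]

lemma blockIndex_finSigmaFinEquiv (x : Σ b, Fin (d b)) :
    blockIndex d (finSigmaFinEquiv x) = x.1 := by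
  rw [blockIndex, Equiv.symm_apply_apply]

lemma card_blockIndex_eq (c : Fin r) : #{k | blockIndex d k = c} = d c := by
  rw [card_filter_finSigmaFinEquiv, Finset.sum_eq_single c]
  · simp [blockIndex_finSigmaFinEquiv]
  · intro b _ hb
    simp [blockIndex_finSigmaFinEquiv, hb]
  · simp

lemma isBalancedFamily_ofFn_iff (s : ∀ b, Fin (d b) → Fin r) :
    IsBalancedFamily (fun b => List.ofFn (s b)) ↔
      ∀ c, #{k | concatEquiv d (Fin r) s k = c} = d c := by
  simp [IsBalancedFamily, card_filter_finSigmaFinEquiv, concatEquiv_finSigmaFinEquiv, count_ofFn]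

lemma card_le_eq_of_card_eq {ι : Type*} [Fintype ι] {f g : ι → Fin r}
    (h : ∀ c, #{k | f k = c} = #{k | g k = c}) (c : Fin r) : #{k | f k ≤ c} = #{k | g k ≤ c} := by
  have hfiber (f : ι → Fin r) :
      #{k | f k ≤ c} = ∑ a ∈ Finset.Iic c, #{k | f k = a} := by
    rw [Finset.card_eq_sum_card_fiberwise (f := f) (t := Finset.Iic c)
      fun k hk => by simpa using hk]
    refine Finset.sum_congr rfl fun a ha => ?_
    rw [Finset.filter_filter]
    congr 1
    ext k
    simp only [Finset.mem_filter, Finset.mem_univ, true_and, and_iff_right_iff_imp]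
    rintro rfl
    exact Finset.mem_Iic.1 ha
  simp only [hfiber, h]

lemma sort_concatEquiv_symm_lt_iff {s : ∀ b, Fin (d b) → Fin r}
    (hs : IsBalancedFamily fun b => List.ofFn (s b)) (b : Fin r) (i : Fin (d b)) :
    (Tuple.sort (concatEquiv d (Fin r) s)).symm (finSigmaFinEquiv ⟨b, i⟩) <
        finSigmaFinEquiv ⟨b, i⟩ ↔
      s b i < b ∨ s b i = b ∧
        countBefore (fun b => List.ofFn (s b)) b < #{i' | i' < i ∧ s b i' ≠ b} := by
  have hcard (c : Fin r) := ((isBalancedFamily_ofFn_iff s).1 hs c).trans (card_blockIndex_eq c).symm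
  have hsort := comp_sort_eq_of_card_le_eq (monotone_blockIndex d) (card_le_eq_of_card_eq hcard)
  have hbefore : #{k | blockIndex d k < b ∧ concatEquiv d (Fin r) s k = b} =
      countBefore (fun b => List.ofFn (s b)) b := by
    rw [card_filter_finSigmaFinEquiv, countBefore, Finset.sum_filter]
    refine Finset.sum_congr rfl fun a _ => ?_
    simp only [blockIndex_finSigmaFinEquiv, concatEquiv_finSigmaFinEquiv, count_ofFn]
    split_ifs with h <;> simp [h]
  have hown : #{k | k < finSigmaFinEquiv ⟨b, i⟩ ∧ blockIndex d k = b ∧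
      concatEquiv d (Fin r) s k ≠ b} = #{i' | i' < i ∧ s b i' ≠ b} := by
    rw [card_filter_finSigmaFinEquiv, Finset.sum_eq_single b]
    · simp only [blockIndex_finSigmaFinEquiv, concatEquiv_finSigmaFinEquiv,
        finSigmaFinEquiv_mk_lt_mk_iff, true_and]
    · intro a _ hab
      simp [blockIndex_finSigmaFinEquiv, hab]
    · simp
  rw [sort_symm_lt_iff (monotone_blockIndex d) hsort, concatEquiv_finSigmaFinEquiv,
    blockIndex_finSigmaFinEquiv, hbefore, hown]

lemma prod_mul_pow_pexc_sort_concatEquiv (t : ℝ≥0∞) (x : Fin r → ℝ≥0∞)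
    {s : ∀ b, Fin (d b) → Fin r} (hs : IsBalancedFamily fun b => List.ofFn (s b)) :
    (∏ j, x (concatEquiv d (Fin r) s j)) * t ^ pexc (Tuple.sort (concatEquiv d (Fin r) s)) =
      ∏ b, blockWeight t x b (countBefore (fun b => List.ofFn (s b)) b) (List.ofFn (s b)) := by
  rw [pexc_sort, ← Finset.prod_const, Finset.prod_filter, ← Finset.prod_mul_distrib,
    ← finSigmaFinEquiv.prod_comp, Fintype.prod_sigma]
  refine Finset.prod_congr rfl fun b _ => ?_
  rw [blockWeight, insertionWeight_ofFn]
  refine Finset.prod_congr rfl fun i _ => ?_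
  rw [concatEquiv_finSigmaFinEquiv]
  simp only [sort_concatEquiv_symm_lt_iff hs]
  split_ifs <;> grind

lemma tsum_words_pow_pexc_sort_eq_tsum_families (t : ℝ≥0∞) (x : Fin r → ℝ≥0∞) :
    ∑' n, ∑ w : Fin n → Fin r, (∏ j, x (w j)) * t ^ pexc (Tuple.sort w) =
      ∑' l : Fin r → List (Fin r),
        if IsBalancedFamily l then ∏ b, blockWeight t x b (countBefore l b) (l b) else 0 := by
  have hcontent (n : ℕ) : ∑ w : Fin n → Fin r, (∏ j, x (w j)) * t ^ pexc (Tuple.sort w) =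
      ∑' d : Fin r → ℕ, ∑ w : Fin n → Fin r, if ∀ c, #{k | w k = c} = d c then
        (∏ j, x (w j)) * t ^ pexc (Tuple.sort w) else 0 := by
    rw [Summable.tsum_finsetSum fun _ _ => ENNReal.summable]
    refine Finset.sum_congr rfl fun w _ => ?_
    rw [tsum_eq_single fun c => #{k | w k = c}]
    · simp
    · exact fun d hd => if_neg fun h => hd (funext fun c => (h c).symm)
  simp_rw [hcontent]
  rw [ENNReal.tsum_comm, ← tsum_tuples_eq_tsum_lists]
  refine tsum_congr fun d => ?_
  rw [tsum_eq_single (∑ a, d a), tsum_fintype, ← (concatEquiv d (Fin r)).sum_comp]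
  · refine Finset.sum_congr rfl fun s _ => ?_
    simp only [← isBalancedFamily_ofFn_iff]
    split_ifs with hs
    · exact prod_mul_pow_pexc_sort_concatEquiv t x hs
    · rfl
  · intro n hn
    refine Finset.sum_eq_zero fun w _ => if_neg fun h => hn ?_
    rw [← Finset.sum_congr rfl fun a _ => h a, ← Finset.card_eq_sum_card_fiberwise]
    · simp
    · simp

theorem tsum_words_pow_pexc_sort {t : ℝ} (ht0 : 0 ≤ t) (ht1 : t < 1) {x : Fin r → ℝ}
    (hx0 : ∀ b, 0 ≤ x b) (hx1 : ∀ b, x b < 1) (hS : excSum t x < 1) :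
    ∑' n, ∑ w : Fin n → Fin r,
        (∏ j, ENNReal.ofReal (x (w j))) * ENNReal.ofReal t ^ pexc (Tuple.sort w) =
      ENNReal.ofReal (1 - excSum t x)⁻¹ := by
  rw [tsum_words_pow_pexc_sort_eq_tsum_families _ fun b => ENNReal.ofReal (x b),
    tsum_prod_blockWeight_eq_mul_macMahonSum, prod_mul_macMahonSum_excMatrix ht0 ht1 hx0 hx1 hS]

end Blocks

section DescentSet

variable {n : ℕ}

lemma pval_succ (σ : Equiv.Perm (Fin n)) (i : Fin n) : pval σ (i + 1) = σ i + 1 := by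
  simp [pval]

lemma succ_mem_pDES (σ : Equiv.Perm (Fin (n + 1))) (i : Fin n) :
    (i : ℕ) + 1 ∈ pDES σ ↔ σ i.succ < σ i.castSucc := by
  have h₁ := pval_succ σ i.castSucc
  have h₂ := pval_succ σ i.succ
  rw [Fin.val_castSucc] at h₁
  rw [Fin.val_succ] at h₂
  rw [pDES, Finset.mem_filter, Finset.mem_Icc, h₁, h₂, Fin.lt_def]
  lia

lemma pDES_subset_Icc (σ : Equiv.Perm (Fin n)) : pDES σ ⊆ Finset.Icc 1 (n - 1) :=
  Finset.filter_subset _ _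

lemma zero_notMem_pDES (σ : Equiv.Perm (Fin n)) : 0 ∉ pDES σ := fun h => by
  simpa using pDES_subset_Icc σ h

lemma pDES_subset_Icc_two_iff {σ : Equiv.Perm (Fin n)} :
    pDES σ ⊆ Finset.Icc 2 (n - 1) ↔ 1 ∉ pDES σ := by
  refine ⟨fun h h1 => by simpa using h h1, fun h1 k hk => ?_⟩
  have hk' := Finset.mem_Icc.1 (pDES_subset_Icc σ hk)
  have : k ≠ 1 := fun h => h1 (h ▸ hk)
  rw [Finset.mem_Icc]
  lia

lemma apply_le_of_forall_lt_notMem_pDES {σ : Equiv.Perm (Fin n)} {m : ℕ}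
    (hm : ∀ k ∈ pDES σ, k ≤ m) {i : Fin n} (hi : m ≤ i) : σ i ≤ i := by
  cases n with
  | zero => exact i.elim0
  | succ n =>
    induction i using Fin.reverseInduction with
    | last => exact Fin.le_last _
    | cast i ih =>
      rw [Fin.val_castSucc] at hi
      have hnot : (i : ℕ) + 1 ∉ pDES σ := fun h => by have := hm _ h; lia
      have hlt : σ i.castSucc < σ i.succ :=
        lt_of_le_of_ne (not_lt.1 (mt (succ_mem_pDES σ i).2 hnot))
          (σ.injective.ne (Fin.castSucc_lt_succ).ne)
      exact Fin.le_castSucc_iff.2 (hlt.trans_le (ih (by rw [Fin.val_succ]; lia)))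

lemma pexc_le_pmaj (σ : Equiv.Perm (Fin n)) : pexc σ ≤ pmaj σ := by
  have hmax : ∀ k ∈ pDES σ, k ≤ (pDES σ).sup id := fun k hk => Finset.le_sup (f := id) hk
  calc pexc σ = #{i | i < σ i} := pexc_eq_card σ
    _ ≤ #(Finset.range ((pDES σ).sup id)) :=
        Finset.card_le_card_of_injOn (fun i : Fin n => (i : ℕ))
          (fun i hi => Finset.mem_coe.2 (Finset.mem_range.2 (not_le.1 fun h =>
            (Finset.mem_filter.1 hi).2.not_ge (apply_le_of_forall_lt_notMem_pDES hmax h))))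
          Fin.val_injective.injOn
    _ = (pDES σ).sup id := Finset.card_range _
    _ ≤ pmaj σ := Finset.sup_le fun k hk =>
        Finset.single_le_sum (f := fun k => k) (fun _ _ => Nat.zero_le _) hk

end DescentSet

section PPartitions

lemma tsum_pow_ite_le (c : ℝ≥0∞) (a : ℕ) :
    ∑' k : ℕ, (if a ≤ k then c ^ k else 0) = c ^ a * (1 - c)⁻¹ := by
  rw [← ENNReal.summable.sum_add_tsum_nat_add' (k := a), Finset.sum_eq_zero, zero_add,
    ← ENNReal.tsum_geometric, ← ENNReal.tsum_mul_left]
  · exact tsum_congr fun k => by rw [if_pos (Nat.le_add_left a k), pow_add, mul_comm]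
  · exact fun k hk => if_neg (Finset.mem_range.1 hk).not_ge

lemma tsum_pow_sum_of_snoc_add_le (q : ℝ≥0∞) (δ : ℕ → ℕ) (n m : ℕ) :
    ∑' f : Fin n → ℕ, (if ∀ i : Fin n, (Fin.snoc f m : Fin (n + 1) → ℕ) i.succ + δ i ≤ f i then
        q ^ ∑ i, f i else 0) =
      q ^ (n * m) * ∏ j ∈ range n, q ^ ((j + 1) * δ j) * (1 - q ^ (j + 1))⁻¹ := by
  induction n generalizing m with
  | zero => simp
  | succ n ih =>
    have hpeel (k : ℕ) (f : Fin n → ℕ) :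
        (if ∀ i : Fin (n + 1),
            (Fin.snoc (Fin.snoc f k : Fin (n + 1) → ℕ) m : Fin (n + 2) → ℕ) i.succ +
            δ i ≤ (Fin.snoc f k : Fin (n + 1) → ℕ) i
          then q ^ ∑ i, (Fin.snoc f k : Fin (n + 1) → ℕ) i else 0) =
        (if m + δ n ≤ k then q ^ k else 0) *
          if ∀ i : Fin n, (Fin.snoc f k : Fin (n + 1) → ℕ) i.succ + δ i ≤ f i then
            q ^ ∑ i, f i else 0 := by
      simp only [Fin.forall_fin_succ', Fin.snoc_castSucc, Fin.snoc_last, Fin.succ_last,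
        Fin.succ_castSucc, Fin.val_castSucc, Fin.val_last, Fin.sum_univ_castSucc, pow_add]
      split_ifs <;> simp_all [mul_comm]
    have hgeom (k : ℕ) : (if m + δ n ≤ k then q ^ k else 0) * q ^ (n * k) =
        if m + δ n ≤ k then (q ^ (n + 1)) ^ k else 0 := by
      rw [ite_mul, zero_mul, ← pow_add, ← pow_mul]
      ring_nf
    have hsnoc (p : ℕ × (Fin n → ℕ)) :
        Fin.snocEquiv (fun _ => ℕ) p = (Fin.snoc p.2 p.1 : Fin (n + 1) → ℕ) := rfl
    rw [← (Fin.snocEquiv fun _ : Fin (n + 1) => ℕ).tsum_eq, ENNReal.tsum_prod']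
    simp only [hsnoc, hpeel, ENNReal.tsum_mul_left, ih, ← mul_assoc, hgeom,
      ENNReal.tsum_mul_right, tsum_pow_ite_le]
    rw [Finset.prod_range_succ]
    ring

lemma eq_sort_comp_symm_iff {n : ℕ} (σ : Equiv.Perm (Fin n)) (f : Fin n → ℕ) :
    σ = Tuple.sort (fun j => OrderDual.toDual (f (σ.symm j))) ↔
      ∀ i : Fin n, (Fin.snoc f 0 : Fin (n + 1) → ℕ) i.succ +
        (if (i : ℕ) + 1 ∈ pDES σ then 1 else 0) ≤ f i := by
  cases n with
  | zero => exact iff_of_true (Subsingleton.elim _ _) fun i => i.elim0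
  | succ n =>
    have hlast : n + 1 ∉ pDES σ := fun h => by
      simpa using (Finset.mem_Icc.1 (pDES_subset_Icc σ h)).2
    have hlex : StrictMono (σ.trans (Tuple.graphEquiv₁ fun j => OrderDual.toDual (f (σ.symm j)))) ↔
        StrictMono fun i => toLex (OrderDual.toDual (f i), σ i) := by
      simp only [StrictMono, Tuple.graphEquiv₁, ← Subtype.coe_lt_coe, Equiv.trans_apply,
        Equiv.coe_fn_mk, Equiv.symm_apply_apply]
      rfl
    rw [Tuple.eq_sort_iff', hlex, Fin.strictMono_iff_lt_succ, Fin.forall_fin_succ' (n := n)]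
    simp only [Fin.succ_castSucc, Fin.snoc_castSucc, Fin.succ_last, Fin.snoc_last, Fin.val_last,
      if_neg hlast, Fin.val_castSucc, succ_mem_pDES, Prod.Lex.toLex_lt_toLex,
      OrderDual.toDual_lt_toDual, OrderDual.toDual_inj, zero_add, zero_le, and_true]
    refine forall_congr' fun i => ?_
    have hne : σ i.castSucc ≠ σ i.succ := σ.injective.ne Fin.castSucc_lt_succ.ne
    split_ifs <;> grind

lemma sum_range_succ_mul_ite_mem_pDES {n : ℕ} (σ : Equiv.Perm (Fin n)) :
    ∑ j ∈ range n, (j + 1) * (if j + 1 ∈ pDES σ then 1 else 0) = pmaj σ := by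
  simp only [mul_ite, mul_one, mul_zero]
  rw [← Finset.sum_filter, pmaj]
  refine Finset.sum_nbij (· + 1) (fun j hj => (Finset.mem_filter.1 hj).2)
    (add_left_injective 1).injOn (fun k hk => ?_) fun _ _ => rfl
  obtain ⟨h₁, h₂⟩ := Finset.mem_Icc.1 (pDES_subset_Icc σ hk)
  have hk' : k - 1 + 1 = k := by lia
  exact ⟨k - 1, by simpa [hk', Finset.mem_coe.1 hk] using by lia, hk'⟩

lemma tsum_pow_sum_mul_pow_pexc_sort (q t : ℝ≥0∞) (n : ℕ) :
    ∑' w : Fin n → ℕ, q ^ (∑ i, w i) * t ^ pexc (Tuple.sort fun j => OrderDual.toDual (w j)) =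
      (∑ σ : Equiv.Perm (Fin n), t ^ pexc σ * q ^ pmaj σ) *
        ∏ j ∈ range n, (1 - q ^ (j + 1))⁻¹ := by
  have hsort (w : Fin n → ℕ) :
      q ^ (∑ i, w i) * t ^ pexc (Tuple.sort fun j => OrderDual.toDual (w j)) =
        ∑ σ : Equiv.Perm (Fin n), if σ = Tuple.sort (fun j => OrderDual.toDual (w j)) then
          q ^ (∑ i, w i) * t ^ pexc σ else 0 := by
    rw [Finset.sum_ite_eq', if_pos (Finset.mem_univ _)]
  simp_rw [hsort]
  rw [Summable.tsum_finsetSum fun _ _ => ENNReal.summable, Finset.sum_mul]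
  refine Finset.sum_congr rfl fun σ _ => ?_
  rw [← (Equiv.arrowCongr σ (Equiv.refl ℕ)).tsum_eq]
  simp only [Equiv.arrowCongr_apply, Equiv.coe_refl, Function.comp, id, σ.symm.sum_comp,
    eq_sort_comp_symm_iff, mul_comm _ (t ^ pexc σ), ← mul_ite_zero]
  rw [ENNReal.tsum_mul_left, mul_assoc]
  congr 1
  rw [tsum_pow_sum_of_snoc_add_le q (fun j => if j + 1 ∈ pDES σ then 1 else 0), mul_zero, pow_zero,
    one_mul, Finset.prod_mul_distrib, Finset.prod_pow_eq_pow_sum, sum_range_succ_mul_ite_mem_pDES]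

end PPartitions

section PowerSeries

open Filter Topology

lemma tendsto_tsum_mul_pow_zero {a : ℕ → ℝ} {r : ℝ} (hr : 0 < r)
    (ha : Summable fun n => a n * r ^ n) :
    Tendsto (fun z => ∑' n, a n * z ^ n) (𝓝 0) (𝓝 (a 0)) := by
  have h0 : a 0 = ∑' n, a n * (0 : ℝ) ^ n := by
    rw [tsum_eq_single 0 fun n hn => by simp [hn], pow_zero, mul_one]
  rw [h0]
  refine tendsto_tsum_of_dominated_convergence ha.norm
    (fun n => Continuous.tendsto (by fun_prop) 0) ?_
  filter_upwards [Metric.closedBall_mem_nhds (0 : ℝ) hr] with z hz n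
  rw [mem_closedBall_zero_iff] at hz
  rw [norm_mul, norm_mul, norm_pow, norm_pow, Real.norm_of_nonneg hr.le]
  gcongr

lemma eq_zero_of_hasSum_mul_pow_zero {a : ℕ → ℝ} {r : ℝ} (hr : 0 < r)
    (h : ∀ z ∈ Set.Ioo 0 r, HasSum (fun n => a n * z ^ n) 0) (n : ℕ) : a n = 0 := by
  have hconst {a : ℕ → ℝ} (h : ∀ z ∈ Set.Ioo 0 r, HasSum (fun n => a n * z ^ n) 0) : a 0 = 0 := by
    have hlim := (tendsto_tsum_mul_pow_zero (half_pos hr)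
      (h _ ⟨half_pos hr, half_lt_self hr⟩).summable).mono_left (nhdsWithin_le_nhds (s := Set.Ioi 0))
    refine tendsto_nhds_unique hlim (tendsto_const_nhds.congr' ?_)
    filter_upwards [Ioo_mem_nhdsGT hr] with z hz using (h z hz).tsum_eq.symm
  induction n generalizing a with
  | zero => exact hconst h
  | succ _ ih =>
    refine ih (a := fun n => a (n + 1)) fun z hz => ?_
    have hz0 : z ≠ 0 := hz.1.ne'
    have hshift := ((hasSum_nat_add_iff' 1).2 (h z hz)).mul_left z⁻¹
    simp only [Finset.sum_range_one, hconst h, zero_mul, sub_zero, mul_zero] at hshift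
    refine hshift.congr_fun fun n => ?_
    rw [pow_succ]
    field_simp

end PowerSeries

/-- The `q`-Pochhammer symbol `(q; q)_n = (1 - q)(1 - q²) ⋯ (1 - qⁿ)`. -/
def qPochhammer {R : Type*} [CommRing R] (q : R) (n : ℕ) : R :=
  ∏ j ∈ range n, (1 - q ^ (j + 1))

lemma qPochhammer_zero {R : Type*} [CommRing R] (q : R) : qPochhammer q 0 = 1 :=
  Finset.prod_range_zero _

lemma qPochhammer_succ {R : Type*} [CommRing R] (q : R) (n : ℕ) :
    qPochhammer q (n + 1) = qPochhammer q n * (1 - q ^ (n + 1)) :=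
  Finset.prod_range_succ _ _

/-- Euler's `q`-exponential function `∑ zⁿ / (q; q)_n`, the inverse of the infinite product
`∏ (1 - z q^i)`. -/
noncomputable def qExp (q z : ℝ) : ℝ := ∑' n : ℕ, (qPochhammer q n)⁻¹ * z ^ n

section QExponential

open Filter Topology

variable {q z : ℝ}

lemma qPochhammer_pos (hq0 : 0 ≤ q) (hq1 : q < 1) (n : ℕ) : 0 < qPochhammer q n :=
  Finset.prod_pos fun j _ => sub_pos.2 (pow_lt_one₀ hq0 hq1 j.succ_ne_zero)

lemma summable_inv_qPochhammer_mul_pow (hq0 : 0 ≤ q) (hq1 : q < 1) (hz : |z| < 1) :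
    Summable fun n => (qPochhammer q n)⁻¹ * z ^ n := by
  obtain ⟨r, hzr, hr⟩ := exists_between hz
  have hlim : Tendsto (fun n => |z| / (1 - q ^ (n + 1))) atTop (𝓝 |z|) := by
    have hpow := (tendsto_pow_atTop_nhds_zero_of_lt_one hq0 hq1).comp (tendsto_add_atTop_nat 1)
    simpa [Pi.div_def] using (tendsto_const_nhds (x := |z|)).div (hpow.const_sub 1) (by simp)
  refine summable_of_ratio_norm_eventually_le hr ?_
  filter_upwards [hlim.eventually_le_const hzr] with n hn
  have hpos : 0 < 1 - q ^ (n + 1) := sub_pos.2 (pow_lt_one₀ hq0 hq1 n.succ_ne_zero)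
  calc ‖(qPochhammer q (n + 1))⁻¹ * z ^ (n + 1)‖
      = |z| / (1 - q ^ (n + 1)) * ‖(qPochhammer q n)⁻¹ * z ^ n‖ := by
        rw [qPochhammer_succ, norm_mul, norm_mul, norm_inv, norm_inv, norm_mul,
          Real.norm_of_nonneg hpos.le, norm_pow, norm_pow, Real.norm_eq_abs z, pow_succ |z|]
        field_simp
    _ ≤ r * ‖(qPochhammer q n)⁻¹ * z ^ n‖ := by gcongr

lemma qExp_pos (hq0 : 0 ≤ q) (hq1 : q < 1) (hz0 : 0 ≤ z) (hz1 : z < 1) : 0 < qExp q z := by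
  have hnonneg (n : ℕ) : 0 ≤ (qPochhammer q n)⁻¹ * z ^ n :=
    mul_nonneg (inv_nonneg.2 (qPochhammer_pos hq0 hq1 n).le) (pow_nonneg hz0 n)
  refine (summable_inv_qPochhammer_mul_pow hq0 hq1 (abs_lt.2 ⟨by linarith, hz1⟩)).tsum_pos
    hnonneg 0 ?_
  simp [qPochhammer_zero]

lemma one_sub_mul_qExp (hq0 : 0 ≤ q) (hq1 : q < 1) (hz : |z| < 1) :
    (1 - z) * qExp q z = qExp q (z * q) := by
  have hzq : |z * q| < 1 := by
    rw [abs_mul, abs_of_nonneg hq0]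
    exact mul_lt_one_of_nonneg_of_lt_one_left (abs_nonneg z) hz hq1.le
  have hs := summable_inv_qPochhammer_mul_pow hq0 hq1 hz
  have hs' := summable_inv_qPochhammer_mul_pow hq0 hq1 hzq
  suffices h : qExp q z - qExp q (z * q) = z * qExp q z by linarith
  rw [qExp, qExp, ← hs.tsum_sub hs', (hs.sub hs').tsum_eq_zero_add, ← tsum_mul_left]
  simp only [pow_zero, sub_self, zero_add]
  refine tsum_congr fun n => ?_
  have h₁ := (qPochhammer_pos hq0 hq1 n).ne'
  have h₂ : 1 - q ^ (n + 1) ≠ 0 := (sub_pos.2 (pow_lt_one₀ hq0 hq1 n.succ_ne_zero)).ne'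
  rw [qPochhammer_succ]
  field_simp
  ring

lemma prod_one_sub_mul_pow_mul_qExp (hq0 : 0 ≤ q) (hq1 : q < 1) (hz : |z| < 1) (R : ℕ) :
    (∏ i ∈ range R, (1 - z * q ^ i)) * qExp q z = qExp q (z * q ^ R) := by
  induction R with
  | zero => simp
  | succ R ih =>
    have hzR : |z * q ^ R| < 1 := by
      rw [abs_mul, abs_of_nonneg (pow_nonneg hq0 R)]
      exact mul_lt_one_of_nonneg_of_lt_one_left (abs_nonneg z) hz (pow_le_one₀ hq0 hq1.le)
    rw [Finset.prod_range_succ, mul_right_comm, ih, mul_comm, one_sub_mul_qExp hq0 hq1 hzR,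
      pow_succ, mul_assoc]

lemma tendsto_prod_one_sub_mul_pow (hq0 : 0 ≤ q) (hq1 : q < 1) (hz0 : 0 ≤ z) (hz1 : z < 1) :
    Tendsto (fun R => ∏ i ∈ range R, (1 - z * q ^ i)) atTop (𝓝 (qExp q z)⁻¹) := by
  have hz : |z| < 1 := abs_lt.2 ⟨by linarith, hz1⟩
  have hpos := qExp_pos hq0 hq1 hz0 hz1
  have hone : Tendsto (qExp q) (𝓝 0) (𝓝 1) := by
    have hlim := tendsto_tsum_mul_pow_zero one_half_pos
      (summable_inv_qPochhammer_mul_pow hq0 hq1 (abs_lt.2 ⟨by norm_num, one_half_lt_one⟩))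
    rwa [qPochhammer_zero, inv_one] at hlim
  have hzq : Tendsto (fun R => z * q ^ R) atTop (𝓝 0) := by
    simpa using (tendsto_pow_atTop_nhds_zero_of_lt_one hq0 hq1).const_mul z
  simpa [← prod_one_sub_mul_pow_mul_qExp hq0 hq1 hz, hpos.ne'] using
    (hone.comp hzq).mul_const (qExp q z)⁻¹

end QExponential

section AlphabetLimit

open Filter Topology

lemma tendsto_tsum_comp_of_eventually_mem_range {ι : Type*} {κ : ℕ → Type*} {e : ∀ R, κ R → ι}
    (he : ∀ R, Function.Injective (e R)) (hmem : ∀ i, ∀ᶠ R in atTop, i ∈ Set.range (e R))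
    (f : ι → ℝ≥0∞) :
    Tendsto (fun R => ∑' k, f (e R k)) atTop (𝓝 (∑' i, f i)) := by
  have hle (R : ℕ) : ∑' k, f (e R k) ≤ ∑' i, f i :=
    ENNReal.tsum_comp_le_tsum_of_injective (he R) f
  refine tendsto_order.2 ⟨fun a ha => ?_, fun a ha => .of_forall fun R => (hle R).trans_lt ha⟩
  rw [ENNReal.tsum_eq_iSup_sum] at ha
  obtain ⟨s, hs⟩ := lt_iSup_iff.1 ha
  filter_upwards [(eventually_all_finset s).2 fun i _ => hmem i] with R hR
  calc a < ∑ i ∈ s, f i := hs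
    _ = ∑ k ∈ s.preimage (e R) (he R).injOn, f (e R k) :=
        (Finset.sum_preimage (e R) s (he R).injOn f fun i hi hi' => absurd (hR i hi) hi').symm
    _ ≤ ∑' k, f (e R k) := ENNReal.sum_le_tsum _

lemma sort_strictMono_comp {n : ℕ} {α β : Type*} [LinearOrder α] [LinearOrder β] {φ : α → β}
    (hφ : StrictMono φ) (f : Fin n → α) : Tuple.sort (φ ∘ f) = Tuple.sort f := by
  refine (Tuple.eq_sort_iff.2 ⟨?_, fun i j hij h => ?_⟩).symm
  · exact hφ.monotone.comp (Tuple.monotone_sort f)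
  · exact (Tuple.eq_sort_iff.1 rfl).2 i j hij (hφ.injective h)

variable {q t z : ℝ}

lemma excSum_le_sum (ht0 : 0 ≤ t) (ht1 : t < 1) {r : ℕ} {x : Fin r → ℝ} (hx0 : ∀ i, 0 ≤ x i)
    (hx1 : ∀ i, x i < 1) : excSum t x ≤ ∑ i, x i := by
  induction r with
  | zero => simp [excSum]
  | succ r ih =>
    have hnonneg := excSum_nonneg ht0 ht1 (fun i : Fin r => hx0 i.succ) fun i => hx1 i.succ
    have hx : t * x 0 ≤ x 0 := mul_le_of_le_one_left (hx0 0) ht1.le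
    rw [excSum_succ, Fin.sum_univ_succ]
    gcongr
    refine (mul_le_of_le_one_left hnonneg ?_).trans (ih (fun i => hx0 i.succ) fun i => hx1 i.succ)
    exact div_le_one_of_le₀ (by linarith) (by linarith [hx1 0])

lemma one_sub_mul_one_sub_excSum_geometric (h : ∀ i : ℕ, 1 - t * z * q ^ i ≠ 0) (R : ℕ) :
    (1 - t * q) * (1 - excSum t fun b : Fin R => z * q ^ (b.rev : ℕ)) =
      (1 - t * z) *
          ((∏ i ∈ range R, (1 - z * q ^ i)) / ∏ i ∈ range R, (1 - t * z * q ^ i)) -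
        t * q + t * (z * q ^ R) := by
  induction R with
  | zero =>
    simp only [excSum, Finset.prod_range_zero]
    ring
  | succ R ih =>
    have hR : 1 - t * (z * q ^ R) ≠ 0 := by simpa only [mul_assoc] using h R
    simp only [excSum_succ, Fin.rev_succ, Fin.val_castSucc, Fin.rev_zero, Fin.val_last]
    set s := excSum t fun b : Fin R => z * q ^ (b.rev : ℕ)
    rw [Finset.prod_range_succ, Finset.prod_range_succ, mul_div_mul_comm, mul_assoc t z (q ^ R)]
    have hcancel :
        (1 - z * q ^ R) / (1 - t * (z * q ^ R)) * (1 - t * (z * q ^ R)) = 1 - z * q ^ R :=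
      div_mul_cancel₀ _ hR
    linear_combination (1 - z * q ^ R) / (1 - t * (z * q ^ R)) * ih - hcancel

/-- The weight `zⁿ q^(∑ wᵢ) t^(exc w)` of a word `w` of length `n` over `ℕ`, excedances being taken
with respect to the decreasing order of the letters. -/
noncomputable def wordWeight (q t z : ℝ) (w : Σ n, Fin n → ℕ) : ℝ≥0∞ :=
  ENNReal.ofReal z ^ w.1 * (ENNReal.ofReal q ^ (∑ i, w.2 i) *
    ENNReal.ofReal t ^ pexc (Tuple.sort fun i => OrderDual.toDual (w.2 i)))

/-- A word over `{0, …, R - 1}` as a word over `ℕ`. -/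
def wordOfFin (R : ℕ) : (Σ n, Fin n → Fin R) → Σ n, Fin n → ℕ :=
  Sigma.map id fun _ w i => (w i : ℕ)

lemma wordOfFin_injective (R : ℕ) : Function.Injective (wordOfFin R) :=
  Function.injective_id.sigma_map fun _ _ _ h => funext fun i => Fin.ext (congrFun h i)

lemma eventually_mem_range_wordOfFin (w : Σ n, Fin n → ℕ) :
    ∀ᶠ R in atTop, w ∈ Set.range (wordOfFin R) := by
  filter_upwards [eventually_all.2 fun i => eventually_gt_atTop (w.2 i)] with R hR
  exact ⟨⟨w.1, fun i => ⟨w.2 i, hR i⟩⟩, rfl⟩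

lemma excSum_geometric_le (hq0 : 0 ≤ q) (hq1 : q < 1) (ht0 : 0 ≤ t) (ht1 : t < 1) (hz0 : 0 ≤ z)
    (hz1 : z < 1) (R : ℕ) :
    excSum t (fun b : Fin R => z * q ^ (b.rev : ℕ)) ≤ z / (1 - q) :=
  calc excSum t (fun b : Fin R => z * q ^ (b.rev : ℕ))
      ≤ ∑ b : Fin R, z * q ^ (b.rev : ℕ) :=
        excSum_le_sum ht0 ht1 (fun b => mul_nonneg hz0 (pow_nonneg hq0 _)) fun b =>
          mul_lt_one_of_nonneg_of_lt_one_left hz0 hz1 (pow_le_one₀ hq0 hq1.le)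
    _ = z * ∑ i ∈ range R, q ^ i := by
        rw [← Finset.mul_sum, ← Fin.sum_univ_eq_sum_range,
          ← Equiv.sum_comp Fin.revPerm fun b : Fin R => q ^ (b : ℕ)]
        rfl
    _ ≤ z * (1 - q)⁻¹ := by
        rw [← tsum_geometric_of_lt_one hq0 hq1]
        gcongr
        exact (summable_geometric_of_lt_one hq0 hq1).sum_le_tsum _ fun i _ => pow_nonneg hq0 i
    _ = z / (1 - q) := (div_eq_mul_inv _ _).symm

lemma tsum_wordWeight_wordOfFin (hq0 : 0 ≤ q) (hq1 : q < 1) (ht0 : 0 ≤ t) (ht1 : t < 1)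
    (hz0 : 0 ≤ z) (hz1 : z < 1 - q) (R : ℕ) :
    ∑' w, wordWeight q t z (wordOfFin R w) =
      ENNReal.ofReal (1 - excSum t fun b : Fin R => z * q ^ (b.rev : ℕ))⁻¹ := by
  have hz : z < 1 := by linarith
  have hS := (excSum_geometric_le hq0 hq1 ht0 ht1 hz0 hz R).trans_lt
    ((div_lt_one (sub_pos.2 hq1)).2 hz1)
  have hrev : StrictMono fun b : Fin R => OrderDual.toDual (b.rev : ℕ) := fun a b h =>
    Fin.rev_lt_rev.2 h
  rw [← tsum_words_pow_pexc_sort ht0 ht1 (fun b => mul_nonneg hz0 (pow_nonneg hq0 _))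
    (fun b => mul_lt_one_of_nonneg_of_lt_one_left hz0 hz (pow_le_one₀ hq0 hq1.le)) hS,
    ENNReal.tsum_sigma']
  refine tsum_congr fun n => ?_
  rw [tsum_fintype, ← (Equiv.arrowCongr (Equiv.refl (Fin n)) Fin.revPerm).sum_comp]
  refine Finset.sum_congr rfl fun w _ => ?_
  simp only [ENNReal.ofReal_mul hz0, ENNReal.ofReal_pow hq0, Finset.prod_mul_distrib,
    Finset.prod_const, Finset.prod_pow_eq_pow_sum, Finset.card_univ, Fintype.card_fin, mul_assoc,
    ← sort_strictMono_comp hrev w]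
  rfl

lemma tendsto_one_sub_excSum_geometric (hq0 : 0 ≤ q) (hq1 : q < 1) (ht0 : 0 ≤ t) (ht1 : t < 1)
    (hz0 : 0 ≤ z) (hz1 : z < 1) :
    Tendsto (fun R => 1 - excSum t fun b : Fin R => z * q ^ (b.rev : ℕ)) atTop
      (𝓝 ((qExp q (t * q * z) - t * q * qExp q z) / ((1 - t * q) * qExp q z))) := by
  have htz0 : 0 ≤ t * z := mul_nonneg ht0 hz0
  have htz1 : t * z < 1 := mul_lt_one_of_nonneg_of_lt_one_left ht0 ht1 hz1.le
  have htq : 1 - t * q ≠ 0 := (sub_pos.2 (mul_lt_one_of_nonneg_of_lt_one_left ht0 ht1 hq1.le)).ne'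
  have hE := (qExp_pos hq0 hq1 hz0 hz1).ne'
  have hEt := (qExp_pos hq0 hq1 htz0 htz1).ne'
  have hfactor (i : ℕ) : 1 - t * z * q ^ i ≠ 0 :=
    (sub_pos.2 (mul_lt_one_of_nonneg_of_lt_one_left htz0 htz1 (pow_le_one₀ hq0 hq1.le))).ne'
  have hzq : Tendsto (fun R => z * q ^ R) atTop (𝓝 0) := by
    simpa using (tendsto_pow_atTop_nhds_zero_of_lt_one hq0 hq1).const_mul z
  have hlim := ((((tendsto_prod_one_sub_mul_pow hq0 hq1 hz0 hz1).div
    (tendsto_prod_one_sub_mul_pow hq0 hq1 htz0 htz1) (inv_ne_zero hEt)).const_mul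
      (1 - t * z)).sub_const (t * q)).add (hzq.const_mul t) |>.div_const (1 - t * q)
  have hrec := one_sub_mul_qExp hq0 hq1 (abs_lt.2 ⟨by linarith, htz1⟩)
  convert hlim using 1
  · funext R
    rw [eq_div_iff htq, mul_comm, one_sub_mul_one_sub_excSum_geometric hfactor]
    rfl
  · rw [mul_right_comm t q z, ← hrec]
    congr 1
    field_simp
    ring

lemma mul_qExp_lt_qExp_mul (hq0 : 0 ≤ q) (hq1 : q < 1) (ht0 : 0 ≤ t) (ht1 : t < 1) (hz0 : 0 ≤ z)
    (hz1 : z < 1 - q) : t * q * qExp q z < qExp q (t * q * z) := by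
  have hz : z < 1 := by linarith
  have htq : 0 < 1 - t * q := sub_pos.2 (mul_lt_one_of_nonneg_of_lt_one_left ht0 ht1 hq1.le)
  have hlim : 1 - z / (1 - q) ≤ _ :=
    ge_of_tendsto' (tendsto_one_sub_excSum_geometric hq0 hq1 ht0 ht1 hz0 hz) fun R =>
      sub_le_sub_left (excSum_geometric_le hq0 hq1 ht0 ht1 hz0 hz R) 1
  have hpos := (sub_pos.2 ((div_lt_one (sub_pos.2 hq1)).2 hz1)).trans_le hlim
  exact sub_pos.1 ((div_pos_iff_of_pos_right (mul_pos htq (qExp_pos hq0 hq1 hz0 hz))).1 hpos)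

lemma tsum_wordWeight (hq0 : 0 ≤ q) (hq1 : q < 1) (ht0 : 0 ≤ t) (ht1 : t < 1) (hz0 : 0 ≤ z)
    (hz1 : z < 1 - q) :
    ∑' w, wordWeight q t z w = ENNReal.ofReal
      ((1 - t * q) * qExp q z / (qExp q (t * q * z) - t * q * qExp q z)) := by
  have hz : z < 1 := by linarith
  have htq : 0 < 1 - t * q := sub_pos.2 (mul_lt_one_of_nonneg_of_lt_one_left ht0 ht1 hq1.le)
  have hne := (div_pos (sub_pos.2 (mul_qExp_lt_qExp_mul hq0 hq1 ht0 ht1 hz0 hz1))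
    (mul_pos htq (qExp_pos hq0 hq1 hz0 hz))).ne'
  have hwords := tendsto_tsum_comp_of_eventually_mem_range wordOfFin_injective
    eventually_mem_range_wordOfFin (wordWeight q t z)
  have hclosed := ENNReal.tendsto_ofReal
    ((tendsto_one_sub_excSum_geometric hq0 hq1 ht0 ht1 hz0 hz).inv₀ hne)
  rw [inv_div] at hclosed
  refine tendsto_nhds_unique hwords (hclosed.congr fun R => ?_)
  rw [tsum_wordWeight_wordOfFin hq0 hq1 ht0 ht1 hz0 hz1]

end AlphabetLimit

/-- The joint generating polynomial `∑ t^(exc σ) q^(maj σ)` of `S_n`, evaluated at `q` and `t`. -/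
def excMajSum {R : Type*} [CommSemiring R] (q t : R) (n : ℕ) : R :=
  ∑ σ : Equiv.Perm (Fin n), t ^ pexc σ * q ^ pmaj σ

section EulerianGeneratingFunction

variable {q t z : ℝ}

lemma hasSum_of_tsum_ofReal_eq {f : ℕ → ℝ} {c : ℝ} (hf : ∀ n, 0 ≤ f n) (hc : 0 ≤ c)
    (h : ∑' n, ENNReal.ofReal (f n) = ENNReal.ofReal c) : HasSum f c := by
  have hsum := ENNReal.hasSum_toReal (h ▸ ENNReal.ofReal_ne_top)
  rw [← ENNReal.tsum_toReal_eq fun _ => ENNReal.ofReal_ne_top, h, ENNReal.toReal_ofReal hc] at hsum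
  exact hsum.congr_fun fun n => (ENNReal.toReal_ofReal (hf n)).symm

lemma tsum_wordWeight_mk (hq0 : 0 ≤ q) (hq1 : q < 1) (ht0 : 0 ≤ t) (hz0 : 0 ≤ z) (n : ℕ) :
    ∑' w : Fin n → ℕ, wordWeight q t z ⟨n, w⟩ =
      ENNReal.ofReal (excMajSum q t n * (qPochhammer q n)⁻¹ * z ^ n) := by
  have hfactor (j : ℕ) :
      (1 - ENNReal.ofReal q ^ (j + 1))⁻¹ = ENNReal.ofReal (1 - q ^ (j + 1))⁻¹ := by
    rw [ENNReal.ofReal_inv_of_pos (sub_pos.2 (pow_lt_one₀ hq0 hq1 j.succ_ne_zero)),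
      ENNReal.ofReal_sub _ (pow_nonneg hq0 _), ENNReal.ofReal_one, ENNReal.ofReal_pow hq0]
  have hperm : ∑ σ : Equiv.Perm (Fin n), ENNReal.ofReal t ^ pexc σ * ENNReal.ofReal q ^ pmaj σ =
      ENNReal.ofReal (excMajSum q t n) := by
    rw [excMajSum, ENNReal.ofReal_sum_of_nonneg fun σ _ => by positivity]
    simp only [ENNReal.ofReal_mul (pow_nonneg ht0 _), ENNReal.ofReal_pow ht0,
      ENNReal.ofReal_pow hq0]
  have hnonneg : 0 ≤ excMajSum q t n := Finset.sum_nonneg fun σ _ => by positivity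
  simp only [wordWeight]
  rw [ENNReal.tsum_mul_left, tsum_pow_sum_mul_pow_pexc_sort, hperm,
    Finset.prod_congr rfl fun j _ => hfactor j, ← ENNReal.ofReal_prod_of_nonneg fun j _ =>
      inv_nonneg.2 (sub_nonneg.2 (pow_le_one₀ hq0 hq1.le)),
    Finset.prod_inv_distrib, ← qPochhammer, ← ENNReal.ofReal_mul hnonneg, ← ENNReal.ofReal_pow hz0,
    ← ENNReal.ofReal_mul (pow_nonneg hz0 n), mul_comm]

lemma hasSum_excMajSum (hq0 : 0 ≤ q) (hq1 : q < 1) (ht0 : 0 ≤ t) (ht1 : t < 1) (hz0 : 0 ≤ z)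
    (hz1 : z < 1 - q) :
    HasSum (fun n => excMajSum q t n * (qPochhammer q n)⁻¹ * z ^ n)
      ((1 - t * q) * qExp q z / (qExp q (t * q * z) - t * q * qExp q z)) := by
  have htq : t * q ≤ 1 := mul_le_one₀ ht1.le hq0 hq1.le
  refine hasSum_of_tsum_ofReal_eq (fun n => ?_) (div_nonneg (mul_nonneg (sub_nonneg.2 htq)
    (qExp_pos hq0 hq1 hz0 (by linarith)).le)
      (sub_nonneg.2 (mul_qExp_lt_qExp_mul hq0 hq1 ht0 ht1 hz0 hz1).le)) ?_
  · have hsum : 0 ≤ excMajSum q t n := Finset.sum_nonneg fun σ _ => by positivity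
    have hqn := qPochhammer_pos hq0 hq1 n
    positivity
  · rw [← tsum_wordWeight hq0 hq1 ht0 ht1 hz0 hz1, ENNReal.tsum_sigma']
    exact tsum_congr fun n => (tsum_wordWeight_mk hq0 hq1 ht0 hz0 n).symm

lemma hasSum_pow_sub_mul_inv_qPochhammer (hq0 : 0 ≤ q) (hq1 : q < 1) {T : ℝ} (hT0 : 0 ≤ T)
    (hT1 : T ≤ 1) (hz0 : 0 ≤ z) (hz1 : z < 1) :
    HasSum (fun n => (T ^ n - T) * (qPochhammer q n)⁻¹ * z ^ n)
      (qExp q (T * z) - T * qExp q z) := by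
  have hTz0 : 0 ≤ T * z := mul_nonneg hT0 hz0
  have hTz1 : T * z < 1 := (mul_le_of_le_one_left hz0 hT1).trans_lt hz1
  have h₁ := (summable_inv_qPochhammer_mul_pow hq0 hq1 (abs_lt.2 ⟨by linarith, hTz1⟩)).hasSum
  have h₂ := (summable_inv_qPochhammer_mul_pow hq0 hq1 (abs_lt.2 ⟨by linarith, hz1⟩)).hasSum
  refine (h₁.sub (h₂.mul_left T)).congr_fun fun n => ?_
  rw [mul_pow]
  ring

theorem sum_antidiagonal_excMajSum (hq0 : 0 ≤ q) (hq1 : q < 1) (ht0 : 0 ≤ t) (ht1 : t < 1)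
    (n : ℕ) :
    ∑ p ∈ antidiagonal n, excMajSum q t p.1 * (qPochhammer q p.1)⁻¹ *
        (((t * q) ^ p.2 - t * q) * (qPochhammer q p.2)⁻¹) =
      (1 - t * q) * (qPochhammer q n)⁻¹ := by
  have hT0 : 0 ≤ t * q := mul_nonneg ht0 hq0
  have hT1 : t * q ≤ 1 := mul_le_one₀ ht1.le hq0 hq1.le
  refine sub_eq_zero.1 (eq_zero_of_hasSum_mul_pow_zero
    (a := fun n => ∑ p ∈ antidiagonal n, excMajSum q t p.1 * (qPochhammer q p.1)⁻¹ *
      (((t * q) ^ p.2 - t * q) * (qPochhammer q p.2)⁻¹) - (1 - t * q) * (qPochhammer q n)⁻¹)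
    (sub_pos.2 hq1) (fun z hz => ?_) n)
  have hz1 : z < 1 := by linarith [hz.2]
  have hA := hasSum_excMajSum hq0 hq1 ht0 ht1 hz.1.le hz.2
  have hB := hasSum_pow_sub_mul_inv_qPochhammer hq0 hq1 hT0 hT1 hz.1.le hz1
  have hE := (summable_inv_qPochhammer_mul_pow hq0 hq1
    (abs_lt.2 ⟨by linarith [hz.1], hz1⟩)).hasSum.mul_left (1 - t * q)
  have hAB := (summable_norm_sum_mul_antidiagonal_of_summable_norm hA.summable.norm
    hB.summable.norm).of_norm.hasSum
  rw [← tsum_mul_tsum_eq_tsum_sum_antidiagonal_of_summable_norm hA.summable.norm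
    hB.summable.norm, hA.tsum_eq, hB.tsum_eq,
    div_mul_cancel₀ _ (sub_pos.2 (mul_qExp_lt_qExp_mul hq0 hq1 ht0 ht1 hz.1.le hz.2)).ne'] at hAB
  have hsub := hAB.sub hE
  rw [← qExp, sub_self] at hsub
  refine hsub.congr_fun fun n => ?_
  rw [sub_mul, Finset.sum_mul, mul_assoc (1 - t * q)]
  congr 1
  refine Finset.sum_congr rfl fun p hp => ?_
  rw [← mem_antidiagonal.1 hp, pow_add]
  ring

end EulerianGeneratingFunction

section FirstValue

variable {n : ℕ}

/-- The permutation of `Fin (n + 1)` with first value `p` whose remaining values are in the same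
relative order as those of `τ`. -/
def consPerm (p : Fin (n + 1)) (τ : Equiv.Perm (Fin n)) : Equiv.Perm (Fin (n + 1)) :=
  p.cycleRange.symm * Equiv.Perm.decomposeFin.symm (0, τ)

lemma consPerm_zero (p : Fin (n + 1)) (τ : Equiv.Perm (Fin n)) : consPerm p τ 0 = p := by
  simp [consPerm]

lemma consPerm_succ (p : Fin (n + 1)) (τ : Equiv.Perm (Fin n)) (i : Fin n) :
    consPerm p τ i.succ = p.succAbove (τ i) := by
  simp [consPerm]

lemma consPerm_succ_lt_consPerm_zero {p : Fin (n + 1)} {τ : Equiv.Perm (Fin n)} {i : Fin n} :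
    consPerm p τ i.succ < consPerm p τ 0 ↔ (τ i).castSucc < p := by
  rw [consPerm_zero, consPerm_succ, Fin.succAbove_lt_iff_castSucc_lt]

lemma consPerm_succ_lt_consPerm_succ {p : Fin (n + 1)} {τ : Equiv.Perm (Fin n)} {i j : Fin n} :
    consPerm p τ i.succ < consPerm p τ j.succ ↔ τ i < τ j := by
  rw [consPerm_succ, consPerm_succ, (Fin.strictMono_succAbove p).lt_iff_lt]

lemma bijective_consPerm :
    Function.Bijective fun x : Fin (n + 1) × Equiv.Perm (Fin n) => consPerm x.1 x.2 := by
  refine (Fintype.bijective_iff_injective_and_card _).2 ⟨fun ⟨p, τ⟩ ⟨p', τ'⟩ h => ?_, ?_⟩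
  · have hp : p = p' := by simpa only [consPerm_zero] using Equiv.congr_fun h 0
    subst hp
    have hτ : τ = τ' := Equiv.ext fun i => by
      simpa only [consPerm_succ, Fin.succAbove_right_inj] using Equiv.congr_fun h i.succ
    rw [hτ]
  · simp [Fintype.card_perm, Nat.factorial_succ]

lemma sum_perm_fin_succ {M : Type*} [AddCommMonoid M] (f : Equiv.Perm (Fin (n + 1)) → M) :
    ∑ σ, f σ = ∑ p, ∑ τ, f (consPerm p τ) := by
  rw [← bijective_consPerm.sum_comp, Fintype.sum_prod_type]

lemma sum_Icc_one_eq_sum_univ (f : ℕ → ℕ) : ∑ i ∈ Finset.Icc 1 n, f i = ∑ i : Fin n, f (i + 1) := by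
  rw [Fin.sum_univ_eq_sum_range fun i => f (i + 1), Finset.range_eq_Ico, Finset.sum_Ico_add']
  rfl

lemma pinv_eq_sum (σ : Equiv.Perm (Fin n)) :
    pinv σ = ∑ i, ∑ j, if i < j ∧ σ j < σ i then 1 else 0 := by
  rw [pinv, Finset.card_filter, Finset.sum_product, sum_Icc_one_eq_sum_univ]
  simp only [sum_Icc_one_eq_sum_univ, pval_succ, add_lt_add_iff_right, Fin.val_fin_lt]

lemma pinv_consPerm (p : Fin (n + 1)) (τ : Equiv.Perm (Fin n)) :
    pinv (consPerm p τ) = p + pinv τ := by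
  have hfirst : ∑ j : Fin n, (if (τ j).castSucc < p then 1 else 0) = (p : ℕ) := by
    rw [Equiv.sum_comp τ fun k : Fin n => if k.castSucc < p then 1 else 0, ← Finset.card_filter]
    simp only [Fin.lt_def, Fin.val_castSucc, Fin.card_filter_val_lt]
    lia
  simp only [pinv_eq_sum, Fin.sum_univ_succ, consPerm_succ_lt_consPerm_succ,
    consPerm_succ_lt_consPerm_zero, Fin.succ_pos, Fin.succ_lt_succ_iff,
    Fin.not_lt_zero, true_and, false_and, if_false, zero_add, hfirst]

lemma one_mem_pDES_consPerm {p : Fin (n + 2)} {τ : Equiv.Perm (Fin (n + 1))} :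
    1 ∈ pDES (consPerm p τ) ↔ (τ 0).castSucc < p := by
  rw [← consPerm_succ_lt_consPerm_zero]
  exact succ_mem_pDES (consPerm p τ) 0

lemma succ_succ_mem_pDES_consPerm {p : Fin (n + 2)} {τ : Equiv.Perm (Fin (n + 1))} {i : ℕ} :
    i + 2 ∈ pDES (consPerm p τ) ↔ i + 1 ∈ pDES τ := by
  by_cases hi : i < n
  · have h := succ_mem_pDES (consPerm p τ) (Fin.succ ⟨i, hi⟩)
    rw [← Fin.succ_castSucc, consPerm_succ_lt_consPerm_succ] at h
    exact h.trans (succ_mem_pDES τ ⟨i, hi⟩).symm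
  · refine iff_of_false (fun h => ?_) fun h => ?_
    · have := (Finset.mem_Icc.1 (pDES_subset_Icc _ h)).2
      lia
    · have := (Finset.mem_Icc.1 (pDES_subset_Icc _ h)).2
      lia

lemma pDES_consPerm (p : Fin (n + 2)) (τ : Equiv.Perm (Fin (n + 1))) :
    pDES (consPerm p τ) = if (τ 0).castSucc < p then insert 1 ((pDES τ).map (addRightEmbedding 1))
      else (pDES τ).map (addRightEmbedding 1) := by
  ext k
  rcases k with _ | _ | i
  · split_ifs <;> simp [zero_notMem_pDES]
  · rw [zero_add, one_mem_pDES_consPerm]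
    split_ifs with h <;> simp [h, zero_notMem_pDES]
  · rw [succ_succ_mem_pDES_consPerm]
    split_ifs <;> simp

end FirstValue

section SparseSets

lemma two_mul_card_le_of_noTwoConsec {S : Finset ℕ} {a b : ℕ} (hS : NoTwoConsec S)
    (hab : S ⊆ Finset.Icc a b) : 2 * #S ≤ b + 2 - a := by
  have hdisj : Disjoint S (S.map (addRightEmbedding 1)) := by
    rw [Finset.disjoint_left]
    simp only [Finset.mem_map, addRightEmbedding_apply, not_exists, not_and]
    rintro _ hi j hj rfl
    exact hS j hj hi
  have hsub : S ∪ S.map (addRightEmbedding 1) ⊆ Finset.Icc a (b + 1) := by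
    refine Finset.union_subset (hab.trans (Finset.Icc_subset_Icc_right b.le_succ)) ?_
    intro i hi
    obtain ⟨j, hj, rfl⟩ := Finset.mem_map.1 hi
    have := Finset.mem_Icc.1 (hab hj)
    rw [addRightEmbedding_apply, Finset.mem_Icc]
    lia
  have hcard := Finset.card_le_card hsub
  rw [Finset.card_union_of_disjoint hdisj, Finset.card_map, Nat.card_Icc] at hcard
  lia

lemma noTwoConsec_map_succ {S : Finset ℕ} :
    NoTwoConsec (S.map (addRightEmbedding 1)) ↔ NoTwoConsec S := by
  simp [NoTwoConsec]

lemma noTwoConsec_insert_one_map_succ {S : Finset ℕ} :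
    NoTwoConsec (insert 1 (S.map (addRightEmbedding 1))) ↔ NoTwoConsec S ∧ 1 ∉ S := by
  refine ⟨fun h => ⟨fun i hi hi' => ?_, fun h1 => ?_⟩, ?_⟩
  · exact h (i + 1) (by simp [hi]) (by simp [hi'])
  · exact h 1 (by simp) (by simp [h1])
  · rintro ⟨h, h1⟩ (_ | _ | i) hi hi'
    · simp at hi
    · simp [h1] at hi'
    · exact h (i + 1) (by simpa using hi) (by simpa using hi')

variable {R : Type*} [CommSemiring R]

/-- The term `T^k (1 + T)^(n - 2k)` of a `γ`-expansion attached to a set of `k` integers, no two of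
which are consecutive; the other sets have weight `0`. -/
def sparseWeight (T : R) (n : ℕ) (S : Finset ℕ) : R :=
  if NoTwoConsec S then T ^ #S * (1 + T) ^ (n - 2 * #S) else 0

/-- Interpolates between the weights for sets avoiding `1` (at `s = 0`) and for all sets (as `s`
grows); the factors are the `T`-integers `[s] = 1 + T + ⋯ + T^(s - 1)` and `[s + 1]`. -/
def refinedWeight (T : R) (n s : ℕ) (S : Finset ℕ) : R :=
  if 1 ∈ S then (∑ i ∈ range s, T ^ i) * sparseWeight T (n + 1) S
  else (∑ i ∈ range (s + 1), T ^ i) * sparseWeight T n S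

lemma sparseWeight_map_succ (T : R) (n : ℕ) (S : Finset ℕ) :
    sparseWeight T n (S.map (addRightEmbedding 1)) = sparseWeight T n S := by
  simp only [sparseWeight, noTwoConsec_map_succ, Finset.card_map]

lemma sparseWeight_insert_one_map_succ (T : R) (n : ℕ) {S : Finset ℕ} (h0 : 0 ∉ S) :
    sparseWeight T (n + 2) (insert 1 (S.map (addRightEmbedding 1))) =
      if 1 ∈ S then 0 else T * sparseWeight T n S := by
  have h1 : 1 ∉ S.map (addRightEmbedding 1) := by simpa using h0
  simp only [sparseWeight, noTwoConsec_insert_one_map_succ, Finset.card_insert_of_notMem h1,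
    Finset.card_map, mul_add, mul_one, Nat.add_sub_add_right, pow_succ]
  split_ifs <;> grind

lemma sparseWeight_succ (T : R) {n : ℕ} {S : Finset ℕ} (hS : S ⊆ Finset.Icc 2 n) :
    sparseWeight T (n + 1) S = (1 + T) * sparseWeight T n S := by
  by_cases h : NoTwoConsec S
  · have hcard : 2 * #S ≤ n := two_mul_card_le_of_noTwoConsec h hS
    rw [sparseWeight, sparseWeight, if_pos h, if_pos h, Nat.sub_add_comm hcard, pow_succ]
    ring
  · rw [sparseWeight, sparseWeight, if_neg h, if_neg h, mul_zero]

lemma refinedWeight_pDES_consPerm (T : R) {n : ℕ} (s : ℕ) (p : Fin (n + 2))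
    (τ : Equiv.Perm (Fin (n + 1))) :
    refinedWeight T (n + 1) s (pDES (consPerm p τ)) =
      T * (∑ i ∈ range s, T ^ i) * refinedWeight T n 0 (pDES τ) +
        if (τ 0).castSucc < p then 0 else refinedWeight T n (s + 1) (pDES τ) := by
  by_cases hp : (τ 0).castSucc < p
  · rw [refinedWeight, if_pos (one_mem_pDES_consPerm.2 hp), pDES_consPerm, if_pos hp, if_pos hp,
      sparseWeight_insert_one_map_succ T n (zero_notMem_pDES τ), refinedWeight]
    split_ifs
    · simp
    · simp only [zero_add, Finset.range_one, Finset.sum_singleton, pow_zero, one_mul, add_zero]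
      ring
  · rw [refinedWeight, if_neg (mt one_mem_pDES_consPerm.1 hp), pDES_consPerm, if_neg hp, if_neg hp,
      sparseWeight_map_succ, refinedWeight, refinedWeight]
    split_ifs with h1
    · simp
    · rw [sparseWeight_succ T (n := n) (pDES_subset_Icc_two_iff.2 h1), geom_sum_succ (n := s + 1),
        geom_sum_succ (n := s), geom_sum_one]
      ring

end SparseSets

section GammaRecurrence

variable {R : Type*} [CommSemiring R]

/-- The Gaussian binomial coefficient, defined by the `q`-Pascal recurrence. -/
def qBinom (q : R) : ℕ → ℕ → R
  | _, 0 => 1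
  | 0, _ + 1 => 0
  | n + 1, k + 1 => qBinom q n k + q ^ (k + 1) * qBinom q n (k + 1)

lemma qBinom_zero_right (q : R) (n : ℕ) : qBinom q n 0 = 1 := by
  cases n <;> rfl

lemma qBinom_succ_succ (q : R) (n k : ℕ) :
    qBinom q (n + 1) (k + 1) = qBinom q n k + q ^ (k + 1) * qBinom q n (k + 1) := rfl

lemma sum_Ico_pow_mul_qBinom (q : R) {p m : ℕ} (hpm : p ≤ m) (j : ℕ) :
    ∑ z ∈ Finset.Ico p m, q ^ ((j + 1) * z) * qBinom q (m - 1 - z) j =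
      q ^ ((j + 1) * p) * qBinom q (m - p) (j + 1) := by
  induction hpm using Nat.decreasingInduction with
  | self => simp [qBinom]
  | of_succ p hp ih =>
    have hsub : m - p = m - 1 - p + 1 := by lia
    have hsub' : m - (p + 1) = m - 1 - p := by lia
    rw [Finset.sum_eq_sum_Ico_succ_bot hp, ih, hsub, hsub', qBinom_succ_succ]
    ring

/-- The `γ`-side of the theorem: the inversion generating function of the permutations of `Fin n`
whose descent set is sparse and avoids `1`, weighted by `T^k (1 + T)^(n - 1 - 2k)` for `k`
descents. -/
def gammaSum (q T : R) (n : ℕ) : R :=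
  ∑ σ : Equiv.Perm (Fin n), q ^ pinv σ * refinedWeight T (n - 1) 0 (pDES σ)

/-- The contribution to a refined `γ`-sum of the permutations of `Fin (n + 1)` with first value `p`,
without the factor `q ^ p` for the inversions at the first position. -/
def gammaSumOfFirst (q T : R) (n s : ℕ) (p : Fin (n + 1)) : R :=
  ∑ τ : Equiv.Perm (Fin n), q ^ pinv τ * refinedWeight T n s (pDES (consPerm p τ))

lemma gammaSum_succ (q T : R) (n : ℕ) :
    gammaSum q T (n + 1) = ∑ p : Fin (n + 1), q ^ (p : ℕ) * gammaSumOfFirst q T n 0 p := by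
  simp only [gammaSum, gammaSumOfFirst, sum_perm_fin_succ, pinv_consPerm, pow_add, Finset.mul_sum,
    mul_assoc, Nat.add_sub_cancel]

lemma gammaSum_zero (q T : R) : gammaSum q T 0 = 1 := by
  simp [gammaSum, refinedWeight, sparseWeight, pDES, pinv, NoTwoConsec]

lemma gammaSumOfFirst_zero (q T : R) (s : ℕ) (p : Fin 1) :
    gammaSumOfFirst q T 0 s p = 1 + T * ∑ i ∈ range s, T ^ i := by
  simp [gammaSumOfFirst, refinedWeight, sparseWeight, pDES, pinv, NoTwoConsec, geom_sum_succ,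
    add_comm]

lemma gammaSumOfFirst_succ (q T : R) (n s : ℕ) (p : Fin (n + 2)) :
    gammaSumOfFirst q T (n + 1) s p = T * (∑ i ∈ range s, T ^ i) * gammaSum q T (n + 1) +
      ∑ z : Fin (n + 1), if z.castSucc < p then 0 else
        q ^ (z : ℕ) * gammaSumOfFirst q T n (s + 1) z := by
  have hdrop (τ : Equiv.Perm (Fin (n + 1))) :
      q ^ pinv τ * (if (τ 0).castSucc < p then 0 else refinedWeight T n (s + 1) (pDES τ)) =
        if (τ 0).castSucc < p then 0 else q ^ pinv τ * refinedWeight T n (s + 1) (pDES τ) :=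
    by rw [mul_ite, mul_zero]
  simp only [gammaSumOfFirst, gammaSum, refinedWeight_pDES_consPerm, mul_add, hdrop,
    Finset.sum_add_distrib, Nat.add_sub_cancel, mul_left_comm, ← Finset.mul_sum]
  congr 1
  simp only [sum_perm_fin_succ, consPerm_zero, pinv_consPerm, pow_add, mul_assoc, Finset.mul_sum,
    Finset.sum_ite_irrel, Finset.sum_const_zero]

lemma sum_fin_ite_castSucc_lt {n : ℕ} (p : Fin (n + 1)) (f : ℕ → R) :
    ∑ z : Fin n, (if z.castSucc < p then 0 else f z) = ∑ z ∈ Finset.Ico (p : ℕ) n, f z := by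
  simp only [← not_le, ite_not, Fin.le_def, Fin.val_castSucc]
  rw [Fin.sum_univ_eq_sum_range fun z => if p ≤ z then f z else 0, ← Finset.sum_filter]
  refine Finset.sum_congr (Finset.ext fun z => ?_) fun _ _ => rfl
  rw [Finset.mem_filter, Finset.mem_range, Finset.mem_Ico, and_comm]

lemma sum_Ico_pow_mul_sum_qBinom (q : R) (c : ℕ → R) {p n : ℕ} (hp : p ≤ n + 1) :
    ∑ z ∈ Finset.Ico p (n + 1), q ^ z * ((if z = 0 then 1 else 0) +
        ∑ j ∈ range (n + 1), q ^ (j * z) * qBinom q (n - z) j * c j) =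
      (if p = 0 then 1 else 0) +
        ∑ j ∈ range (n + 1), q ^ ((j + 1) * p) * qBinom q (n + 1 - p) (j + 1) * c j := by
  simp only [mul_add, Finset.sum_add_distrib, Finset.mul_sum]
  congr 1
  · simp [Finset.sum_ite_eq']
  · rw [Finset.sum_comm]
    refine Finset.sum_congr rfl fun j _ => ?_
    rw [← sum_Ico_pow_mul_qBinom q hp, Finset.sum_mul]
    refine Finset.sum_congr rfl fun z _ => ?_
    rw [Nat.add_sub_cancel]
    ring

lemma gammaSumOfFirst_eq (q T : R) (n s : ℕ) (p : Fin (n + 1)) :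
    gammaSumOfFirst q T n s p = (if (p : ℕ) = 0 then 1 else 0) +
      ∑ j ∈ range (n + 1), q ^ (j * p) * qBinom q (n - p) j *
        (T * (∑ i ∈ range (s + j), T ^ i) * gammaSum q T (n - j)) := by
  induction n generalizing s with
  | zero =>
    simp [gammaSumOfFirst_zero, gammaSum_zero, qBinom_zero_right]
  | succ n ih =>
    have hsum := sum_Ico_pow_mul_sum_qBinom q
      (fun j => T * (∑ i ∈ range (s + 1 + j), T ^ i) * gammaSum q T (n - j)) p.is_le
    rw [← sum_fin_ite_castSucc_lt] at hsum
    simp only [gammaSumOfFirst_succ, ih, hsum]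
    rw [Finset.sum_range_succ' _ (n + 1), add_left_comm, add_comm (T * _ * _)]
    simp only [zero_mul, pow_zero, qBinom_zero_right, one_mul, add_zero, Nat.sub_zero,
      Nat.add_sub_add_right, add_assoc, add_comm 1]

lemma gammaSum_succ_eq (q T : R) (n : ℕ) :
    gammaSum q T (n + 1) = 1 + ∑ p ∈ antidiagonal n, qBinom q (n + 1) (p.2 + 1) *
      (T * (∑ i ∈ range p.2, T ^ i) * gammaSum q T p.1) := by
  have hsum := sum_Ico_pow_mul_sum_qBinom q
    (fun j => T * (∑ i ∈ range j, T ^ i) * gammaSum q T (n - j)) n.succ.zero_le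
  rw [Nat.Ico_zero_eq_range, ← Fin.sum_univ_eq_sum_range] at hsum
  rw [← Finset.Nat.sum_antidiagonal_swap, Finset.Nat.sum_antidiagonal_eq_sum_range_succ_mk]
  simp only [gammaSum_succ, gammaSumOfFirst_eq, zero_add, hsum, if_true, mul_zero, pow_zero,
    one_mul, Nat.sub_zero, Prod.swap]

end GammaRecurrence

section Comparison

lemma qBinom_eq_zero_of_lt {R : Type*} [CommSemiring R] (q : R) {n k : ℕ} (h : n < k) :
    qBinom q n k = 0 := by
  induction n generalizing k with
  | zero =>
    obtain ⟨k, rfl⟩ := Nat.exists_eq_succ_of_ne_zero h.ne'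
    rfl
  | succ n ih =>
    obtain ⟨k, rfl⟩ := Nat.exists_eq_succ_of_ne_zero (Nat.ne_zero_of_lt h)
    rw [Nat.succ_eq_add_one, qBinom_succ_succ, ih (by lia), ih (by lia), mul_zero, add_zero]

lemma qBinom_self {R : Type*} [CommSemiring R] (q : R) (n : ℕ) : qBinom q n n = 1 := by
  induction n with
  | zero => rfl
  | succ n ih =>
    rw [qBinom_succ_succ, ih, qBinom_eq_zero_of_lt q n.lt_succ_self, mul_zero, add_zero]

lemma qBinom_add_mul {R : Type*} [CommRing R] (q : R) (a b : ℕ) :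
    qBinom q (a + b) b * (qPochhammer q a * qPochhammer q b) = qPochhammer q (a + b) := by
  induction a generalizing b with
  | zero => rw [zero_add, qBinom_self, qPochhammer_zero, one_mul, one_mul]
  | succ a iha =>
    induction b with
    | zero => rw [qBinom_zero_right, qPochhammer_zero, mul_one, one_mul, add_zero]
    | succ b ihb =>
      have ha := iha (b + 1)
      rw [← add_assoc, add_right_comm a b 1, qPochhammer_succ q b] at ha
      rw [qPochhammer_succ q a] at ihb ⊢
      rw [← add_assoc, qBinom_succ_succ, qPochhammer_succ q (a + 1 + b), qPochhammer_succ q b]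
      linear_combination (1 - q ^ (b + 1)) * ihb + q ^ (b + 1) * (1 - q ^ (a + 1)) * ha

lemma excMajSum_succ {q t : ℝ} (hq0 : 0 ≤ q) (hq1 : q < 1) (ht0 : 0 ≤ t) (ht1 : t < 1) (n : ℕ) :
    excMajSum q t (n + 1) = 1 + ∑ p ∈ antidiagonal n, qBinom q (n + 1) (p.2 + 1) *
      (t * q * (∑ i ∈ range p.2, (t * q) ^ i) * excMajSum q t p.1) := by
  have hT : 1 - t * q ≠ 0 := sub_ne_zero.2 (mul_lt_one_of_nonneg_of_lt_one_left ht0 ht1 hq1.le).ne'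
  have hpos (k : ℕ) : qPochhammer q k ≠ 0 := (qPochhammer_pos hq0 hq1 k).ne'
  have hterm : ∀ p ∈ antidiagonal n, qBinom q (n + 1) (p.2 + 1) *
      (t * q * (∑ i ∈ range p.2, (t * q) ^ i) * excMajSum q t p.1) * (1 - t * q) =
      -(qPochhammer q (n + 1) * (excMajSum q t p.1 * (qPochhammer q p.1)⁻¹ *
        (((t * q) ^ (p.2 + 1) - t * q) * (qPochhammer q (p.2 + 1))⁻¹))) := by
    intro p hp
    have hgeom := geom_sum_mul_neg (t * q) p.2
    rw [← mem_antidiagonal.1 hp, add_assoc, ← qBinom_add_mul q p.1 (p.2 + 1)]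
    have h1 := hpos p.1
    have h2 := hpos (p.2 + 1)
    field_simp
    linear_combination qBinom q (p.1 + p.2 + 1) (p.2 + 1) * excMajSum q t p.1 * t * q * hgeom
  have hmain := sum_antidiagonal_excMajSum hq0 hq1 ht0 ht1 (n + 1)
  rw [Finset.Nat.sum_antidiagonal_succ'] at hmain
  refine mul_right_cancel₀ hT ?_
  rw [add_mul, Finset.sum_mul, Finset.sum_congr rfl hterm, Finset.sum_neg_distrib, ← Finset.mul_sum,
    eq_sub_of_add_eq' hmain, qPochhammer_zero]
  have h1 := hpos (n + 1)
  field_simp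
  ring

theorem excMajSum_eq_gammaSum {q t : ℝ} (hq0 : 0 ≤ q) (hq1 : q < 1) (ht0 : 0 ≤ t) (ht1 : t < 1)
    (n : ℕ) : excMajSum q t n = gammaSum q (t * q) n := by
  induction n using Nat.strong_induction_on with
  | _ n ih =>
    cases n with
    | zero => simp [excMajSum, gammaSum_zero, pexc, pmaj, pDES]
    | succ n =>
      rw [excMajSum_succ hq0 hq1 ht0 ht1, gammaSum_succ_eq]
      refine congrArg (1 + ·) (Finset.sum_congr rfl fun p hp => ?_)
      rw [ih p.1 (Nat.lt_succ_of_le (Finset.HasAntidiagonal.antidiagonal.fst_le hp))]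

end Comparison

section BivariatePolynomials

lemma eq_of_evalEval_eq {K : Type*} [CommRing K] [IsDomain K] {P Q : K[X][X]} {s : Set K}
    {u : K → Set K} (hs : s.Infinite) (hu : ∀ x ∈ s, (u x).Infinite)
    (h : ∀ x ∈ s, ∀ y ∈ u x, P.evalEval x y = Q.evalEval x y) : P = Q := by
  have hmap {x : K} (hx : x ∈ s) : P.map (evalRingHom x) = Q.map (evalRingHom x) := by
    refine eq_of_infinite_eval_eq _ _ ((hu x hx).mono fun y hy => ?_)
    rw [Set.mem_ofPred_eq, map_evalRingHom_eval, map_evalRingHom_eval, h x hx y hy]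
  ext1 n
  refine eq_of_infinite_eval_eq _ _ (hs.mono fun x hx => ?_)
  simpa only [coeff_map, Set.mem_ofPred_eq, coe_evalRingHom] using
    congrArg (fun R => R.coeff n) (hmap hx)

lemma evalEval_map_Apoly (q t : ℝ) (n : ℕ) :
    ((Apoly n).map (mapRingHom (Int.castRingHom ℝ))).evalEval q (t * q) = excMajSum q t n := by
  rw [Apoly, excMajSum, Polynomial.map_sum, evalEval_finsetSum]
  refine Finset.sum_congr rfl fun σ _ => ?_
  have hpow : q ^ (pmaj σ - pexc σ) * q ^ pexc σ = q ^ pmaj σ := by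
    rw [← pow_add, Nat.sub_add_cancel (pexc_le_pmaj σ)]
  simp only [evalEval, Polynomial.map_mul, Polynomial.map_pow, map_C, map_pow, coe_mapRingHom,
    map_X, eval_mul, eval_pow, eval_C, eval_X, mul_pow, ← hpow]
  ring

lemma map_gammaSum {R S : Type*} [CommSemiring R] [CommSemiring S] (f : R →+* S) (q T : R) (n : ℕ) :
    f (gammaSum q T n) = gammaSum (f q) (f T) n := by
  simp [gammaSum, refinedWeight, sparseWeight, apply_ite f]

lemma gammaSum_eq_sum_range {R : Type*} [CommSemiring R] (q T : R) (n : ℕ) :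
    gammaSum q T n = ∑ k ∈ range ((n - 1) / 2 + 1),
      (∑ σ : Equiv.Perm (Fin n) with
        pDES σ ⊆ Finset.Icc 2 (n - 1) ∧ NoTwoConsec (pDES σ) ∧ #(pDES σ) = k, q ^ pinv σ) *
        T ^ k * (1 + T) ^ (n - 1 - 2 * k) := by
  simp only [Finset.sum_filter, Finset.sum_mul]
  rw [Finset.sum_comm, gammaSum]
  refine Finset.sum_congr rfl fun σ _ => ?_
  by_cases hσ : 1 ∉ pDES σ ∧ NoTwoConsec (pDES σ)
  · have hsub := pDES_subset_Icc_two_iff.2 hσ.1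
    have hcard := two_mul_card_le_of_noTwoConsec hσ.2 hsub
    rw [Finset.sum_eq_single_of_mem #(pDES σ) (Finset.mem_range.2 (by lia)) fun k _ hk => by
      rw [if_neg fun h => hk h.2.2.symm, zero_mul, zero_mul]]
    rw [if_pos ⟨hsub, hσ.2, rfl⟩, refinedWeight, if_neg hσ.1, zero_add, geom_sum_one, one_mul,
      sparseWeight, if_pos hσ.2]
    ring
  · rw [Finset.sum_eq_zero fun k _ => by
      rw [if_neg fun h => hσ ⟨pDES_subset_Icc_two_iff.1 h.1, h.2.1⟩, zero_mul, zero_mul]]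
    rw [not_and_or, not_not] at hσ
    rcases hσ with h1 | hS
    · simp [refinedWeight, h1]
    · simp [refinedWeight, sparseWeight, hS]

end BivariatePolynomials

/-- γ-expansion of the `q`-Eulerian polynomial:
`A_n(q,t) = Σ_k ξ_{n,k}(q) t^k (1+t)^{n-1-2k}` with
`ξ_{n,k}(q) = Σ q^{inv(σ)}` over all `σ ∈ S_n` with `DES(σ) ⊆ [2,n-1]`,
no two consecutive descents, and exactly `k` descents. -/
theorem Apoly_gamma_noFirst (n : ℕ) (hn : 1 ≤ n) :
    Apoly n = ∑ k ∈ Finset.range ((n - 1) / 2 + 1),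
      Polynomial.C (∑ σ ∈ Finset.univ.filter
            (fun σ : Equiv.Perm (Fin n) =>
              pDES σ ⊆ Finset.Icc 2 (n - 1) ∧ NoTwoConsec (pDES σ) ∧ (pDES σ).card = k),
          (Polynomial.X : Polynomial ℤ) ^ pinv σ) *
        Polynomial.X ^ k * (1 + Polynomial.X) ^ (n - 1 - 2 * k) := by
  have hgamma := gammaSum_eq_sum_range (C X : ℤ[X][X]) X n
  simp only [← map_pow, ← map_sum] at hgamma
  rw [← hgamma]
  have hinj : Function.Injective (Polynomial.map (mapRingHom (Int.castRingHom ℝ))) :=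
    map_injective _ (map_injective _ (RingHom.injective_int _))
  refine hinj (eq_of_evalEval_eq (s := Set.Ioo 0 1) (u := fun q => Set.Ioo 0 q)
    (Set.Ioo_infinite one_pos) (fun q hq => Set.Ioo_infinite hq.1) fun q hq T hT => ?_)
  obtain ⟨t, ht0, ht1, rfl⟩ : ∃ t : ℝ, 0 ≤ t ∧ t < 1 ∧ t * q = T :=
    ⟨T / q, (div_pos hT.1 hq.1).le, (div_lt_one hq.1).2 hT.2, div_mul_cancel₀ T hq.1.ne'⟩
  rw [evalEval_map_Apoly, excMajSum_eq_gammaSum hq.1.le hq.2 ht0 ht1, ← coe_mapRingHom,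
    map_gammaSum, ← coe_evalEvalRingHom, map_gammaSum]
  simp
end

section
/- For every integer n ≥ 1, the q-Eulerian polynomial has the γ-expansion A_n(q,t) = Σ_{k=0}^{⌊(n−1)/2⌋} ξ_{n,k}(q) · t^{k} (1+t)^{n−1−2k}, where ξ_{n,k}(q) = Σ q^{inv(σ)}, the sum running over all permutations σ ∈ S_n whose descent set DES(σ) is a subset of {1,…,n−2} containing no two consecutive integers and has exactly k elements (i.e., σ has k descents, no double descents, and no last descent). -/
open Polynomial Finset

/-!
Both sides have the generating function
`∑ₙ Fₙ(q,t) zⁿ / (q;q)_n = (1 - t) exp_q(z) / (exp_q(tz) - t exp_q(z))`, where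
`exp_q(z) = ∑ₙ zⁿ / (q;q)_n`.

For `A_n`, put `e_c = ∏ₖ (1 - c xₖ)` and let `M_t` be the series whose coefficient at `x ^ α` is
that of the same monomial in `∏ₖ Lₖ ^ αₖ`, where
`Lₖ = ∑_{a < k} xₐ + (1 + t) xₖ + t ∑_{a > k} xₐ`. As in MacMahon's master theorem,
`M_t (e_1 - t e_t) = 1 - t`. The series `M_t e_t` is quasisymmetric, and its coefficient at the
exponent given by the block sizes of the composition with partial sums `S` enumerates words with
marked letters. Sorting such a word yields a permutation `σ` whose descent set, for the order on
values in which the excedance values come first, lies in `S`; the marks become excedances. The sum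
of this modified descent set is `maj(σ) - exc(σ)`, so the stable principal specialisation
`x_i ↦ qⁱ z` of `M_t e_t` is `∑ₙ A_n(q,t) zⁿ / (q;q)_n`. It is multiplicative and sends `1 / e_c` to
`exp_q(cz)`.

For the `γ`-side, summing `q ^ inv(σ)` over the permutations with a prescribed pattern on the first
`k` positions and no descent among the others produces a Gaussian binomial coefficient. Multiplying
the generating function by `exp_q(tz) - t exp_q(z)` thus reduces the claim, one descent set at
a time, to an identity between the weights `t ^ #S * (1 + t) ^ (n - 1 - 2 * #S)`; only the prefixes
reaching the last descent contribute, and their contributions form geometric sums.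
-/

namespace GammaExpansion

section QAnalogues

/-- The `q`-Pochhammer symbol `(q;q)_n = (1 - q)(1 - q²)⋯(1 - qⁿ)`. -/
def qPoch {R : Type*} [CommRing R] (q : R) (n : ℕ) : R := ∏ i ∈ range n, (1 - q ^ (i + 1))

/-- The Gaussian binomial coefficient, defined by the `q`-Pascal rule so that it makes sense over
every commutative ring. -/
def qChoose {R : Type*} [CommRing R] (q : R) : ℕ → ℕ → R
  | _, 0 => 1
  | 0, _ + 1 => 0
  | n + 1, k + 1 => q ^ (k + 1) * qChoose q n (k + 1) + qChoose q n k

variable {R : Type*} [CommRing R] (q : R)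

@[simp] lemma qPoch_zero : qPoch q 0 = 1 := prod_range_zero _

lemma qPoch_succ (n : ℕ) : qPoch q (n + 1) = qPoch q n * (1 - q ^ (n + 1)) := prod_range_succ _ _

lemma one_sub_pow_ne_zero {q : R} (hq : ¬IsOfFinOrder q) (n : ℕ) : 1 - q ^ (n + 1) ≠ 0 := fun h =>
  hq <| isOfFinOrder_iff_pow_eq_one.2 ⟨n + 1, n.succ_pos, (sub_eq_zero.1 h).symm⟩

lemma qPoch_ne_zero [IsDomain R] {q : R} (hq : ¬IsOfFinOrder q) (n : ℕ) : qPoch q n ≠ 0 :=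
  prod_ne_zero_iff.2 fun i _ => one_sub_pow_ne_zero hq i

@[simp] lemma qChoose_zero_right (n : ℕ) : qChoose q n 0 = 1 := by cases n <;> rfl

lemma qChoose_succ_succ (n k : ℕ) :
    qChoose q (n + 1) (k + 1) = q ^ (k + 1) * qChoose q n (k + 1) + qChoose q n k := rfl

lemma qChoose_eq_zero_of_lt {n k : ℕ} (h : n < k) : qChoose q n k = 0 := by
  induction n generalizing k with
  | zero => obtain ⟨k, rfl⟩ := Nat.exists_eq_add_of_lt h; rw [zero_add]; rfl
  | succ n ih =>
    obtain ⟨k, rfl⟩ := Nat.exists_eq_succ_of_ne_zero h.ne_bot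
    rw [Nat.succ_eq_add_one, qChoose_succ_succ, ih (by lia), ih (by lia), mul_zero, zero_add]

lemma qChoose_self (n : ℕ) : qChoose q n n = 1 := by
  induction n with
  | zero => rfl
  | succ n ih =>
    rw [qChoose_succ_succ, qChoose_eq_zero_of_lt q n.lt_succ_self, ih, mul_zero, zero_add]

lemma sum_range_qChoose (n k : ℕ) :
    ∑ u ∈ range n, q ^ ((k + 1) * (n - 1 - u)) * qChoose q u k = qChoose q n (k + 1) := by
  induction n with
  | zero => rfl
  | succ n ih =>
    rw [sum_range_succ, qChoose_succ_succ, ← ih, mul_sum]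
    congr 1
    · refine sum_congr rfl fun u hu => ?_
      rw [← mul_assoc, ← pow_add]
      congr 2
      rw [mem_range] at hu
      obtain ⟨d, rfl⟩ := Nat.exists_eq_add_of_lt hu
      simp only [show u + d + 1 + 1 - 1 - u = d + 1 by lia, show u + d + 1 - 1 - u = d by lia]
      ring
    · simp

lemma qChoose_mul_qPoch_mul_qPoch (j k : ℕ) :
    qChoose q (k + j) j * (qPoch q j * qPoch q k) = qPoch q (k + j) := by
  induction j generalizing k with
  | zero => simp
  | succ j ihj =>
    induction k with
    | zero => simp [qChoose_self]
    | succ k ihk =>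
      have h := ihj (k + 1)
      rw [show k + 1 + j = k + (j + 1) by lia] at h
      rw [show k + 1 + (j + 1) = k + (j + 1) + 1 by lia, qChoose_succ_succ]
      rw [qPoch_succ q (k + (j + 1))]
      have e : q ^ (k + (j + 1) + 1) = q ^ (j + 1) * q ^ (k + 1) := by rw [← pow_add]; ring_nf
      rw [e]
      linear_combination q ^ (j + 1) * (1 - q ^ (k + 1)) * ihk + (1 - q ^ (j + 1)) * h +
        q ^ (j + 1) * qChoose q (k + (j + 1)) (j + 1) * qPoch q (j + 1) * qPoch_succ q k +
        qChoose q (k + (j + 1)) j * qPoch q (k + 1) * qPoch_succ q j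

end QAnalogues

section Quasisymmetric

/-- A power series in `x₀, x₁, …` is quasisymmetric if its coefficients do not change when the
variables of a monomial are relabelled in an order-preserving way. -/
def IsQuasisymm {R : Type*} [Semiring R] (f : MvPowerSeries ℕ R) : Prop :=
  ∀ e : ℕ → ℕ, StrictMono e → ∀ α : ℕ →₀ ℕ,
    MvPowerSeries.coeff (α.mapDomain e) f = MvPowerSeries.coeff α f

/-- The exponent of `x₀ ^ p * x₁ ^ α₀ * x₂ ^ α₁ * ⋯`. -/
noncomputable def consExp (p : ℕ) (α : ℕ →₀ ℕ) : ℕ →₀ ℕ :=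
  Finsupp.single 0 p + α.mapDomain Nat.succ

@[simp] lemma consExp_apply_zero (p : ℕ) (α : ℕ →₀ ℕ) : consExp p α 0 = p := by
  simp [consExp, Finsupp.mapDomain_of_notMem_range]

@[simp] lemma consExp_apply_succ (p : ℕ) (α : ℕ →₀ ℕ) (k : ℕ) : consExp p α (k + 1) = α k := by
  simpa [consExp] using Finsupp.mapDomain_apply Nat.succ_injective α k

lemma consExp_zero_left (α : ℕ →₀ ℕ) : consExp 0 α = α.mapDomain Nat.succ := by
  rw [consExp, Finsupp.single_zero, zero_add]

lemma consExp_add (p r : ℕ) (α β : ℕ →₀ ℕ) :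
    consExp (p + r) (α + β) = consExp p α + consExp r β := by
  rw [consExp, consExp, consExp, Finsupp.single_add, Finsupp.mapDomain_add, add_add_add_comm]

lemma consExp_inj {p r : ℕ} {α β : ℕ →₀ ℕ} : consExp p α = consExp r β ↔ p = r ∧ α = β := by
  refine ⟨fun h => ⟨by simpa using DFunLike.congr_fun h 0, ?_⟩, fun ⟨hp, hα⟩ => by rw [hp, hα]⟩
  ext k
  simpa using DFunLike.congr_fun h (k + 1)

lemma exists_eq_consExp (β : ℕ →₀ ℕ) : ∃ p α, β = consExp p α := by
  refine ⟨β 0, β.comapDomain Nat.succ Nat.succ_injective.injOn, ?_⟩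
  ext (_ | k) <;> simp

lemma mapDomain_consExp (e : ℕ → ℕ) (p : ℕ) (α : ℕ →₀ ℕ) :
    (consExp p α).mapDomain (fun k => Nat.casesOn k 0 fun k => e k + 1) =
      consExp p (α.mapDomain e) := by
  rw [consExp, consExp, Finsupp.mapDomain_add, Finsupp.mapDomain_single,
    ← Finsupp.mapDomain_comp, ← Finsupp.mapDomain_comp]
  rfl

section FirstCoeff

variable {R : Type*} [CommSemiring R]

/-- The coefficient of `x₀ ^ p`, a power series in `x₁, x₂, …`, with these variables renamed to
`x₀, x₁, …`. -/
noncomputable def firstCoeff (p : ℕ) : MvPowerSeries ℕ R →ₗ[R] MvPowerSeries ℕ R :=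
  LinearMap.pi fun α => MvPowerSeries.coeff (consExp p α)

lemma coeff_firstCoeff (p : ℕ) (f : MvPowerSeries ℕ R) (α : ℕ →₀ ℕ) :
    MvPowerSeries.coeff α (firstCoeff p f) = MvPowerSeries.coeff (consExp p α) f := rfl

protected lemma IsQuasisymm.firstCoeff {f : MvPowerSeries ℕ R} (hf : IsQuasisymm f) (p : ℕ) :
    IsQuasisymm (firstCoeff p f) := by
  intro e he α
  rw [coeff_firstCoeff, coeff_firstCoeff, ← mapDomain_consExp]
  refine hf _ (strictMono_nat_of_lt_succ fun k => ?_) _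
  cases k with
  | zero => exact Nat.succ_pos _
  | succ k => exact Nat.succ_lt_succ (he k.lt_succ_self)

lemma IsQuasisymm.firstCoeff_zero {f : MvPowerSeries ℕ R} (hf : IsQuasisymm f) :
    firstCoeff 0 f = f := by
  ext α
  rw [coeff_firstCoeff, consExp_zero_left, hf _ (fun _ _ => Nat.succ_lt_succ)]

lemma firstCoeff_mul (p : ℕ) (f g : MvPowerSeries ℕ R) :
    firstCoeff p (f * g) = ∑ x ∈ antidiagonal p, firstCoeff x.1 f * firstCoeff x.2 g := by
  ext α
  rw [coeff_firstCoeff, MvPowerSeries.coeff_mul, map_sum]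
  simp only [MvPowerSeries.coeff_mul, coeff_firstCoeff]
  rw [← sum_product']
  symm
  refine sum_nbij (fun x => (consExp x.1.1 x.2.1, consExp x.1.2 x.2.2)) ?_ ?_ ?_ fun _ _ => rfl
  · rintro ⟨⟨a, b⟩, β, γ⟩ h
    simp only [mem_product, HasAntidiagonal.mem_antidiagonal] at h ⊢
    rw [← consExp_add, h.1, h.2]
  · rintro ⟨⟨a, b⟩, β, γ⟩ - ⟨⟨a', b'⟩, β', γ'⟩ - h
    simp only [Prod.mk.injEq, consExp_inj] at h ⊢
    tauto
  · rintro ⟨β, γ⟩ h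
    obtain ⟨a, β, rfl⟩ := exists_eq_consExp β
    obtain ⟨b, γ, rfl⟩ := exists_eq_consExp γ
    rw [mem_coe, HasAntidiagonal.mem_antidiagonal, ← consExp_add, consExp_inj] at h
    exact ⟨((a, b), (β, γ)), by simpa using h, rfl⟩

end FirstCoeff

/-- The index, counted from the right starting at `0`, of the block containing the position `v`
when the positions `0, 1, 2, …` are cut in front of each element of `S`. -/
def blockIndex (S : Finset ℕ) (v : ℕ) : ℕ := #{j ∈ S | v < j}

/-- The block sizes, from right to left, of the composition of `n` with set of partial sums
`S ⊆ {1, …, n - 1}`, as an exponent vector. -/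
noncomputable def blockExp (n : ℕ) (S : Finset ℕ) : ℕ →₀ ℕ :=
  ∑ v ∈ range n, Finsupp.single (blockIndex S v) 1

lemma blockIndex_insert_of_lt {S : Finset ℕ} {r v : ℕ} (hr : r ∉ S) (hv : v < r) :
    blockIndex (insert r S) v = blockIndex S v + 1 := by
  rw [blockIndex, filter_insert, if_pos hv, card_insert_of_notMem (by simp [hr]), blockIndex]

lemma blockIndex_eq_zero {S : Finset ℕ} {v : ℕ} (h : ∀ x ∈ S, x ≤ v) : blockIndex S v = 0 := by
  simpa [blockIndex, filter_eq_empty_iff] using h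

lemma blockExp_empty (n : ℕ) : blockExp n ∅ = consExp n 0 := by
  simp [blockExp, blockIndex, consExp]

lemma blockExp_insert {S : Finset ℕ} {n r : ℕ} (hS : ∀ x ∈ S, x < r) (hr : r ≤ n) :
    blockExp n (insert r S) = consExp (n - r) (blockExp r S) := by
  have hrS : r ∉ S := fun h => (hS r h).false
  obtain ⟨m, rfl⟩ := Nat.exists_eq_add_of_le hr
  have left : ∀ v ∈ range r, Finsupp.single (blockIndex (insert r S) v) 1 =
      (Finsupp.single (blockIndex S v) 1).mapDomain Nat.succ := fun v hv => by
    rw [Finsupp.mapDomain_single, blockIndex_insert_of_lt hrS (mem_range.1 hv)]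
  have right : ∀ v ∈ range m, Finsupp.single (blockIndex (insert r S) (r + v)) 1 =
      Finsupp.single 0 1 := fun v _ => by
    rw [blockIndex_eq_zero fun x hx => ?_]
    rcases mem_insert.1 hx with rfl | hx
    · exact Nat.le_add_right _ _
    · exact (hS x hx).le.trans (Nat.le_add_right _ _)
  rw [blockExp, sum_range_add, sum_congr rfl left, sum_congr rfl right, consExp, blockExp,
    Finsupp.mapDomain_finsetSum, add_comm]
  simp

end Quasisymmetric

section StablePS

/-- The principal specialisation at `x_i = q ^ i * z` of the monomial quasisymmetric function with
set of partial sums `S ⊆ U = {1, …, n - 1}` is `stableWeight q U S / (q;q)_n * z ^ n`. -/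
def stableWeight {R : Type*} [CommRing R] (q : R) (U S : Finset ℕ) : R :=
  (∏ i ∈ S, q ^ i) * ∏ i ∈ U \ S, (1 - q ^ i)

section Weight

variable {R : Type*} [CommRing R] (q : R)

lemma stableWeight_insert_left {U S : Finset ℕ} {r : ℕ} (hr : r ∉ U) (hS : S ⊆ U) :
    stableWeight q (insert r U) S = (1 - q ^ r) * stableWeight q U S := by
  rw [stableWeight, insert_sdiff_of_notMem _ fun h => hr (hS h), prod_insert (by simp [hr]),
    stableWeight]
  ring

lemma stableWeight_insert_insert {U S : Finset ℕ} {r : ℕ} (hr : r ∉ U) (hS : S ⊆ U) :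
    stableWeight q (insert r U) (insert r S) = q ^ r * stableWeight q U S := by
  rw [stableWeight, prod_insert fun h => hr (hS h), insert_sdiff_insert, sdiff_insert,
    erase_eq_of_notMem (by simp [hr]), stableWeight, mul_assoc]

lemma sum_stableWeight (U : Finset ℕ) : ∑ S ∈ U.powerset, stableWeight q U S = 1 := by
  simp only [stableWeight, ← prod_add, add_sub_cancel, prod_const_one]

lemma sum_stableWeight_of_subset {U D : Finset ℕ} (hD : D ⊆ U) :
    ∑ S ∈ U.powerset with D ⊆ S, stableWeight q U S = q ^ ∑ i ∈ D, i := by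
  have hset : {S ∈ U.powerset | D ⊆ S} = (U \ D).powerset.image (D ∪ ·) := by
    ext S
    simp only [mem_filter, mem_powerset, mem_image]
    constructor
    · rintro ⟨hSU, hDS⟩
      exact ⟨S \ D, sdiff_subset_sdiff hSU subset_rfl, union_sdiff_of_subset hDS⟩
    · rintro ⟨T, hT, rfl⟩
      exact ⟨union_subset hD (hT.trans sdiff_subset), subset_union_left⟩
  have hdisj : ∀ T ∈ (U \ D).powerset, Disjoint D T := fun T hT =>
    disjoint_sdiff.mono_right (mem_powerset.1 hT)
  rw [hset, sum_image fun T hT T' hT' h => ?_, ← prod_pow_eq_pow_sum, ← mul_one (∏ i ∈ D, q ^ i),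
    ← sum_stableWeight q (U \ D), mul_sum]
  · refine sum_congr rfl fun T hT => ?_
    rw [stableWeight, stableWeight, prod_union (hdisj T hT), sdiff_union_distrib,
      ← Finset.sdiff_sdiff_left', mul_assoc, prod_pow_eq_pow_sum, prod_pow_eq_pow_sum]
  · have := congrArg (· \ D) h
    simpa [union_sdiff_cancel_left (hdisj T hT), union_sdiff_cancel_left (hdisj T' hT')] using this

end Weight

variable {K : Type*} [Field K]

/-- The stable principal specialisation `x_i ↦ q ^ i * z` of quasisymmetric power series, given by
its values on monomial quasisymmetric functions. -/
noncomputable def stablePS (q : K) : MvPowerSeries ℕ K →ₗ[K] PowerSeries K where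
  toFun f := PowerSeries.mk fun n => (qPoch q n)⁻¹ * ∑ S ∈ (Icc 1 (n - 1)).powerset,
    stableWeight q (Icc 1 (n - 1)) S * MvPowerSeries.coeff (blockExp n S) f
  map_add' f g := by ext n; simp [mul_add, sum_add_distrib]
  map_smul' c f := by ext n; simp [mul_sum, mul_left_comm]

variable {q : K}

lemma qPoch_mul_coeff_stablePS (hq : ¬IsOfFinOrder q) (f : MvPowerSeries ℕ K) (n : ℕ) :
    qPoch q n * PowerSeries.coeff n (stablePS q f) = ∑ S ∈ (Icc 1 (n - 1)).powerset,
      stableWeight q (Icc 1 (n - 1)) S * MvPowerSeries.coeff (blockExp n S) f := by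
  simp only [stablePS, LinearMap.coe_mk, AddHom.coe_mk, PowerSeries.coeff_mk]
  rw [mul_inv_cancel_left₀ (qPoch_ne_zero hq n)]

lemma coeff_zero_stablePS (f : MvPowerSeries ℕ K) :
    PowerSeries.coeff 0 (stablePS q f) = MvPowerSeries.coeff 0 f := by
  simp [stablePS, stableWeight, blockExp]

lemma sum_stableWeight_mul_coeff (hq : ¬IsOfFinOrder q) (f : MvPowerSeries ℕ K) {j n : ℕ}
    (hj : j < n) :
    ∑ S ∈ (Icc 1 j).powerset, stableWeight q (Icc 1 j) S * MvPowerSeries.coeff (blockExp n S) f =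
      qPoch q j * ∑ r ∈ range (j + 1),
        q ^ r * PowerSeries.coeff r (stablePS q (firstCoeff (n - r) f)) := by
  induction j with
  | zero => simp [stableWeight, coeff_zero_stablePS, blockExp_empty, coeff_firstCoeff]
  | succ j ih =>
    have hmem : j + 1 ∉ Icc 1 j := by simp
    have hcut : ∀ S ∈ (Icc 1 j).powerset,
        stableWeight q (insert (j + 1) (Icc 1 j)) (insert (j + 1) S) *
          MvPowerSeries.coeff (blockExp n (insert (j + 1) S)) f =
        q ^ (j + 1) * (stableWeight q (Icc 1 j) S *
          MvPowerSeries.coeff (blockExp (j + 1) S) (firstCoeff (n - (j + 1)) f)) := by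
      intro S hS
      rw [mem_powerset] at hS
      rw [stableWeight_insert_insert q hmem hS, mul_assoc, coeff_firstCoeff,
        blockExp_insert (fun x hx => by have := mem_Icc.1 (hS hx); lia) hj.le]
    have huncut : ∀ S ∈ (Icc 1 j).powerset,
        stableWeight q (insert (j + 1) (Icc 1 j)) S * MvPowerSeries.coeff (blockExp n S) f =
        (1 - q ^ (j + 1)) *
          (stableWeight q (Icc 1 j) S * MvPowerSeries.coeff (blockExp n S) f) := by
      intro S hS
      rw [stableWeight_insert_left q hmem (mem_powerset.1 hS), mul_assoc]
    rw [← insert_Icc_right_eq_Icc_add_one (by lia), sum_powerset_insert hmem,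
      sum_congr rfl huncut, sum_congr rfl hcut, ← mul_sum, ← mul_sum, ih (by lia),
      sum_range_succ _ (j + 1), qPoch_succ, mul_add]
    have := qPoch_mul_coeff_stablePS hq (firstCoeff (n - (j + 1)) f) (j + 1)
    rw [add_tsub_cancel_right, qPoch_succ] at this
    rw [← this]
    ring

lemma one_sub_mul_coeff_succ_stablePS (hq : ¬IsOfFinOrder q) (f : MvPowerSeries ℕ K) (n : ℕ) :
    (1 - q ^ (n + 1)) * PowerSeries.coeff (n + 1) (stablePS q f) = ∑ r ∈ range (n + 1),
      q ^ r * PowerSeries.coeff r (stablePS q (firstCoeff (n + 1 - r) f)) := by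
  refine mul_left_cancel₀ (qPoch_ne_zero hq n) ?_
  rw [← sum_stableWeight_mul_coeff hq f n.lt_succ_self, ← mul_assoc, ← qPoch_succ,
    qPoch_mul_coeff_stablePS hq, add_tsub_cancel_right]

/-- Expanding `f (x₀, x₁, …)` in powers of `x₀`, the remaining variables specialise to
`q * z, q ^ 2 * z, …`. -/
lemma coeff_stablePS_eq_sum_firstCoeff (hq : ¬IsOfFinOrder q) {f : MvPowerSeries ℕ K}
    (hf : IsQuasisymm f) (n : ℕ) :
    PowerSeries.coeff n (stablePS q f) = ∑ x ∈ antidiagonal n,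
      q ^ x.1 * PowerSeries.coeff x.1 (stablePS q (firstCoeff x.2 f)) := by
  rw [Nat.sum_antidiagonal_eq_sum_range_succ_mk, sum_range_succ]
  simp only [Nat.sub_self, hf.firstCoeff_zero]
  cases n with
  | zero => simp
  | succ n => linear_combination one_sub_mul_coeff_succ_stablePS hq f n

lemma sum_antidiagonal_antidiagonal_interchange {M : Type*} [AddCommMonoid M] (n : ℕ)
    (F : ℕ → ℕ → ℕ → ℕ → M) :
    ∑ x ∈ antidiagonal n, ∑ y ∈ antidiagonal x.1, ∑ z ∈ antidiagonal x.2, F y.1 y.2 z.1 z.2 =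
      ∑ x ∈ antidiagonal n, ∑ y ∈ antidiagonal x.1, ∑ z ∈ antidiagonal x.2,
        F y.1 z.1 y.2 z.2 := by
  simp only [← sum_product', sum_sigma']
  refine sum_bij'
    (fun x _ => ⟨(x.2.1.1 + x.2.2.1, x.2.1.2 + x.2.2.2), ((x.2.1.1, x.2.2.1), (x.2.1.2, x.2.2.2))⟩)
    (fun x _ => ⟨(x.2.1.1 + x.2.2.1, x.2.1.2 + x.2.2.2), ((x.2.1.1, x.2.2.1), (x.2.1.2, x.2.2.2))⟩)
    ?_ ?_ ?_ ?_ fun _ _ => rfl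
  all_goals
    rintro ⟨⟨a, b⟩, ⟨⟨c, d⟩, ⟨e, f⟩⟩⟩ h
    simp only [mem_sigma, HasAntidiagonal.mem_antidiagonal, mem_product, Sigma.mk.injEq,
      Prod.mk.injEq, heq_eq_eq, and_true] at h ⊢
    lia

lemma coeff_stablePS_mul_stablePS (hq : ¬IsOfFinOrder q) {f g : MvPowerSeries ℕ K}
    (hf : IsQuasisymm f) (hg : IsQuasisymm g) (n : ℕ) :
    PowerSeries.coeff n (stablePS q f * stablePS q g) = ∑ x ∈ antidiagonal n,
      q ^ x.1 * ∑ z ∈ antidiagonal x.2,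
        PowerSeries.coeff x.1 (stablePS q (firstCoeff z.1 f) * stablePS q (firstCoeff z.2 g)) := by
  rw [PowerSeries.coeff_mul, sum_congr rfl fun x _ => by
    rw [coeff_stablePS_eq_sum_firstCoeff hq hf, coeff_stablePS_eq_sum_firstCoeff hq hg,
      sum_mul_sum]]
  rw [sum_antidiagonal_antidiagonal_interchange n fun a b c d =>
    (q ^ a * PowerSeries.coeff a (stablePS q (firstCoeff b f))) *
      (q ^ c * PowerSeries.coeff c (stablePS q (firstCoeff d g)))]
  refine sum_congr rfl fun x _ => ?_
  simp only [PowerSeries.coeff_mul, mul_sum]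
  rw [sum_comm]
  refine sum_congr rfl fun z _ => sum_congr rfl fun y hy => ?_
  rw [← HasAntidiagonal.mem_antidiagonal.1 hy, pow_add]
  ring

theorem stablePS_mul (hq : ¬IsOfFinOrder q) {f g : MvPowerSeries ℕ K}
    (hf : IsQuasisymm f) (hg : IsQuasisymm g) :
    stablePS q (f * g) = stablePS q f * stablePS q g := by
  ext n
  induction n using Nat.strong_induction_on generalizing f g with
  | _ n ih =>
    cases n with
    | zero =>
      rw [PowerSeries.coeff_mul]
      simp only [HasAntidiagonal.antidiagonal_zero, sum_singleton, coeff_zero_stablePS]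
      exact map_mul MvPowerSeries.constantCoeff f g
    | succ n =>
      have hrec := coeff_stablePS_mul_stablePS hq hf hg (n + 1)
      rw [Nat.sum_antidiagonal_eq_sum_range_succ_mk, sum_range_succ] at hrec
      simp only [Nat.sub_self, HasAntidiagonal.antidiagonal_zero, sum_singleton, hf.firstCoeff_zero,
        hg.firstCoeff_zero] at hrec
      refine mul_left_cancel₀ (one_sub_pow_ne_zero hq n) ?_
      rw [one_sub_mul_coeff_succ_stablePS hq, sum_congr rfl fun r hr => ?_]
      · linear_combination -hrec
      · simp only [firstCoeff_mul, map_sum]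
        congr 1
        exact sum_congr rfl fun z _ =>
          ih r (mem_range.1 hr) (hf.firstCoeff z.1) (hg.firstCoeff z.2)

end StablePS

section MacMahon

variable {R : Type*} [CommRing R]

/-- The linear form `∑ a ∈ s, w(a, k) x_a`, where `w(a, k)` is `1` for `a < k`, `t` for `a > k` and
`1 + t` for `a = k`. -/
noncomputable def linForm (t : R) (s : Finset ℕ) (k : ℕ) : MvPolynomial ℕ R :=
  ∑ a ∈ s, MvPolynomial.C ((if a ≤ k then 1 else 0) + (if k ≤ a then t else 0)) * MvPolynomial.X a

/-- The power series whose coefficient at `x ^ α` is the coefficient of the same monomial in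
`∏ₖ Lₖ ^ αₖ`, where `Lₖ` is the linear form `linForm t` in the variables that occur in `x ^ α`. -/
noncomputable def macSeries (t : R) : MvPowerSeries ℕ R := fun α =>
  MvPolynomial.coeff α (α.prod fun k p => linForm t α.support k ^ p)

/-- The generating function `∏ₖ (1 - c xₖ)` of the elementary symmetric functions. -/
noncomputable def elemSeries (c : R) : MvPowerSeries ℕ R := fun α =>
  α.prod fun _ p => if p = 1 then -c else 0

/-- The generating function `∏ₖ (1 - c xₖ)⁻¹` of the complete homogeneous symmetric functions. -/
noncomputable def homogSeries (c : R) : MvPowerSeries ℕ R := fun α => α.prod fun _ p => c ^ p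

lemma coeff_macSeries (t : R) (α : ℕ →₀ ℕ) : MvPowerSeries.coeff α (macSeries t) =
    MvPolynomial.coeff α (α.prod fun k p => linForm t α.support k ^ p) := rfl

lemma coeff_elemSeries (c : R) (α : ℕ →₀ ℕ) : MvPowerSeries.coeff α (elemSeries c) =
    α.prod fun _ p => if p = 1 then -c else 0 := rfl

lemma coeff_homogSeries (c : R) (α : ℕ →₀ ℕ) :
    MvPowerSeries.coeff α (homogSeries c) = c ^ α.degree := prod_pow_eq_pow_sum _ _ _

lemma isQuasisymm_elemSeries (c : R) : IsQuasisymm (elemSeries c) := fun _ he α =>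
  Finsupp.prod_mapDomain_index_inj (s := α) (h := fun _ p => if p = 1 then -c else 0) he.injective

lemma isQuasisymm_homogSeries (c : R) : IsQuasisymm (homogSeries c) := fun _ he α =>
  Finsupp.prod_mapDomain_index_inj (s := α) (h := fun _ p => c ^ p) he.injective

lemma linForm_image (t : R) (s : Finset ℕ) {e : ℕ → ℕ} (he : StrictMono e) (k : ℕ) :
    linForm t (s.image e) (e k) = MvPolynomial.rename e (linForm t s k) := by
  simp [linForm, sum_image he.injective.injOn, he.le_iff_le]

lemma isQuasisymm_macSeries (t : R) : IsQuasisymm (macSeries t) := by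
  intro e he α
  rw [coeff_macSeries, Finsupp.prod_mapDomain_index_inj he.injective,
    Finsupp.mapDomain_support_of_injective he.injective]
  simp only [linForm_image t _ he, ← map_pow]
  rw [← map_finsuppProd, MvPolynomial.coeff_rename_mapDomain _ he.injective, coeff_macSeries]

lemma coeff_eq_coeff_of_sub_mem_span {s : Finset ℕ} {P Q : MvPolynomial ℕ R}
    (h : P - Q ∈ Ideal.span (MvPolynomial.X '' (sᶜ : Set ℕ) : Set (MvPolynomial ℕ R)))
    {α : ℕ →₀ ℕ} (hα : α.support ⊆ s) : MvPolynomial.coeff α P = MvPolynomial.coeff α Q := by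
  rw [← sub_eq_zero, ← MvPolynomial.coeff_sub]
  by_contra hne
  obtain ⟨i, his, hi⟩ := MvPolynomial.mem_ideal_span_X_image.1 h α (by simpa using hne)
  exact his (hα (Finsupp.mem_support_iff.2 hi))

lemma linForm_sub_linForm_mem_span (t : R) {s u : Finset ℕ} (hsu : s ⊆ u) (k : ℕ) :
    linForm t u k - linForm t s k ∈
      Ideal.span (MvPolynomial.X '' (sᶜ : Set ℕ) : Set (MvPolynomial ℕ R)) := by
  rw [linForm, linForm, ← sum_sdiff hsu, add_sub_cancel_right]
  refine Ideal.sum_mem _ fun a ha => Ideal.mul_mem_left _ _ (Ideal.subset_span ⟨a, ?_, rfl⟩)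
  simpa using (mem_sdiff.1 ha).2

lemma coeff_macSeries_of_support_subset (t : R) {α : ℕ →₀ ℕ} {s : Finset ℕ}
    (hs : α.support ⊆ s) : MvPowerSeries.coeff α (macSeries t) =
      MvPolynomial.coeff α (∏ k ∈ s, linForm t s k ^ α k) := by
  rw [coeff_macSeries, α.prod_of_support_subset hs _ fun _ _ => pow_zero _]
  refine (coeff_eq_coeff_of_sub_mem_span ?_ subset_rfl).symm
  rw [← Ideal.Quotient.eq, map_prod, map_prod]
  refine prod_congr rfl fun k _ => ?_
  rw [map_pow, map_pow, Ideal.Quotient.eq.2 (linForm_sub_linForm_mem_span t hs k)]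

/-- The exponent of the squarefree monomial `∏ k ∈ T, x_k`. -/
noncomputable def squarefreeExp (T : Finset ℕ) : ℕ →₀ ℕ := Finsupp.indicator T fun _ _ => 1

lemma squarefreeExp_apply (T : Finset ℕ) (k : ℕ) : squarefreeExp T k = if k ∈ T then 1 else 0 := by
  rw [squarefreeExp, Finsupp.indicator_apply, dite_eq_ite]

lemma support_squarefreeExp (T : Finset ℕ) : (squarefreeExp T).support = T := by
  ext k
  simp [squarefreeExp_apply]

lemma squarefreeExp_le {α : ℕ →₀ ℕ} {T : Finset ℕ} (hT : T ⊆ α.support) :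
    squarefreeExp T ≤ α := by
  intro k
  rw [squarefreeExp_apply]
  split_ifs with hk
  · exact Nat.one_le_iff_ne_zero.2 (Finsupp.mem_support_iff.1 (hT hk))
  · exact Nat.zero_le _

lemma prod_C_mul_X (c : R) (T : Finset ℕ) :
    ∏ k ∈ T, MvPolynomial.C c * MvPolynomial.X k =
      MvPolynomial.monomial (squarefreeExp T) (c ^ #T) := by
  rw [squarefreeExp, MvPolynomial.monomial_eq, prod_mul_distrib, prod_const, map_pow,
    ← squarefreeExp, Finsupp.prod, support_squarefreeExp]
  exact congrArg _ (prod_congr rfl fun k hk => by simp [squarefreeExp_apply, hk])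

lemma coeff_mul_elemSeries (f : MvPowerSeries ℕ R) (c : R) (α : ℕ →₀ ℕ) :
    MvPowerSeries.coeff α (f * elemSeries c) = ∑ T ∈ α.support.powerset,
      (-c) ^ #T * MvPowerSeries.coeff (α - squarefreeExp T) f := by
  rw [MvPowerSeries.coeff_mul]
  symm
  refine sum_of_injOn (fun T => (α - squarefreeExp T,
    squarefreeExp T)) ?_ ?_ ?_ ?_
  · intro T _ T' _ h
    rw [← support_squarefreeExp T, (Prod.mk.inj h).2, support_squarefreeExp]
  · intro T hT
    rw [mem_coe, HasAntidiagonal.mem_antidiagonal]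
    exact tsub_add_cancel_of_le (squarefreeExp_le (mem_powerset.1 hT))
  · rintro ⟨β, γ⟩ hβγ hnot
    rw [HasAntidiagonal.mem_antidiagonal] at hβγ
    suffices h : ∃ k ∈ γ.support, γ k ≠ 1 by
      obtain ⟨k, hk, hk1⟩ := h
      rw [coeff_elemSeries, Finsupp.prod, prod_eq_zero hk (if_neg hk1), mul_zero]
    by_contra! hone
    refine hnot ⟨γ.support, mem_coe.2 (mem_powerset.2 ?_), ?_⟩
    · rw [← hβγ, Finsupp.support_add_eq_union]
      exact subset_union_right
    · have hγ : squarefreeExp γ.support = γ := by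
        ext k
        rw [squarefreeExp_apply]
        split_ifs with hk
        · exact (hone k hk).symm
        · exact (Finsupp.notMem_support_iff.1 hk).symm
      simp only [hγ, ← hβγ, add_tsub_cancel_right]
  · intro T _
    have hprod : ∏ k ∈ T, (if squarefreeExp T k = 1 then -c else 0) =
        ∏ _k ∈ T, -c := prod_congr rfl fun k hk => by simp [squarefreeExp_apply, hk]
    rw [coeff_elemSeries, Finsupp.prod, support_squarefreeExp, hprod, prod_const, mul_comm]

lemma prod_tsub_indicator {M : Type*} [CommMonoid M] (G : ℕ → ℕ → M) (α : ℕ →₀ ℕ)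
    {s T : Finset ℕ} (hT : T ⊆ s) :
    ∏ k ∈ s, G k ((α - squarefreeExp T) k) =
      (∏ k ∈ T, G k (α k - 1)) * ∏ k ∈ s \ T, G k (α k) := by
  rw [← prod_sdiff hT, mul_comm]
  congr 1
  · exact prod_congr rfl fun k hk => by simp [squarefreeExp_apply, hk]
  · exact prod_congr rfl fun k hk => by simp [squarefreeExp_apply, (mem_sdiff.1 hk).2]

lemma homogSeries_mul_elemSeries (c : R) : homogSeries c * elemSeries c = 1 := by
  ext α
  have hterm : ∀ T ∈ α.support.powerset,
      (-c) ^ #T * MvPowerSeries.coeff (α - squarefreeExp T) (homogSeries c) =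
        (∏ k ∈ T, -c * c ^ (α k - 1)) * ∏ k ∈ α.support \ T, c ^ α k := by
    intro T hT
    rw [prod_mul_distrib, prod_const, mul_assoc,
      ← prod_tsub_indicator (fun _ p => c ^ p) α (mem_powerset.1 hT)]
    congr 1
    exact Finsupp.prod_of_support_subset _ Finsupp.support_tsub _ fun _ _ => pow_zero c
  rw [coeff_mul_elemSeries, sum_congr rfl hterm, ← prod_add, MvPowerSeries.coeff_one]
  split_ifs with hα
  · simp [hα]
  · obtain ⟨k, hk⟩ := Finsupp.support_nonempty_iff.2 hα
    refine prod_eq_zero hk ?_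
    rw [neg_mul, mul_pow_sub_one (Finsupp.mem_support_iff.1 hk), neg_add_cancel]

lemma coeff_macSeries_mul_elemSeries (t c : R) (α : ℕ →₀ ℕ) :
    MvPowerSeries.coeff α (macSeries t * elemSeries c) =
      MvPolynomial.coeff α (∏ k ∈ α.support, linForm t α.support k ^ (α k - 1) *
        (linForm t α.support k - MvPolynomial.C c * MvPolynomial.X k)) := by
  set L := linForm t α.support
  have hterm : ∀ T ∈ α.support.powerset,
      (-c) ^ #T * MvPowerSeries.coeff (α - squarefreeExp T) (macSeries t) =
        MvPolynomial.coeff α ((∏ k ∈ T, MvPolynomial.C (-c) * MvPolynomial.X k *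
          L k ^ (α k - 1)) * ∏ k ∈ α.support \ T, L k ^ α k) := by
    intro T hT
    rw [mem_powerset] at hT
    rw [coeff_macSeries_of_support_subset t Finsupp.support_tsub,
      prod_tsub_indicator (fun k p => L k ^ p) α hT, ← MvPolynomial.coeff_monomial_mul,
      ← prod_C_mul_X, add_tsub_cancel_of_le (squarefreeExp_le hT), ← mul_assoc, ← prod_mul_distrib]
  rw [coeff_mul_elemSeries, sum_congr rfl hterm, ← MvPolynomial.coeff_sum, ← prod_add]
  congr 1
  refine prod_congr rfl fun k hk => ?_
  rw [← mul_pow_sub_one (Finsupp.mem_support_iff.1 hk) (L k), map_neg]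
  ring

lemma prod_filter_lt_mul {ι M : Type*} [LinearOrder ι] [CommMonoid M] (g : Finset ι → M)
    (s : Finset ι) :
    (∏ k ∈ s, g {a ∈ s | a < k}) * g s = g ∅ * ∏ k ∈ s, g {a ∈ s | a ≤ k} := by
  induction s using Finset.induction_on_max with
  | empty => simp
  | insert m s hm ih =>
    have hms : m ∉ s := fun h => (hm m h).false
    have hlt : ∀ k ∈ s, {a ∈ insert m s | a < k} = {a ∈ s | a < k} := fun k hk => by
      rw [filter_insert, if_neg (hm k hk).not_gt]
    have hle : ∀ k ∈ s, {a ∈ insert m s | a ≤ k} = {a ∈ s | a ≤ k} := fun k hk => by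
      rw [filter_insert, if_neg (hm k hk).not_ge]
    have hltm : {a ∈ insert m s | a < m} = s := by
      rw [filter_insert, if_neg (lt_irrefl m), filter_true_of_mem hm]
    have hlem : {a ∈ insert m s | a ≤ m} = insert m s := by
      rw [filter_insert, if_pos le_rfl, filter_true_of_mem fun a ha => (hm a ha).le]
    rw [prod_insert hms, prod_insert hms, hltm, hlem,
      prod_congr rfl fun k hk => congrArg g (hlt k hk),
      prod_congr rfl fun k hk => congrArg g (hle k hk), mul_comm (g s), ih]
    ac_rfl

lemma linForm_sub_C_mul_X (t c : R) {s : Finset ℕ} {k : ℕ} (hk : k ∈ s) :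
    linForm t s k - MvPolynomial.C c * MvPolynomial.X k = ∑ a ∈ s, MvPolynomial.C
      ((if a ≤ k then 1 else 0) + (if k ≤ a then t else 0) - if a = k then c else 0) *
        MvPolynomial.X a := by
  have hX : MvPolynomial.C c * MvPolynomial.X k =
      ∑ a ∈ s, MvPolynomial.C (if a = k then c else 0) * (MvPolynomial.X a : MvPolynomial ℕ R) := by
    rw [sum_eq_single_of_mem k hk fun a _ hak => by simp [hak], if_pos rfl]
  rw [hX, linForm, ← sum_sub_distrib]
  exact sum_congr rfl fun a _ => by rw [map_sub, sub_mul]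

lemma prod_linForm_sub_X [IsDomain R] (t : R) {s : Finset ℕ} (hs : s.Nonempty) :
    ∏ k ∈ s, (linForm t s k - MvPolynomial.X k) =
      MvPolynomial.C t * ∏ k ∈ s, (linForm t s k - MvPolynomial.C t * MvPolynomial.X k) := by
  let g : Finset ℕ → MvPolynomial ℕ R := fun u =>
    ∑ a ∈ s, MvPolynomial.C (if a ∈ u then 1 else t) * MvPolynomial.X a
  have hlt : ∀ k ∈ s, linForm t s k - MvPolynomial.X k = g {a ∈ s | a < k} := by
    intro k hk
    rw [← one_mul (MvPolynomial.X k), ← MvPolynomial.C_1, linForm_sub_C_mul_X t 1 hk]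
    refine sum_congr rfl fun a ha => ?_
    rcases lt_trichotomy a k with h | rfl | h
    · simp [ha, h, h.le, h.not_ge, h.ne]
    · simp
    · simp [h.le, h.not_ge, h.ne', h.not_gt]
  have hle : ∀ k ∈ s, linForm t s k - MvPolynomial.C t * MvPolynomial.X k = g {a ∈ s | a ≤ k} := by
    intro k hk
    rw [linForm_sub_C_mul_X t t hk]
    refine sum_congr rfl fun a ha => ?_
    rcases lt_trichotomy a k with h | rfl | h
    · simp [ha, h.le, h.not_ge, h.ne]
    · simp [ha]
    · simp [h.le, h.not_ge, h.ne']
  have hg : g s = ∑ a ∈ s, MvPolynomial.X a := sum_congr rfl fun a ha => by simp [ha]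
  have hempty : g ∅ = MvPolynomial.C t * g s := by
    rw [hg, mul_sum]
    exact sum_congr rfl fun a _ => by simp
  have hne : g s ≠ 0 := by
    obtain ⟨k, hk⟩ := hs
    refine MvPolynomial.ne_zero_iff.2 ⟨Finsupp.single k 1, ?_⟩
    simp [hg, MvPolynomial.coeff_sum, MvPolynomial.coeff_X, Finsupp.single_left_inj, hk]
  refine mul_right_cancel₀ hne ?_
  rw [prod_congr rfl hlt, prod_congr rfl hle, prod_filter_lt_mul, hempty]
  ring

lemma macSeries_mul_elemSeries_sub [IsDomain R] (t : R) :
    macSeries t * elemSeries 1 - t • (macSeries t * elemSeries t) = MvPowerSeries.C (1 - t) := by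
  ext α
  rw [map_sub, MvPowerSeries.coeff_smul, coeff_macSeries_mul_elemSeries,
    coeff_macSeries_mul_elemSeries, ← MvPolynomial.coeff_C_mul, ← MvPolynomial.coeff_sub,
    MvPowerSeries.coeff_C]
  split_ifs with hα
  · simp [hα]
  · simp only [prod_mul_distrib, map_one, one_mul]
    rw [prod_linForm_sub_X t (Finsupp.support_nonempty_iff.2 hα), mul_left_comm, sub_self,
      MvPolynomial.coeff_zero]

end MacMahon

section Specialisation

variable {K : Type*} [Field K] {q : K}

/-- The `q`-exponential series `∑ₙ cⁿ zⁿ / (q;q)_n`. -/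
noncomputable def qExp (q c : K) : PowerSeries K := PowerSeries.mk fun n => c ^ n / qPoch q n

lemma degree_blockExp (n : ℕ) (S : Finset ℕ) : (blockExp n S).degree = n := by
  simp [blockExp, map_sum]

lemma stablePS_homogSeries (c : K) : stablePS q (homogSeries c) = qExp q c := by
  ext n
  simp only [stablePS, qExp, LinearMap.coe_mk, AddHom.coe_mk, PowerSeries.coeff_mk,
    coeff_homogSeries, degree_blockExp, ← sum_mul, sum_stableWeight]
  ring

lemma stablePS_C (a : K) : stablePS q (MvPowerSeries.C a) = PowerSeries.C a := by
  ext n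
  cases n with
  | zero => rw [coeff_zero_stablePS, MvPowerSeries.coeff_zero_C, PowerSeries.coeff_zero_C]
  | succ n =>
    have hne : ∀ S, blockExp (n + 1) S ≠ 0 := fun S h => by
      simpa [degree_blockExp] using congrArg Finsupp.degree h
    simp [stablePS, MvPowerSeries.coeff_C, hne]

theorem stablePS_macSeries_mul_elemSeries (hq : ¬IsOfFinOrder q) (t : K) :
    stablePS q (macSeries t * elemSeries t) * (qExp q t - t • qExp q 1) =
      (1 - t) • qExp q 1 := by
  have hmac := isQuasisymm_macSeries t
  have helem (c : K) := isQuasisymm_elemSeries c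
  have hinv (c : K) : qExp q c * stablePS q (elemSeries c) = 1 := by
    rw [← stablePS_homogSeries, ← stablePS_mul hq (isQuasisymm_homogSeries c) (helem c),
      homogSeries_mul_elemSeries, ← map_one MvPowerSeries.C, stablePS_C, map_one]
  have hsub : stablePS q (macSeries t) *
      (stablePS q (elemSeries 1) - t • stablePS q (elemSeries t)) = PowerSeries.C (1 - t) := by
    rw [← stablePS_C, ← macSeries_mul_elemSeries_sub, map_sub, map_smul,
      stablePS_mul hq hmac (helem 1), stablePS_mul hq hmac (helem t), mul_sub, mul_smul_comm]
  rw [stablePS_mul hq hmac (helem t)]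
  simp only [PowerSeries.smul_eq_C_mul] at hsub ⊢
  linear_combination qExp q 1 * hsub + stablePS q (macSeries t) * hinv t -
    stablePS q (macSeries t) * hinv 1

end Specialisation

section Words

/-- The exponent vector counting how often each letter occurs in the word `w`. -/
noncomputable def content {n : ℕ} (w : Fin n → ℕ) : ℕ →₀ ℕ := ∑ v, Finsupp.single (w v) 1

lemma content_apply {n : ℕ} (w : Fin n → ℕ) (k : ℕ) : content w k = #{v | w v = k} := by
  simp [content, Finsupp.finsetSum_apply, Finsupp.single_apply]

lemma support_content {n : ℕ} (w : Fin n → ℕ) : (content w).support = univ.image w := by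
  ext k
  simp [content_apply, filter_eq_empty_iff]

lemma prod_C_mul_X_comp {R : Type*} [CommSemiring R] {n : ℕ} (c : Fin n → R) (w : Fin n → ℕ) :
    ∏ v, (MvPolynomial.C (c v) * MvPolynomial.X (w v)) =
      MvPolynomial.monomial (content w) (∏ v, c v) := by
  simp only [content, MvPolynomial.monomial_sum_prod, MvPolynomial.C_mul_X_eq_monomial]

lemma prod_ite_exists_lt_fiber {M : Type*} [CommMonoid M] {n : ℕ} (s : Fin n → ℕ) (f g : ℕ → M) :
    ∏ v, (if ∃ u < v, s u = s v then f (s v) else g (s v)) =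
      ∏ k ∈ univ.image s, f k ^ (#{v | s v = k} - 1) * g k := by
  rw [← prod_fiberwise_of_maps_to fun v _ => mem_image_of_mem s (mem_univ v)]
  refine prod_congr rfl fun k hk => ?_
  have hne : ({v | s v = k} : Finset (Fin n)).Nonempty := by
    obtain ⟨v, -, hv⟩ := mem_image.1 hk
    exact ⟨v, by simpa using hv⟩
  obtain ⟨m, hm, hmin⟩ := exists_min_image _ id hne
  have hsm : s m = k := (mem_filter.1 hm).2
  rw [← mul_prod_erase _ _ hm, if_neg, hsm, mul_comm, ← card_erase_of_mem hm, ← prod_const]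
  · refine congrArg (· * g k) (prod_congr rfl fun v hv => ?_)
    obtain ⟨hvm, hv⟩ := mem_erase.1 hv
    have hsv : s v = k := (mem_filter.1 hv).2
    rw [if_pos ⟨m, lt_of_le_of_ne (hmin v hv) (Ne.symm hvm), hsm.trans hsv.symm⟩, hsv]
  · rintro ⟨u, hu, hsu⟩
    exact hu.not_ge (hmin u (by simpa [hsm] using hsu))

variable {R : Type*} [CommRing R] {n : ℕ}

lemma prod_linForm_eq_prod_sum (t : R) {s : Fin n → ℕ} (hs : Antitone s) :
    ∏ k ∈ univ.image s, linForm t (univ.image s) k ^ (#{v | s v = k} - 1) *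
        (linForm t (univ.image s) k - MvPolynomial.C t * MvPolynomial.X k) =
      ∏ v, ∑ a ∈ univ.image s, MvPolynomial.C
        ((if ∃ u < v, s u ≤ a then t else 0) + if a ≤ s v then 1 else 0) * MvPolynomial.X a := by
  rw [← prod_ite_exists_lt_fiber s (linForm t (univ.image s))]
  refine prod_congr rfl fun v _ => ?_
  split_ifs with hv
  · obtain ⟨u, huv, hu⟩ := hv
    refine sum_congr rfl fun a _ => ?_
    have : (∃ u < v, s u ≤ a) ↔ s v ≤ a :=
      ⟨fun ⟨u, h, ha⟩ => (hs h.le).trans ha, fun h => ⟨u, huv, hu.trans_le h⟩⟩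
    simp only [this, add_comm]
  · rw [linForm_sub_C_mul_X t t (mem_image_of_mem s (mem_univ v))]
    refine sum_congr rfl fun a ha => ?_
    obtain ⟨b, -, rfl⟩ := mem_image.1 ha
    have : (∃ u < v, s u ≤ s b) ↔ s v < s b :=
      ⟨fun ⟨u, h, hb⟩ => ((hs h.le).lt_of_ne fun e => hv ⟨u, h, e.symm⟩).trans_le hb,
        fun h => ⟨b, hs.reflect_lt h, le_rfl⟩⟩
    simp only [this]
    rcases lt_trichotomy (s b) (s v) with h | h | h
    · simp [h.not_gt, h.le, h.not_ge, h.ne]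
    · simp [h]
    · simp [h, h.not_ge, h.le, h.ne']

/-- The words `w` with the content of `s`, with a set `X` of marked positions: `w v ≤ s v` at the
unmarked ones, `w v ≥ s u` for some `u < v` at the marked ones. -/
noncomputable def markedWords (s : Fin n → ℕ) : Finset ((Fin n → ℕ) × Finset (Fin n)) :=
  {p ∈ Fintype.piFinset (fun _ => univ.image s) ×ˢ univ | content p.1 = content s ∧
    (∀ v ∈ p.2, ∃ u < v, s u ≤ p.1 v) ∧ ∀ v ∉ p.2, p.1 v ≤ s v}

lemma mem_markedWords {s w : Fin n → ℕ} {X : Finset (Fin n)} : (w, X) ∈ markedWords s ↔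
    content w = content s ∧ (∀ v ∈ X, ∃ u < v, s u ≤ w v) ∧ ∀ v ∉ X, w v ≤ s v := by
  simp only [markedWords, mem_filter, mem_product, mem_univ, and_true, Fintype.mem_piFinset,
    and_iff_right_iff_imp]
  rintro ⟨h, -⟩ v
  rw [← support_content, ← h, support_content]
  exact mem_image_of_mem w (mem_univ v)

lemma coeff_macSeries_mul_elemSeries_content (t : R) {s : Fin n → ℕ} (hs : Antitone s) :
    MvPowerSeries.coeff (content s) (macSeries t * elemSeries t) =
      ∑ p ∈ markedWords s, t ^ #p.2 := by
  rw [coeff_macSeries_mul_elemSeries, support_content]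
  simp only [content_apply]
  rw [prod_linForm_eq_prod_sum t hs, prod_univ_sum, MvPolynomial.coeff_sum, markedWords,
    sum_filter, sum_product]
  refine sum_congr rfl fun w _ => ?_
  rw [prod_C_mul_X_comp, MvPolynomial.coeff_monomial]
  by_cases hw : content w = content s
  · rw [if_pos hw, Fintype.prod_add]
    refine sum_congr rfl fun X _ => ?_
    rw [prod_ite_zero, prod_ite_zero, ite_zero_mul_ite_zero, prod_const, prod_const_one, mul_one]
    simp only [hw, mem_compl, true_and]
  · simp only [hw, false_and, if_false, sum_const_zero]

end Words

section Bijection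

variable {n : ℕ}

lemma content_comp_perm (w : Fin n → ℕ) (σ : Equiv.Perm (Fin n)) : content (w ∘ σ) = content w :=
  Equiv.sum_comp σ fun v => Finsupp.single (w v) 1

lemma toMultiset_content (w : Fin n → ℕ) : (content w).toMultiset = List.ofFn w := by
  rw [content, Finsupp.toMultiset_sum, ← Fin.univ_val_map]
  simp only [Finsupp.toMultiset_single, one_smul]
  rw [← Multiset.sum_map_singleton (univ.val.map w), Multiset.map_map]
  rfl

lemma eq_of_content_eq {w s : Fin n → ℕ} (hw : Antitone w) (hs : Antitone s)
    (h : content w = content s) : w = s := by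
  have hperm : (List.ofFn w).Perm (List.ofFn s) := by
    rw [← Multiset.coe_eq_coe, ← toMultiset_content, h, toMultiset_content]
  exact List.ofFn_injective
    (hperm.eq_of_pairwise' hw.sortedGE_ofFn.pairwise hs.sortedGE_ofFn.pairwise)

lemma pval_succ (σ : Equiv.Perm (Fin n)) (i : Fin n) : pval σ (i + 1) = σ i + 1 := by
  rw [pval, dif_pos ⟨Nat.le_add_left _ _, i.isLt⟩]
  simp

lemma pexc_eq (σ : Equiv.Perm (Fin n)) : pexc σ = #{v | σ.symm v < v} := by
  rw [pexc]
  refine (card_nbij (fun v => (σ.symm v : ℕ) + 1) ?_ ?_ ?_).symm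
  · intro v hv
    simpa [pval_succ, Nat.succ_le_iff] using hv
  · intro u _ v _ h
    exact σ.symm.injective (Fin.ext (Nat.succ_injective h))
  · intro i hi
    simp only [coe_filter, Set.mem_ofPred_eq, mem_Icc] at hi
    obtain ⟨j, rfl⟩ : ∃ j : Fin n, i = j + 1 := ⟨⟨i - 1, by omega⟩, by simp; omega⟩
    refine ⟨σ j, ?_, by simp⟩
    simpa [pval_succ] using hi.2

/-- The value `σ(i)`, positioned in the linear order in which all excedance values precede all
other values. -/
def excKey (σ : Equiv.Perm (Fin n)) (i : ℕ) : Bool ×ₗ ℕ := toLex (decide (pval σ i ≤ i), pval σ i)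

/-- The permutations whose one-line notation increases, in the order of `excKey`, on each maximal
interval on which `s` is constant; here `s` is antitone. -/
def blockIncreasing (s : Fin n → ℕ) : Finset (Equiv.Perm (Fin n)) :=
  {σ | StrictMono fun i => toLex (OrderDual.toDual (s i), excKey σ (i + 1))}

/-- The sorting key of a position of a marked word: larger letters first, and among equal letters
the marked positions first. -/
def wordKey (p : (Fin n → ℕ) × Finset (Fin n)) (v : Fin n) : ℕᵒᵈ ×ₗ Bool ×ₗ ℕ :=
  toLex (OrderDual.toDual (p.1 v), toLex (decide (v ∉ p.2), (v + 1 : ℕ)))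

/-- The marked word obtained by writing the letter `s i` at position `σ i` for each `i`, and marking
it if `σ i` is an excedance value. -/
def toMarkedWord (s : Fin n → ℕ) (σ : Equiv.Perm (Fin n)) : (Fin n → ℕ) × Finset (Fin n) :=
  (s ∘ σ.symm, ({v | σ.symm v < v} : Finset (Fin n)))

lemma wordKey_injective (p : (Fin n → ℕ) × Finset (Fin n)) : Function.Injective (wordKey p) := by
  intro u v h
  simp only [wordKey, EmbeddingLike.apply_eq_iff_eq, Prod.mk.injEq, add_left_inj] at h
  exact Fin.ext h.2.2

lemma wordKey_toMarkedWord (s : Fin n → ℕ) (σ : Equiv.Perm (Fin n)) (i : Fin n) :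
    wordKey (toMarkedWord s σ) (σ i) = toLex (OrderDual.toDual (s i), excKey σ (i + 1)) := by
  simp [wordKey, toMarkedWord, excKey, pval_succ]

lemma mem_blockIncreasing {s : Fin n → ℕ} {σ : Equiv.Perm (Fin n)} :
    σ ∈ blockIncreasing s ↔ Monotone (wordKey (toMarkedWord s σ) ∘ σ) := by
  have hinj := (wordKey_injective (toMarkedWord s σ)).comp σ.injective
  rw [blockIncreasing, mem_filter_univ]
  simp only [← wordKey_toMarkedWord]
  exact ⟨StrictMono.monotone, fun h => h.strictMono_of_injective hinj⟩

lemma toMarkedWord_mem {s : Fin n → ℕ} (hs : Antitone s) (σ : Equiv.Perm (Fin n)) :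
    toMarkedWord s σ ∈ markedWords s := by
  refine mem_markedWords.2 ⟨content_comp_perm s σ.symm, fun v hv => ⟨σ.symm v, ?_, le_rfl⟩,
    fun v hv => hs ?_⟩
  · simpa using hv
  · simpa using hv

lemma toMarkedWord_injOn (s : Fin n → ℕ) :
    Set.InjOn (toMarkedWord s) (blockIncreasing s) := by
  intro σ hσ τ hτ h
  rw [mem_coe, mem_blockIncreasing] at hσ hτ
  rw [← h] at hτ
  exact DFunLike.coe_injective
    ((wordKey_injective _).comp_left (Tuple.unique_monotone hσ hτ))

lemma wordKey_lt_of_eq {w : Fin n → ℕ} {X : Finset (Fin n)} {u v : Fin n} (h : w u = w v) :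
    wordKey (w, X) u < wordKey (w, X) v ↔ (u ∈ X ∧ v ∉ X) ∨ ((u ∈ X ↔ v ∈ X) ∧ u < v) := by
  by_cases hu : u ∈ X <;> by_cases hv : v ∈ X <;> simp [wordKey, Prod.Lex.toLex_lt_toLex, h, hu, hv]

section Sorted

variable {s w : Fin n → ℕ} {X : Finset (Fin n)} {τ : Equiv.Perm (Fin n)}

lemma comp_eq_of_monotone_wordKey (hs : Antitone s) (hw : content w = content s)
    (hτ : Monotone (wordKey (w, X) ∘ τ)) : w ∘ τ = s := by
  refine eq_of_content_eq (fun i j hij => ?_) hs ((content_comp_perm w τ).trans hw)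
  exact OrderDual.toDual_le_toDual.1 (Prod.Lex.monotone_fst _ _ (hτ hij))

lemma lt_of_mem_marked (hs : Antitone s) (hw : w ∘ τ = s)
    (hX : ∀ v ∈ X, ∃ u < v, s u ≤ w v) (hτ : StrictMono (wordKey (w, X) ∘ τ)) {i : Fin n}
    (hi : τ i ∈ X) : i < τ i := by
  induction i using WellFoundedLT.induction with
  | ind i ih =>
    have hwτ (j) : w (τ j) = s j := congrFun hw j
    obtain ⟨u, huτ, hu⟩ := hX _ hi
    rcases le_or_gt i u with hiu | hui
    · exact hiu.trans_lt huτ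
    · let j : Fin n := ⟨i - 1, by omega⟩
      have hji : j < i := by simp only [j, Fin.lt_def] at *; omega
      have huj : u ≤ j := by simp only [j, Fin.lt_def, Fin.le_def] at *; omega
      have hsj : s j = s i := le_antisymm ((hs huj).trans (hu.trans_eq (hwτ i))) (hs hji.le)
      have hlt := (wordKey_lt_of_eq (by rw [hwτ, hwτ, hsj])).1 (hτ hji)
      have hj : τ j ∈ X ∧ τ j < τ i := by tauto
      have := ih j hji hj.1
      simp only [j, Fin.lt_def] at *
      omega

lemma le_of_notMem_marked (hs : Antitone s) (hw : w ∘ τ = s)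
    (hX : ∀ v ∉ X, w v ≤ s v) (hτ : StrictMono (wordKey (w, X) ∘ τ)) {i : Fin n}
    (hi : τ i ∉ X) : τ i ≤ i := by
  induction i using WellFoundedGT.induction with
  | ind i ih =>
    have hwτ (j) : w (τ j) = s j := congrFun hw j
    by_contra! hiτ
    let j : Fin n := ⟨i + 1, by omega⟩
    have hij : i < j := by simp [j, Fin.lt_def]
    have hjτ : j ≤ τ i := hiτ
    have hsj : s i = s j :=
      le_antisymm ((hwτ i).symm.trans_le ((hX _ hi).trans (hs hjτ))) (hs hij.le)
    have hlt := (wordKey_lt_of_eq (by rw [hwτ, hwτ, hsj])).1 (hτ hij)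
    have hj : τ j ∉ X ∧ τ i < τ j := by tauto
    exact (hj.2.trans_le (ih j hij hj.1)).not_ge hjτ

end Sorted

lemma toMarkedWord_surjOn {s : Fin n → ℕ} (hs : Antitone s) :
    Set.SurjOn (toMarkedWord s) (blockIncreasing s) (markedWords s) := by
  rintro ⟨w, X⟩ h
  obtain ⟨hw, hup, hdown⟩ := mem_markedWords.1 h
  let τ := Tuple.sort (wordKey (w, X))
  have hmono : Monotone (wordKey (w, X) ∘ τ) := Tuple.monotone_sort _
  have hstrict := hmono.strictMono_of_injective ((wordKey_injective _).comp τ.injective)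
  have hwτ : w ∘ τ = s := comp_eq_of_monotone_wordKey hs hw hmono
  have hmark (i) : i < τ i ↔ τ i ∈ X :=
    ⟨fun hi => by_contra fun hX => (le_of_notMem_marked hs hwτ hdown hstrict hX).not_gt hi,
      lt_of_mem_marked hs hwτ hup hstrict⟩
  have heq : toMarkedWord s τ = (w, X) := by
    refine Prod.ext ?_ ?_
    · rw [toMarkedWord, ← hwτ, Function.comp_assoc, Equiv.self_comp_symm, Function.comp_id]
    · ext v
      simpa [toMarkedWord] using hmark (τ.symm v)
  exact ⟨τ, mem_coe.2 (mem_blockIncreasing.2 (heq ▸ hmono)), heq⟩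

theorem coeff_content_eq_sum_blockIncreasing {R : Type*} [CommRing R] (t : R) {s : Fin n → ℕ}
    (hs : Antitone s) :
    MvPowerSeries.coeff (content s) (macSeries t * elemSeries t) =
      ∑ σ ∈ blockIncreasing s, t ^ pexc σ := by
  rw [coeff_macSeries_mul_elemSeries_content t hs]
  exact (sum_nbij (toMarkedWord s) (fun σ _ => toMarkedWord_mem hs σ) (toMarkedWord_injOn s)
    (toMarkedWord_surjOn hs) fun σ _ => by rw [pexc_eq, toMarkedWord]).symm

end Bijection

section ExcedanceOrder

variable {n : ℕ}

/-- The descent set of `σ` with respect to the order `excKey` on the values. -/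
def excDES (σ : Equiv.Perm (Fin n)) : Finset ℕ :=
  {i ∈ Icc 1 (n - 1) | excKey σ (i + 1) < excKey σ i}

lemma pval_le (σ : Equiv.Perm (Fin n)) (i : ℕ) : pval σ i ≤ n := by
  rw [pval]
  split_ifs with h
  · exact (σ _).isLt
  · exact Nat.zero_le n

lemma exists_fin_succ {i : ℕ} (hi : i ∈ Icc 1 (n - 1)) :
    ∃ a b : Fin n, (a : ℕ) + 1 = b ∧ i = b := by
  rw [mem_Icc] at hi
  exact ⟨⟨i - 1, by omega⟩, ⟨i, by omega⟩, by simp; omega, rfl⟩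

lemma excKey_succ_inj (σ : Equiv.Perm (Fin n)) {a b : Fin n} :
    excKey σ (a + 1) = excKey σ (b + 1) ↔ a = b := by
  refine ⟨fun h => ?_, fun h => h ▸ rfl⟩
  simp only [excKey, EmbeddingLike.apply_eq_iff_eq, Prod.mk.injEq, pval_succ, add_left_inj] at h
  exact σ.injective (Fin.ext h.2)

lemma blockIndex_eq_add_ite (S : Finset ℕ) (v : ℕ) :
    blockIndex S v = blockIndex S (v + 1) + if v + 1 ∈ S then 1 else 0 := by
  rw [blockIndex, blockIndex, card_filter, card_filter, ← sum_ite_eq' S (v + 1) fun _ => 1,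
    ← sum_add_distrib]
  exact sum_congr rfl fun j _ => by split_ifs <;> omega

lemma antitone_blockIndex (S : Finset ℕ) : Antitone (blockIndex S) :=
  antitone_nat_of_succ_le fun v => by rw [blockIndex_eq_add_ite S v]; exact Nat.le_add_right _ _

lemma mem_blockIncreasing_blockIndex {S : Finset ℕ} {σ : Equiv.Perm (Fin n)} :
    σ ∈ blockIncreasing (fun v => blockIndex S v) ↔ excDES σ ⊆ S := by
  rw [blockIncreasing, mem_filter_univ]
  constructor
  · intro h i hi
    obtain ⟨hi, hdes⟩ := mem_filter.1 hi
    obtain ⟨a, b, hab, rfl⟩ := exists_fin_succ hi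
    by_contra hS
    have hlt := h (show a < b by omega)
    rw [Prod.Lex.toLex_lt_toLex, blockIndex_eq_add_ite S a, hab, if_neg hS] at hlt
    simp only [add_zero, lt_self_iff_false, true_and, false_or] at hlt
    exact hlt.not_gt hdes
  · refine fun h => (strictMono_iff_forall_covBy _).2 fun a b hab => ?_
    have hb : (a : ℕ) + 1 = b := Nat.covBy_iff_add_one_eq.1 (Fin.covBy_iff.1 hab)
    rw [Prod.Lex.toLex_lt_toLex, blockIndex_eq_add_ite S a, hb]
    by_cases hS : (b : ℕ) ∈ S
    · exact Or.inl (OrderDual.toDual_lt_toDual.2 (by simp [hS]))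
    · rw [if_neg hS]
      refine Or.inr ⟨rfl, lt_of_le_of_ne (not_lt.1 fun hlt => hS (h ?_)) ?_⟩
      · exact mem_filter.2 ⟨mem_Icc.2 (by omega), hlt⟩
      · exact hb ▸ fun h => hab.lt.ne ((excKey_succ_inj σ).1 (by simpa only [hb] using h))

lemma pexc_eq_card_Icc (σ : Equiv.Perm (Fin n)) : pexc σ = #{i ∈ Icc 1 (n - 1) | i < pval σ i} := by
  rw [pexc]
  congr 1
  ext i
  have := pval_le σ i
  simp only [mem_filter, mem_Icc]
  omega

lemma sum_Icc_mul_sub_succ (E : ℕ → ℤ) (m : ℕ) :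
    ∑ i ∈ Icc 1 m, (i : ℤ) * (E i - E (i + 1)) = ∑ i ∈ Icc 1 m, E i - m * E (m + 1) := by
  induction m with
  | zero => simp
  | succ m ih =>
    rw [sum_Icc_succ_top (Nat.le_add_left 1 m), sum_Icc_succ_top (Nat.le_add_left 1 m), ih]
    push_cast
    ring

lemma pmaj_eq_sum_excDES_add_pexc (σ : Equiv.Perm (Fin n)) :
    pmaj σ = ∑ i ∈ excDES σ, i + pexc σ := by
  let E : ℕ → ℤ := fun i => if i < pval σ i then 1 else 0
  have habel : ∑ i ∈ Icc 1 (n - 1), (i : ℤ) * (E i - E (i + 1)) = ∑ i ∈ Icc 1 (n - 1), E i := by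
    have hlast : n - 1 = 0 ∨ E (n - 1 + 1) = 0 := by
      have := pval_le σ (n - 1 + 1)
      by_cases hn : n = 0
      · simp [hn]
      · exact Or.inr (if_neg (by omega))
    rw [sum_Icc_mul_sub_succ]
    rcases hlast with h | h <;> simp [h]
  have hdes : ∀ i ∈ Icc 1 (n - 1), (if pval σ (i + 1) < pval σ i then (1 : ℤ) else 0) =
      (if excKey σ (i + 1) < excKey σ i then 1 else 0) + (E i - E (i + 1)) := by
    intro i hi
    obtain ⟨a, b, hab, rfl⟩ := exists_fin_succ hi
    have hne : (σ a : ℕ) ≠ σ b := fun h => by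
      have := σ.injective (Fin.ext h)
      omega
    have hb : pval σ b = σ a + 1 := by rw [← hab, pval_succ]
    simp only [excKey, E, hb, pval_succ, Prod.Lex.toLex_lt_toLex, decide_eq_decide, Bool.lt_iff,
      decide_eq_true_iff, decide_eq_false_iff_not]
    split_ifs <;> omega
  zify
  rw [pmaj, pDES, excDES, pexc_eq_card_Icc, card_filter, sum_filter, sum_filter]
  push_cast
  rw [← habel, ← sum_add_distrib]
  refine sum_congr rfl fun i hi => ?_
  rw [← mul_boole _ (i : ℤ), ← mul_boole _ (i : ℤ), hdes i hi, mul_add]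

lemma blockExp_eq_content (n : ℕ) (S : Finset ℕ) :
    blockExp n S = content fun v : Fin n => blockIndex S v :=
  sum_range fun v => Finsupp.single (blockIndex S v) 1

theorem qPoch_mul_coeff_stablePS_macSeries_mul_elemSeries {K : Type*} [Field K] {q : K}
    (hq : ¬IsOfFinOrder q) (t : K) (n : ℕ) :
    qPoch q n * PowerSeries.coeff n (stablePS q (macSeries t * elemSeries t)) =
      ∑ σ : Equiv.Perm (Fin n), q ^ (pmaj σ - pexc σ) * t ^ pexc σ := by
  have hcoeff (S : Finset ℕ) : MvPowerSeries.coeff (blockExp n S) (macSeries t * elemSeries t) =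
      ∑ σ : Equiv.Perm (Fin n) with excDES σ ⊆ S, t ^ pexc σ := by
    rw [blockExp_eq_content, coeff_content_eq_sum_blockIncreasing t
      fun u v huv => antitone_blockIndex S huv]
    refine sum_congr (Finset.ext fun σ => ?_) fun _ _ => rfl
    rw [mem_blockIncreasing_blockIndex, mem_filter_univ]
  rw [qPoch_mul_coeff_stablePS hq]
  simp only [hcoeff, sum_filter, mul_sum]
  rw [sum_comm]
  refine sum_congr rfl fun σ _ => ?_
  have hsub : excDES σ ⊆ Icc 1 (n - 1) := filter_subset _ _
  rw [pmaj_eq_sum_excDES_add_pexc, Nat.add_sub_cancel,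
    ← sum_stableWeight_of_subset q hsub, sum_mul, sum_filter]
  simp only [mul_ite, mul_zero]

end ExcedanceOrder

section Inversions

variable {n : ℕ}

lemma sum_Icc_one_eq_sum_fin {M : Type*} [AddCommMonoid M] (n : ℕ) (f : ℕ → M) :
    ∑ i ∈ Icc 1 n, f i = ∑ i : Fin n, f (i + 1) := by
  rw [Fin.sum_univ_eq_sum_range fun i => f (i + 1), range_eq_Ico, sum_Ico_add' f 0 n 1]
  rfl

lemma pinv_eq (σ : Equiv.Perm (Fin n)) :
    pinv σ = ∑ i : Fin n, ∑ j : Fin n, if i < j ∧ σ j < σ i then 1 else 0 := by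
  simp only [pinv, card_filter, sum_product, sum_Icc_one_eq_sum_fin, pval_succ,
    add_lt_add_iff_right, Fin.lt_def]

lemma pDES_subset (σ : Equiv.Perm (Fin n)) : pDES σ ⊆ Icc 1 (n - 1) := filter_subset _ _

lemma succ_mem_pDES {σ : Equiv.Perm (Fin n)} {a b : Fin n} (hab : (a : ℕ) + 1 = b) :
    (b : ℕ) ∈ pDES σ ↔ σ b < σ a := by
  have ha := pval_succ σ a
  rw [hab] at ha
  rw [pDES, mem_filter, mem_Icc, pval_succ, ha, Fin.lt_def]
  omega

/-- The permutation whose last value is `v` and whose other values are in the same relative order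
as those of `π`. -/
def append (v : Fin (n + 1)) (π : Equiv.Perm (Fin n)) : Equiv.Perm (Fin (n + 1)) :=
  (finSuccEquivLast.trans (Equiv.optionCongr π)).trans (finSuccEquiv' v).symm

@[simp]
lemma append_last (v : Fin (n + 1)) (π : Equiv.Perm (Fin n)) : append v π (Fin.last n) = v := by
  simp [append]

@[simp]
lemma append_castSucc (v : Fin (n + 1)) (π : Equiv.Perm (Fin n)) (i : Fin n) :
    append v π i.castSucc = v.succAbove (π i) := by
  simp [append]

lemma append_bijective (n : ℕ) :
    Function.Bijective fun p : Fin (n + 1) × Equiv.Perm (Fin n) => append p.1 p.2 := by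
  rw [Fintype.bijective_iff_injective_and_card]
  refine ⟨?_, by simp [Fintype.card_perm, Nat.factorial_succ]⟩
  rintro ⟨v, π⟩ ⟨v', π'⟩ h
  obtain rfl : v = v' := by simpa using DFunLike.congr_fun h (Fin.last n)
  obtain rfl : π = π' := Equiv.ext fun i => by simpa using DFunLike.congr_fun h i.castSucc
  rfl

lemma sum_perm_succ {M : Type*} [AddCommMonoid M] (f : Equiv.Perm (Fin (n + 1)) → M) :
    ∑ σ, f σ = ∑ v, ∑ π : Equiv.Perm (Fin n), f (append v π) := by
  rw [← (append_bijective n).sum_comp f, Fintype.sum_prod_type]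

lemma lt_succAbove_iff_val_le (v : Fin (n + 1)) (u : Fin n) : v < v.succAbove u ↔ (v : ℕ) ≤ u :=
  Fin.lt_succAbove_iff_le_castSucc v u

lemma pinv_append (v : Fin (n + 1)) (π : Equiv.Perm (Fin n)) :
    pinv (append v π) = pinv π + (n - v) := by
  have hlast : ∑ i, (if v < v.succAbove (π i) then 1 else 0) = n - (v : ℕ) := by
    simp only [lt_succAbove_iff_val_le]
    rw [Equiv.sum_comp π fun u : Fin n => if (v : ℕ) ≤ u then 1 else 0,
      Fin.sum_univ_eq_sum_range (fun u => if (v : ℕ) ≤ u then 1 else 0), ← card_filter,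
      ← Nat.card_Ico]
    congr 1
    ext u
    simp [and_comm]
  simp only [pinv_eq, Fin.sum_univ_castSucc, append_last, append_castSucc,
    Fin.castSucc_lt_castSucc_iff, Fin.castSucc_lt_last, Fin.succAbove_lt_succAbove_iff, true_and,
    not_lt_of_ge (Fin.le_last _), lt_irrefl, false_and, if_false, sum_const_zero, add_zero,
    sum_add_distrib, hlast]

lemma pDES_append_inter_Icc (v : Fin (n + 1)) (π : Equiv.Perm (Fin n)) :
    pDES (append v π) ∩ Icc 1 (n - 1) = pDES π := by
  have mem_iff : ∀ i ∈ Icc 1 (n - 1), i ∈ pDES (append v π) ↔ i ∈ pDES π := by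
    intro i hi
    obtain ⟨a, b, hab, rfl⟩ := exists_fin_succ hi
    rw [succ_mem_pDES hab, ← Fin.val_castSucc b,
      succ_mem_pDES (a := a.castSucc) (b := b.castSucc) hab, append_castSucc, append_castSucc,
      Fin.succAbove_lt_succAbove_iff]
  ext i
  rw [mem_inter]
  exact ⟨fun h => (mem_iff i h.2).1 h.1,
    fun h => ⟨(mem_iff i (pDES_subset π h)).2 h, pDES_subset π h⟩⟩

lemma succ_mem_pDES_append {v : Fin (n + 2)} {π : Equiv.Perm (Fin (n + 1))} :
    n + 1 ∈ pDES (append v π) ↔ (v : ℕ) ≤ π (Fin.last n) := by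
  have h := succ_mem_pDES (σ := append v π) (a := (Fin.last n).castSucc) (b := Fin.last (n + 1)) rfl
  rwa [append_last, append_castSucc, lt_succAbove_iff_val_le] at h

lemma pDES_append_of_lt {v : Fin (n + 2)} {π : Equiv.Perm (Fin (n + 1))}
    (h : (π (Fin.last n) : ℕ) < v) : pDES (append v π) = pDES π := by
  rw [← pDES_append_inter_Icc v π, eq_comm, inter_eq_left]
  intro i hi
  have hi' := mem_Icc.1 (pDES_subset _ hi)
  have hne : i ≠ n + 1 := by
    rintro rfl
    exact h.not_ge (succ_mem_pDES_append.1 hi)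
  exact mem_Icc.2 (by omega)

variable {R : Type*} [CommRing R]

/-- For a function `f` of descent sets of permutations of `k` letters, the value of `f` at the
descent set of the first `k` letters of a word with descent set `S`, provided that the letters after
the `k`-th form an increasing word; otherwise `0`. -/
def prefixValue (f : Finset ℕ → R) (k : ℕ) (S : Finset ℕ) : R :=
  if S ⊆ Icc 1 k then f (S ∩ Icc 1 (k - 1)) else 0

lemma prefixValue_of_subset (f : Finset ℕ → R) {k : ℕ} {S : Finset ℕ} (hS : S ⊆ Icc 1 (k - 1)) :
    prefixValue f k S = f S := by
  rw [prefixValue, if_pos (hS.trans (Icc_subset_Icc_right (k.sub_le 1))), inter_eq_left.2 hS]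

variable (q : R) (f : Finset ℕ → R) (k j : ℕ)

lemma prefixValue_pDES_append (v : Fin (k + j + 2)) (π : Equiv.Perm (Fin (k + j + 1))) :
    prefixValue f k (pDES (append v π)) =
      if (π (Fin.last (k + j)) : ℕ) < v then prefixValue f k (pDES π) else 0 := by
  split_ifs with h
  · rw [pDES_append_of_lt h]
  · refine if_neg fun hsub => ?_
    have := mem_Icc.1 (hsub (succ_mem_pDES_append.2 (not_lt.1 h)))
    omega

lemma prefixValue_append_mul_pow_pinv (v : Fin (k + j + 2)) (π : Equiv.Perm (Fin (k + j + 1))) :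
    prefixValue f k (pDES (append v π)) * q ^ pinv (append v π) =
      if (π (Fin.last (k + j)) : ℕ) < v then
        q ^ (k + j + 1 - v) * (prefixValue f k (pDES π) * q ^ pinv π) else 0 := by
  rw [prefixValue_pDES_append, pinv_append, ite_mul, zero_mul]
  congr 1
  ring

lemma sum_range_pow_mul_qChoose {v m : ℕ} (hv : v ≤ m) :
    ∑ u ∈ range v, q ^ ((j + 1) * (m - 1 - u)) * qChoose q u j =
      q ^ ((j + 1) * (m - v)) * qChoose q v (j + 1) := by
  rw [← sum_range_qChoose, mul_sum]
  refine sum_congr rfl fun u hu => ?_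
  have hu := mem_range.1 hu
  rw [← mul_assoc, ← pow_add, ← mul_add, show m - 1 - u = m - v + (v - 1 - u) by omega]

lemma sum_prefixValue_append (v : Fin (k + j + 1)) :
    ∑ π : Equiv.Perm (Fin (k + j)), prefixValue f k (pDES (append v π)) * q ^ pinv (append v π) =
      q ^ ((j + 1) * (k + j - v)) * qChoose q v j *
        ∑ π : Equiv.Perm (Fin k), f (pDES π) * q ^ pinv π := by
  induction j with
  | zero =>
    rw [qChoose_zero_right, mul_one, mul_sum]
    refine sum_congr rfl fun π _ => ?_
    have hsub : pDES (append v π) ⊆ Icc 1 k := pDES_subset _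
    have hinter : pDES (append v π) ∩ Icc 1 (k - 1) = pDES π := pDES_append_inter_Icc v π
    rw [prefixValue, if_pos hsub, hinter, pinv_append]
    ring
  | succ j ih =>
    set F := ∑ π : Equiv.Perm (Fin k), f (pDES π) * q ^ pinv π
    have hv : (v : ℕ) ≤ k + j + 1 := Nat.lt_succ_iff.1 v.isLt
    have filter_lt : {u ∈ range (k + j + 1) | u < (v : ℕ)} = range (v : ℕ) := by
      ext u
      simp only [mem_filter, mem_range]
      omega
    calc ∑ π : Equiv.Perm (Fin (k + j + 1)),
          prefixValue f k (pDES (append v π)) * q ^ pinv (append v π)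
        = ∑ u : Fin (k + j + 1), if (u : ℕ) < v then
            q ^ (k + j + 1 - v) * (q ^ ((j + 1) * (k + j - u)) * qChoose q u j * F) else 0 := by
          simp only [sum_perm_succ, prefixValue_append_mul_pow_pinv, append_last, sum_ite_irrel,
            sum_const_zero, ← mul_sum, ih]
      _ = q ^ (k + j + 1 - v) *
            ((∑ u ∈ range v, q ^ ((j + 1) * (k + j + 1 - 1 - u)) * qChoose q u j) * F) := by
          rw [Fin.sum_univ_eq_sum_range fun u => if u < (v : ℕ) then
            q ^ (k + j + 1 - v) * (q ^ ((j + 1) * (k + j - u)) * qChoose q u j * F) else 0,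
            ← sum_filter, filter_lt, sum_mul, mul_sum, Nat.add_sub_cancel]
      _ = q ^ ((j + 1 + 1) * (k + j + 1 - v)) * qChoose q v (j + 1) * F := by
          rw [sum_range_pow_mul_qChoose q j hv]
          ring

lemma sum_prefixValue :
    ∑ π : Equiv.Perm (Fin (k + j)), prefixValue f k (pDES π) * q ^ pinv π =
      qChoose q (k + j) j * ∑ π : Equiv.Perm (Fin k), f (pDES π) * q ^ pinv π := by
  cases j with
  | zero =>
    rw [qChoose_zero_right, one_mul]
    exact sum_congr rfl fun π _ => by rw [prefixValue_of_subset f (k := k) (pDES_subset π)]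
  | succ j =>
    change ∑ π : Equiv.Perm (Fin (k + j + 1)), _ = _
    simp only [sum_perm_succ, sum_prefixValue_append, ← sum_mul]
    rw [Fin.sum_univ_eq_sum_range fun v => q ^ ((j + 1) * (k + j - v)) * qChoose q v j,
      ← sum_range_qChoose]
    rfl

lemma sum_pow_pinv_pDES_eq_empty (n : ℕ) :
    ∑ π : Equiv.Perm (Fin n) with pDES π = ∅, q ^ pinv π = 1 := by
  have h := sum_prefixValue q (fun _ => 1) 0 n
  simp only [prefixValue, Icc_eq_empty_of_lt zero_lt_one, subset_empty, ite_mul, one_mul, zero_mul,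
    ← sum_filter] at h
  rw [zero_add, qChoose_self, one_mul] at h
  rw [h]
  simp [pinv]

end Inversions

section GammaWeights

variable {R : Type*} [CommRing R] (t : R)

/-- The contribution of a permutation of `n` letters with descent set `S` to the `γ`-expansion,
apart from the power of `q`. -/
def gammaWeight (n : ℕ) (S : Finset ℕ) : R :=
  if S ⊆ Icc 1 (n - 2) ∧ NoTwoConsec S then t ^ #S * (1 + t) ^ (n - 1 - 2 * #S) else 0

lemma sum_range_pow_sub_mul_one_add_pow (L : ℕ) :
    ∑ i ∈ range L, (t ^ (L - 1 - i) - t) * (1 + t) ^ i = 1 - t ^ L := by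
  have h₁ := geom_sum₂_mul (1 + t) t L
  have h₂ := mul_geom_sum (1 + t) L
  simp only [sub_mul, sum_sub_distrib, ← mul_sum, mul_comm (t ^ _)]
  linear_combination h₁ - h₂

lemma noTwoConsec_empty : NoTwoConsec ∅ := fun _ hi => absurd hi (notMem_empty _)

lemma two_mul_card_le_of_noTwoConsec {S : Finset ℕ} {M : ℕ} (hS : S ⊆ Icc 1 M)
    (h : NoTwoConsec S) : 2 * #S ≤ M + 1 := by
  have hdisj : Disjoint S (S.map (addRightEmbedding 1)) := by
    simp only [disjoint_left, mem_map, addRightEmbedding_apply, not_exists, not_and]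
    rintro _ hx i hi rfl
    exact h i hi hx
  have hunion : S ∪ S.map (addRightEmbedding 1) ⊆ Icc 1 (M + 1) := by
    refine union_subset (hS.trans (Icc_subset_Icc_right M.le_succ)) ?_
    simp only [subset_iff, mem_map, mem_Icc, addRightEmbedding_apply] at hS ⊢
    rintro _ ⟨i, hi, rfl⟩
    have := hS hi
    omega
  have := card_le_card hunion
  rw [card_union_of_disjoint hdisj, card_map, Nat.card_Icc] at this
  omega

lemma insert_subset_Icc {S : Finset ℕ} {M : ℕ} (hM : 1 ≤ M) (hS : S ⊆ Icc 1 (M - 1)) :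
    insert M S ⊆ Icc 1 M :=
  insert_subset (mem_Icc.2 ⟨hM, le_rfl⟩) (hS.trans (Icc_subset_Icc_right (M.sub_le 1)))

lemma noTwoConsec_insert {S : Finset ℕ} {M : ℕ} (hS : S ⊆ Icc 1 (M - 1)) :
    NoTwoConsec (insert M S) ↔ S ⊆ Icc 1 (M - 2) ∧ NoTwoConsec S := by
  simp only [NoTwoConsec, subset_iff, mem_Icc, mem_insert, forall_eq_or_imp, not_or] at hS ⊢
  constructor
  · rintro ⟨-, h⟩
    refine ⟨fun i hi => ?_, fun i hi => (h i hi).2⟩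
    have := hS hi
    have := (h i hi).1
    omega
  · rintro ⟨hsub, h⟩
    refine ⟨⟨by omega, fun hM => ?_⟩, fun i hi => ⟨?_, h i hi⟩⟩
    · have := hS hM
      omega
    · have := hS hi
      have := hsub hi
      omega

lemma gammaWeight_empty (n : ℕ) : gammaWeight t n ∅ = (1 + t) ^ (n - 1) := by
  simp [gammaWeight, noTwoConsec_empty]

lemma gammaWeight_add_one_insert (M : ℕ) (S : Finset ℕ) :
    gammaWeight t (M + 1) (insert M S) = 0 := by
  refine if_neg fun h => ?_
  have := mem_Icc.1 (h.1 (mem_insert_self M S))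
  omega

lemma gammaWeight_add_two_insert {S : Finset ℕ} {M : ℕ} (hM : 1 ≤ M) (hS : S ⊆ Icc 1 (M - 1))
    (i : ℕ) : gammaWeight t (M + 2 + i) (insert M S) = t * (1 + t) ^ i * gammaWeight t M S := by
  have hsub := insert_subset_Icc hM hS
  have hcard : #(insert M S) = #S + 1 := card_insert_of_notMem fun h => by
    have := mem_Icc.1 (hS h)
    omega
  have hsub' : insert M S ⊆ Icc 1 (M + 2 + i - 2) := hsub.trans (Icc_subset_Icc_right (by omega))
  simp only [gammaWeight, ← noTwoConsec_insert hS, hsub', true_and]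
  split_ifs with h
  · have := two_mul_card_le_of_noTwoConsec hsub h
    rw [hcard, show M + 2 + i - 1 - 2 * (#S + 1) = i + (M - 1 - 2 * #S) by omega]
    ring
  · rw [mul_zero]

lemma prefixValue_empty (f : Finset ℕ → R) (k : ℕ) : prefixValue f k ∅ = f ∅ := by
  simp [prefixValue]

lemma prefixValue_insert_of_lt (f : Finset ℕ → R) {k M : ℕ} (hk : k < M) (S : Finset ℕ) :
    prefixValue f k (insert M S) = 0 :=
  if_neg fun h => hk.not_ge (mem_Icc.1 (h (mem_insert_self M S))).2

lemma prefixValue_insert_self (f : Finset ℕ → R) {M : ℕ} {S : Finset ℕ} (hM : 1 ≤ M)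
    (hS : S ⊆ Icc 1 (M - 1)) : prefixValue f M (insert M S) = f S := by
  have hsub := insert_subset_Icc hM hS
  have hM' : M ∉ Icc 1 (M - 1) := fun h => by
    have := mem_Icc.1 h
    omega
  rw [prefixValue, if_pos hsub, insert_inter_of_notMem hM', inter_eq_left.2 hS]

lemma sum_prefixValue_gammaWeight_empty (n : ℕ) :
    ∑ k ∈ range (n + 1), (t ^ (n - k) - t) * prefixValue (gammaWeight t k) k ∅ = 1 - t := by
  simp only [prefixValue_empty, gammaWeight_empty]
  have h := sum_range_pow_sub_mul_one_add_pow t n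
  rw [sum_range_succ']
  simp only [Nat.add_sub_cancel, Nat.sub_zero, Nat.zero_sub, pow_zero, ← Nat.sub_sub,
    Nat.sub_right_comm n _ 1, h]
  ring

lemma sum_prefixValue_gammaWeight_insert {S : Finset ℕ} {M n : ℕ} (hM : 1 ≤ M) (hMn : M < n)
    (hS : S ⊆ Icc 1 (M - 1)) :
    ∑ k ∈ range (n + 1), (t ^ (n - k) - t) * prefixValue (gammaWeight t k) k (insert M S) = 0 := by
  obtain ⟨d, rfl⟩ := Nat.exists_eq_add_of_le (Nat.succ_le_of_lt hMn)
  have hsub := insert_subset_Icc hM hS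
  have below : ∑ k ∈ range M,
      (t ^ (M + 1 + d - k) - t) * prefixValue (gammaWeight t k) k (insert M S) = 0 :=
    sum_eq_zero fun k hk => by rw [prefixValue_insert_of_lt _ (mem_range.1 hk), mul_zero]
  have next : prefixValue (gammaWeight t (M + 1)) (M + 1) (insert M S) = 0 := by
    rw [prefixValue_of_subset _ hsub, gammaWeight_add_one_insert]
  have above : ∑ i ∈ range d, (t ^ (M + 1 + d - (M + 2 + i)) - t) *
      prefixValue (gammaWeight t (M + 2 + i)) (M + 2 + i) (insert M S) =
        t * gammaWeight t M S * (1 - t ^ d) := by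
    rw [← sum_range_pow_sub_mul_one_add_pow, mul_sum]
    refine sum_congr rfl fun i _ => ?_
    rw [prefixValue_of_subset _ (hsub.trans (Icc_subset_Icc_right (by omega))),
      gammaWeight_add_two_insert t hM hS, show M + 1 + d - (M + 2 + i) = d - 1 - i by omega]
    ring
  rw [show M + 1 + d + 1 = M + 2 + d by omega, sum_range_add, above, sum_range_succ,
    sum_range_succ, below, next, prefixValue_insert_self _ hM hS,
    show M + 1 + d - M = d + 1 by omega]
  ring

lemma sum_prefixValue_gammaWeight {S : Finset ℕ} {n : ℕ} (hS : S ⊆ Icc 1 (n - 1)) :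
    ∑ k ∈ range (n + 1), (t ^ (n - k) - t) * prefixValue (gammaWeight t k) k S =
      if S = ∅ then 1 - t else 0 := by
  rcases S.eq_empty_or_nonempty with rfl | hne
  · rw [if_pos rfl, sum_prefixValue_gammaWeight_empty]
  · rw [if_neg hne.ne_empty, ← insert_erase (S.max'_mem hne)]
    have hmax := mem_Icc.1 (hS (S.max'_mem hne))
    refine sum_prefixValue_gammaWeight_insert t hmax.1 (by omega) fun i hi => ?_
    have := S.lt_max'_of_mem_erase_max' hne hi
    have := mem_Icc.1 (hS (mem_of_mem_erase hi))
    exact mem_Icc.2 (by omega)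

end GammaWeights

section Comparison

/-- The series `∑ₙ Bₙ zⁿ / (q;q)_n`, where `Bₙ` is the value at `(q, t)` of the `γ`-expansion. -/
noncomputable def gammaSeries {K : Type*} [Field K] (q t : K) : PowerSeries K :=
  PowerSeries.mk fun n =>
    (∑ π : Equiv.Perm (Fin n), gammaWeight t n (pDES π) * q ^ pinv π) / qPoch q n

lemma gammaSeries_mul {K : Type*} [Field K] {q : K} (hq : ¬IsOfFinOrder q) (t : K) :
    gammaSeries q t * (qExp q t - t • qExp q 1) = (1 - t) • qExp q 1 := by
  ext n
  have coeff_term : ∀ k ∈ range (n + 1),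
      (∑ π : Equiv.Perm (Fin k), gammaWeight t k (pDES π) * q ^ pinv π) / qPoch q k *
          (t ^ (n - k) / qPoch q (n - k) - t * (1 ^ (n - k) / qPoch q (n - k))) =
        (∑ π : Equiv.Perm (Fin n), (t ^ (n - k) - t) *
          prefixValue (gammaWeight t k) k (pDES π) * q ^ pinv π) / qPoch q n := by
    intro k hk
    obtain ⟨j, rfl⟩ := Nat.exists_eq_add_of_le (Nat.lt_succ_iff.1 (mem_range.1 hk))
    have := qPoch_ne_zero hq k
    have := qPoch_ne_zero hq j
    have := qPoch_ne_zero hq (k + j)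
    simp only [Nat.add_sub_cancel_left, mul_assoc, ← mul_sum]
    rw [sum_prefixValue]
    field_simp
    rw [← qChoose_mul_qPoch_mul_qPoch]
    ring
  rw [PowerSeries.coeff_mul, Nat.sum_antidiagonal_eq_sum_range_succ_mk]
  simp only [gammaSeries, qExp, map_sub, PowerSeries.coeff_mk, PowerSeries.coeff_smul, smul_eq_mul]
  rw [sum_congr rfl coeff_term, ← sum_div, sum_comm]
  simp only [← sum_mul, sum_prefixValue_gammaWeight t (pDES_subset _), ite_mul, zero_mul,
    ← sum_filter, ← mul_sum, sum_pow_pinv_pDES_eq_empty, one_pow, mul_one, mul_one_div]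

theorem sum_pow_pmaj_sub_pexc_mul_pow_pexc_of_field {K : Type*} [Field K] {q t : K}
    (hq : ¬IsOfFinOrder q) (ht : t ≠ 1) (n : ℕ) :
    ∑ σ : Equiv.Perm (Fin n), q ^ (pmaj σ - pexc σ) * t ^ pexc σ =
      ∑ σ : Equiv.Perm (Fin n), gammaWeight t n (pDES σ) * q ^ pinv σ := by
  have hne : qExp q t - t • qExp q 1 ≠ 0 := fun h => by
    have := congrArg (PowerSeries.coeff 0) h
    simp [qExp, sub_eq_zero, ht.symm] at this
  have hseries : stablePS q (macSeries t * elemSeries t) = gammaSeries q t :=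
    mul_right_cancel₀ hne <|
      (stablePS_macSeries_mul_elemSeries hq t).trans (gammaSeries_mul hq t).symm
  rw [← qPoch_mul_coeff_stablePS_macSeries_mul_elemSeries hq, hseries, gammaSeries,
    PowerSeries.coeff_mk, mul_div_cancel₀ _ (qPoch_ne_zero hq n)]

lemma map_gammaWeight {R S : Type*} [CommRing R] [CommRing S] (φ : R →+* S) (t : R) (n : ℕ)
    (D : Finset ℕ) : φ (gammaWeight t n D) = gammaWeight (φ t) n D := by
  simp [gammaWeight, apply_ite φ]

theorem sum_pow_pmaj_sub_pexc_mul_pow_pexc {R : Type*} [CommRing R] [IsDomain R] {q t : R}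
    (hq : ¬IsOfFinOrder q) (ht : t ≠ 1) (n : ℕ) :
    ∑ σ : Equiv.Perm (Fin n), q ^ (pmaj σ - pexc σ) * t ^ pexc σ =
      ∑ σ : Equiv.Perm (Fin n), gammaWeight t n (pDES σ) * q ^ pinv σ := by
  have hinj := IsFractionRing.injective R (FractionRing R)
  have hq' : ¬IsOfFinOrder (algebraMap R (FractionRing R) q) :=
    mt (hinj.isOfFinOrder_iff (f := (algebraMap R (FractionRing R)).toMonoidHom)).1 hq
  apply hinj
  simpa [map_gammaWeight] using sum_pow_pmaj_sub_pexc_mul_pow_pexc_of_field hq'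
    ((map_ne_one_iff _ hinj).2 ht) n

lemma sum_gammaWeight_mul_pow_pinv {R : Type*} [CommRing R] (q t : R) (n : ℕ) :
    ∑ σ : Equiv.Perm (Fin n), gammaWeight t n (pDES σ) * q ^ pinv σ =
      ∑ k ∈ range ((n - 1) / 2 + 1),
        (∑ σ : Equiv.Perm (Fin n) with
          pDES σ ⊆ Icc 1 (n - 2) ∧ NoTwoConsec (pDES σ) ∧ #(pDES σ) = k, q ^ pinv σ) *
          t ^ k * (1 + t) ^ (n - 1 - 2 * k) := by
  have hcard : ∀ σ ∈ ({σ | pDES σ ⊆ Icc 1 (n - 2) ∧ NoTwoConsec (pDES σ)} :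
      Finset (Equiv.Perm (Fin n))), #(pDES σ) ∈ range ((n - 1) / 2 + 1) := by
    intro σ hσ
    have hσ := (mem_filter_univ σ).1 hσ
    have := two_mul_card_le_of_noTwoConsec hσ.1 hσ.2
    rw [mem_range]
    omega
  simp only [gammaWeight, ite_mul, zero_mul]
  rw [← sum_filter, ← sum_fiberwise_of_maps_to hcard]
  refine sum_congr rfl fun k _ => ?_
  rw [filter_filter, mul_assoc, sum_mul]
  simp only [and_assoc]
  refine sum_congr rfl fun σ hσ => ?_
  rw [((mem_filter_univ σ).1 hσ).2.2, mul_comm]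

lemma not_isOfFinOrder_C_X : ¬IsOfFinOrder (C X : ℤ[X][X]) := fun h => by
  obtain ⟨n, hn, h⟩ := isOfFinOrder_iff_pow_eq_one.1 h
  rw [← C_pow] at h
  have h := C_injective (h.trans C_1.symm)
  simpa [hn.ne'] using congrArg natDegree h

end Comparison

end GammaExpansion

/-- γ-expansion of the `q`-Eulerian polynomial:
`A_n(q,t) = Σ_k ξ_{n,k}(q) t^k (1+t)^{n-1-2k}` with
`ξ_{n,k}(q) = Σ q^{inv(σ)}` over all `σ ∈ S_n` with `DES(σ) ⊆ [1,n-2]`,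
no two consecutive descents, and exactly `k` descents. -/
theorem Apoly_gamma_noLast (n : ℕ) (hn : 1 ≤ n) :
    Apoly n = ∑ k ∈ Finset.range ((n - 1) / 2 + 1),
      Polynomial.C (∑ σ ∈ Finset.univ.filter
            (fun σ : Equiv.Perm (Fin n) =>
              pDES σ ⊆ Finset.Icc 1 (n - 2) ∧ NoTwoConsec (pDES σ) ∧ (pDES σ).card = k),
          (Polynomial.X : Polynomial ℤ) ^ pinv σ) *
        Polynomial.X ^ k * (1 + Polynomial.X) ^ (n - 1 - 2 * k) := by
  have h := GammaExpansion.sum_pow_pmaj_sub_pexc_mul_pow_pexc GammaExpansion.not_isOfFinOrder_C_X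
    (X_ne_C 1) n
  rw [GammaExpansion.sum_gammaWeight_mul_pow_pinv] at h
  simpa only [Apoly, C_pow, map_sum] using h
end
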